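/- For every non-empty set F ⊆ ℝ², the Assouad dimension of the distance set satisfies dim_A D(F) ≥ min{dim_A F, 1}. -/

import Mathlib

open Metric MeasureTheory Filter Set
open scoped ENNReal NNReal Pointwise Topology

noncomputable section

/-- The Assouad dimension of a subset of a (pseudo)metric space: the infimum of all
`α ≥ 0` for which there is `C > 0` such that for every `x ∈ E` and all scales `0 < r < R`,
the set `E ∩ B(x,R)` can be covered by at most `C (R/r)^α` sets of diameter at most `r`. -/
def assouadDim {X : Type*} [PseudoMetricSpace X] (E : Set X) : ℝ :=
  sInf {α : ℝ | 0 ≤ α ∧ ∃ C : ℝ, 0 < C ∧ ∀ x ∈ E, ∀ r R : ℝ, 0 < r → r < R →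
    ∃ 𝒰 : Finset (Set X), (E ∩ closedBall x R ⊆ ⋃ U ∈ 𝒰, U) ∧
      (∀ U ∈ 𝒰, EMetric.diam U ≤ ENNReal.ofReal r) ∧
      ((𝒰.card : ℝ) ≤ C * (R / r) ^ α)}

/-- Euclidean space `ℝⁿ`. -/
abbrev Euc (n : ℕ) := EuclideanSpace ℝ (Fin n)

/-- The distance set `D(F) = {|x - y| : x, y ∈ F}`. -/
def distSet {n : ℕ} (F : Set (Euc n)) : Set ℝ :=
  {d : ℝ | ∃ x ∈ F, ∃ y ∈ F, d = dist x y}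

/-!
If the conclusion fails, choose `dim_A D(F) < α < β < dim_A F` with `α < 1`. Blowing up `F` at its
densest balls yields a nonzero Frostman measure `μ` of exponent `β` whose support has its distances
approximated by those of rescaled pieces of `F`, so the distance set of `supp μ` still has at most
`C (R / r) ^ α` points `r`-separated at scale `R`. Fix `y` in `supp μ`. On a small ball at `y`, the
distance to another point `x` of `supp μ` is a linear projection to first order, hence the direction
of `x - y` is one in which small pieces of `supp μ`, although of dimension `β`, have projections of
dimension at most `α`.

Such exceptional directions are countable in number. Average over the scales the entropy of the
projection at resolution `2⁻ᵐ` inside dyadic squares. This mean is convex in `m` by submodularity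
and grows by at most `α log 2` per step, so its second differences tend to zero. If two exceptional
slopes are too close to each other, a strip in one direction looks the same in the other inside a
dyadic square. Refining the squares gains more entropy than the projection accounts for, because
`β > α`, so some strips contain two heavy rows far apart. If both projections were nearly
independent of the row, comparing them would make one of them nearly invariant under a translation,
and an almost invariant set contains long arithmetic progressions, which a set of dimension
`α < 1` does not. So one of the second differences is bounded below.

Hence `supp μ` is covered by countably many rays from `y`. The part of `supp μ` on such a ray is
isometric to a subset of its distance set, so it is of dimension at most `α < β` and `μ`-null, which
is absurd.
-/

open scoped BigOperators Finset

section Pinsker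

lemma sq_sqrt_sub_sqrt_le_mul_log_div {m q : ℝ} (hm : 0 ≤ m) (hq : 0 ≤ q) (hmq : q = 0 → m = 0) :
    (√m - √q) ^ 2 ≤ m * Real.log (m / q) + q - m := by
  rcases hm.eq_or_lt with rfl | hm'
  · simp [Real.sq_sqrt hq]
  have hq' : 0 < q := hq.lt_of_ne' fun hq0 => hm'.ne' (hmq hq0)
  have hlog : Real.log (m / q) = -2 * Real.log (√q / √m) := by
    rw [← Real.sqrt_div hq, Real.log_sqrt (by positivity), Real.log_div hm'.ne' hq'.ne',
      Real.log_div hq'.ne' hm'.ne']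
    ring
  have hle : m * Real.log (√q / √m) ≤ √q * √m - m := by
    calc m * Real.log (√q / √m) ≤ m * (√q / √m - 1) := by
          gcongr
          exact Real.log_le_sub_one_of_pos (by positivity)
      _ = √q * √m - m := by rw [mul_sub, mul_one, mul_div_left_comm, Real.div_sqrt]
  rw [hlog]
  nlinarith [Real.sq_sqrt hm, Real.sq_sqrt hq]

variable {ι : Type*} {I : Finset ι} {m q : ι → ℝ}

lemma sum_sq_sqrt_sub_sqrt_le_sum_mul_log_div (hm : ∀ i ∈ I, 0 ≤ m i) (hq : ∀ i ∈ I, 0 ≤ q i)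
    (hmq : ∀ i ∈ I, q i = 0 → m i = 0) (hsum : ∑ i ∈ I, m i = ∑ i ∈ I, q i) :
    ∑ i ∈ I, (√(m i) - √(q i)) ^ 2 ≤ ∑ i ∈ I, m i * Real.log (m i / q i) := by
  calc ∑ i ∈ I, (√(m i) - √(q i)) ^ 2
      ≤ ∑ i ∈ I, (m i * Real.log (m i / q i) + q i - m i) := Finset.sum_le_sum fun i hi =>
        sq_sqrt_sub_sqrt_le_mul_log_div (hm i hi) (hq i hi) (hmq i hi)
    _ = ∑ i ∈ I, m i * Real.log (m i / q i) := by
      rw [Finset.sum_sub_distrib, Finset.sum_add_distrib, hsum, add_sub_cancel_right]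

lemma sq_sum_abs_sub_le_sum_mul_log_div (hm : ∀ i ∈ I, 0 ≤ m i) (hq : ∀ i ∈ I, 0 ≤ q i)
    (hmq : ∀ i ∈ I, q i = 0 → m i = 0) (hsum : ∑ i ∈ I, m i = ∑ i ∈ I, q i) :
    (∑ i ∈ I, |m i - q i|) ^ 2 ≤ 4 * (∑ i ∈ I, m i) * ∑ i ∈ I, m i * Real.log (m i / q i) := by
  have hfactor : ∀ i ∈ I, |m i - q i| = |√(m i) - √(q i)| * (√(m i) + √(q i)) := fun i hi => by
    rw [← abs_of_nonneg (by positivity : 0 ≤ √(m i) + √(q i)), ← abs_mul]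
    congr 1
    linarith [Real.mul_self_sqrt (hm i hi), Real.mul_self_sqrt (hq i hi)]
  have hplus : ∑ i ∈ I, (√(m i) + √(q i)) ^ 2 ≤ 4 * ∑ i ∈ I, m i := by
    calc ∑ i ∈ I, (√(m i) + √(q i)) ^ 2 ≤ ∑ i ∈ I, (2 * m i + 2 * q i) := by
          gcongr with i hi
          nlinarith [Real.sq_sqrt (hm i hi), Real.sq_sqrt (hq i hi), sq_nonneg (√(m i) - √(q i))]
      _ = 4 * ∑ i ∈ I, m i := by
          rw [Finset.sum_add_distrib, ← Finset.mul_sum, ← Finset.mul_sum, ← hsum]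
          ring
  calc (∑ i ∈ I, |m i - q i|) ^ 2
      ≤ (∑ i ∈ I, (√(m i) - √(q i)) ^ 2) * ∑ i ∈ I, (√(m i) + √(q i)) ^ 2 := by
        rw [Finset.sum_congr rfl hfactor]
        simpa only [sq_abs] using Finset.sum_mul_sq_le_sq_mul_sq I
          (fun i => |√(m i) - √(q i)|) fun i => √(m i) + √(q i)
    _ ≤ (∑ i ∈ I, m i * Real.log (m i / q i)) * (4 * ∑ i ∈ I, m i) := by
        have hmain := sum_sq_sqrt_sub_sqrt_le_sum_mul_log_div hm hq hmq hsum
        have hnonneg : 0 ≤ ∑ i ∈ I, (√(m i) - √(q i)) ^ 2 := by positivity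
        exact mul_le_mul hmain hplus (by positivity) (hnonneg.trans hmain)
    _ = 4 * (∑ i ∈ I, m i) * ∑ i ∈ I, m i * Real.log (m i / q i) := mul_comm _ _

end Pinsker

section MutualInformation

variable {Ω α β : Type*} [DecidableEq α] [DecidableEq β] (S : Finset Ω) (X : Ω → α) (Y : Ω → β)

/-- The unnormalised joint law of `X` and `Y` for the uniform probability on `S`. -/
def jointCount (p : α × β) : ℝ := #{ω ∈ S | X ω = p.1 ∧ Y ω = p.2}

/-- The product of the laws of `X` and `Y` on `S`, with the total mass `#S` of `jointCount`. -/
def productCount (p : α × β) : ℝ := #{ω ∈ S | X ω = p.1} * #{ω ∈ S | Y ω = p.2} / #S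

/-- The mutual information of `X` and `Y` for the uniform probability on `S`. -/
def mutualInfo : ℝ :=
  𝔼 ω ∈ S, Real.log (jointCount S X Y (X ω, Y ω) / productCount S X Y (X ω, Y ω))

lemma sum_image_jointCount_mul (φ : α → ℝ) (y : β) :
    ∑ x ∈ S.image X, jointCount S X Y (x, y) * φ x = ∑ ω ∈ S with Y ω = y, φ (X ω) := by
  rw [← Finset.sum_fiberwise_of_maps_to (t := S.image X) (g := X)
    fun ω hω => Finset.mem_image_of_mem _ (Finset.mem_of_mem_filter ω hω)]
  refine Finset.sum_congr rfl fun x _ => ?_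
  rw [Finset.sum_congr rfl fun ω hω => by rw [(Finset.mem_filter.1 hω).2], Finset.sum_const,
    nsmul_eq_mul, Finset.filter_filter]
  simp only [jointCount, and_comm]

lemma sum_image_productCount_mul (φ : α → ℝ) (y : β) :
    ∑ x ∈ S.image X, productCount S X Y (x, y) * φ x =
      #{ω ∈ S | Y ω = y} * 𝔼 ω ∈ S, φ (X ω) := by
  rw [Finset.expect_eq_sum_div_card, Finset.sum_comp φ X, Finset.sum_div, Finset.mul_sum]
  refine Finset.sum_congr rfl fun x _ => ?_
  rw [productCount, nsmul_eq_mul]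
  ring

lemma sum_jointCount : ∑ p ∈ S.image X ×ˢ S.image Y, jointCount S X Y p = #S := by
  rw [Finset.sum_product_right, Finset.card_eq_sum_card_image Y S, Nat.cast_sum]
  refine Finset.sum_congr rfl fun y _ => ?_
  simpa using sum_image_jointCount_mul S X Y (fun _ => 1) y

lemma sum_productCount : ∑ p ∈ S.image X ×ˢ S.image Y, productCount S X Y p = #S := by
  rcases S.eq_empty_or_nonempty with rfl | hS
  · simp
  rw [Finset.sum_product_right, Finset.card_eq_sum_card_image Y S, Nat.cast_sum]
  refine Finset.sum_congr rfl fun y _ => ?_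
  simpa [Finset.expect_const hS] using sum_image_productCount_mul S X Y (fun _ => 1) y

lemma card_mul_mutualInfo : #S * mutualInfo S X Y = ∑ p ∈ S.image X ×ˢ S.image Y,
    jointCount S X Y p * Real.log (jointCount S X Y p / productCount S X Y p) := by
  rw [mutualInfo, Finset.card_mul_expect, ← Finset.sum_fiberwise_of_maps_to
    (t := S.image X ×ˢ S.image Y) (g := fun ω => (X ω, Y ω))
    fun ω hω => Finset.mk_mem_product (Finset.mem_image_of_mem _ hω) (Finset.mem_image_of_mem _ hω)]
  refine Finset.sum_congr rfl fun p _ => ?_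
  rw [Finset.sum_congr rfl fun ω hω => by rw [(Finset.mem_filter.1 hω).2], Finset.sum_const,
    nsmul_eq_mul]
  simp only [jointCount, Prod.ext_iff]

lemma jointCount_nonneg (p : α × β) : 0 ≤ jointCount S X Y p := Nat.cast_nonneg _

lemma productCount_nonneg (p : α × β) : 0 ≤ productCount S X Y p := by
  unfold productCount
  positivity

lemma productCount_ne_zero {p : α × β} (hp : p ∈ S.image X ×ˢ S.image Y) :
    productCount S X Y p ≠ 0 := by
  obtain ⟨hX, hY⟩ := Finset.mem_product.1 hp
  obtain ⟨ω, hω, hωX⟩ := Finset.mem_image.1 hX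
  obtain ⟨ω', hω', hωY⟩ := Finset.mem_image.1 hY
  have hX : #{ω ∈ S | X ω = p.1} ≠ 0 := Finset.card_ne_zero_of_mem (by simp [hω, hωX] : ω ∈ _)
  have hY : #{ω ∈ S | Y ω = p.2} ≠ 0 := Finset.card_ne_zero_of_mem (by simp [hω', hωY] : ω' ∈ _)
  have hS : #S ≠ 0 := Finset.card_ne_zero_of_mem hω
  unfold productCount
  positivity

lemma mutualInfo_nonneg : 0 ≤ mutualInfo S X Y := by
  rcases S.eq_empty_or_nonempty with rfl | hS
  · simp [mutualInfo]
  refine nonneg_of_mul_nonneg_right ?_ (Nat.cast_pos.2 hS.card_pos : (0 : ℝ) < #S)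
  rw [card_mul_mutualInfo]
  exact (Finset.sum_nonneg fun p _ => sq_nonneg _).trans
    (sum_sq_sqrt_sub_sqrt_le_sum_mul_log_div (fun p _ => jointCount_nonneg S X Y p)
      (fun p _ => productCount_nonneg S X Y p)
      (fun p hp h => absurd h (productCount_ne_zero S X Y hp))
      ((sum_jointCount S X Y).trans (sum_productCount S X Y).symm))

lemma sum_abs_jointCount_sub_productCount_le :
    ∑ p ∈ S.image X ×ˢ S.image Y, |jointCount S X Y p - productCount S X Y p| ≤
      2 * #S * √(mutualInfo S X Y) := by
  refine le_of_sq_le_sq ?_ (by positivity)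
  have hpinsker := sq_sum_abs_sub_le_sum_mul_log_div (fun p _ => jointCount_nonneg S X Y p)
    (fun p _ => productCount_nonneg S X Y p)
    (fun p hp h => absurd h (productCount_ne_zero S X Y hp))
    ((sum_jointCount S X Y).trans (sum_productCount S X Y).symm)
  rw [sum_jointCount, ← card_mul_mutualInfo] at hpinsker
  rw [mul_pow, Real.sq_sqrt (mutualInfo_nonneg S X Y)]
  linarith

/-- `Y = y` carries at most `e` of information on `X`: conditioning on that event moves the mean of
any function of `X` with values in `[-1, 1]` by at most `e`, for the uniform probability on `S`. -/
def CondLawWithin (y : β) (e : ℝ) : Prop :=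
  ∀ φ : α → ℝ, (∀ x, |φ x| ≤ 1) → |𝔼 ω ∈ S with Y ω = y, φ (X ω) - 𝔼 ω ∈ S, φ (X ω)| ≤ e

variable {S} in
lemma card_mul_abs_expect_filter_sub_expect_le {y : β} (hy : y ∈ S.image Y) {φ : α → ℝ}
    (hφ : ∀ x, |φ x| ≤ 1) :
    #{ω ∈ S | Y ω = y} * |𝔼 ω ∈ S with Y ω = y, φ (X ω) - 𝔼 ω ∈ S, φ (X ω)| ≤
      2 * #S * √(mutualInfo S X Y) := by
  calc (#{ω ∈ S | Y ω = y} : ℝ) * |𝔼 ω ∈ S with Y ω = y, φ (X ω) - 𝔼 ω ∈ S, φ (X ω)|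
      = |∑ x ∈ S.image X, (jointCount S X Y (x, y) - productCount S X Y (x, y)) * φ x| := by
        simp only [sub_mul, Finset.sum_sub_distrib]
        rw [sum_image_jointCount_mul, sum_image_productCount_mul, ← Finset.card_mul_expect,
          ← mul_sub, abs_mul, Nat.abs_cast]
    _ ≤ ∑ x ∈ S.image X, |jointCount S X Y (x, y) - productCount S X Y (x, y)| :=
        (Finset.abs_sum_le_sum_abs _ _).trans <| Finset.sum_le_sum fun x _ => by
          rw [abs_mul]
          exact mul_le_of_le_one_right (abs_nonneg _) (hφ x)
    _ ≤ ∑ p ∈ S.image X ×ˢ S.image Y, |jointCount S X Y p - productCount S X Y p| := by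
        rw [Finset.sum_product]
        exact Finset.sum_le_sum fun x _ => Finset.single_le_sum
          (f := fun y => |jointCount S X Y (x, y) - productCount S X Y (x, y)|)
          (fun _ _ => abs_nonneg _) hy
    _ ≤ 2 * #S * √(mutualInfo S X Y) := sum_abs_jointCount_sub_productCount_le S X Y

variable {S X Y}

lemma condLawWithin_of_mutualInfo_le {y : β} {τ θ : ℝ} (hτ : 0 < τ)
    (hy : τ * #S ≤ #{ω ∈ S | Y ω = y}) (hθ : mutualInfo S X Y ≤ θ) :
    CondLawWithin S X Y y (2 * √θ / τ) := by
  intro φ hφ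
  rcases S.eq_empty_or_nonempty with rfl | hS
  · simpa using by positivity
  have hS' : (0 : ℝ) < #S := Nat.cast_pos.2 hS.card_pos
  have hpos : (0 : ℝ) < #{ω ∈ S | Y ω = y} := (by positivity : 0 < τ * #S).trans_le hy
  have hyS : y ∈ S.image Y := by
    obtain ⟨ω, hω⟩ := Finset.card_pos.1 (Nat.cast_pos.1 hpos)
    exact Finset.mem_image.2 ⟨ω, Finset.mem_filter.1 hω⟩
  rw [le_div_iff₀ hτ, ← mul_le_mul_iff_right₀ hS']
  calc #S * (|𝔼 ω ∈ S with Y ω = y, φ (X ω) - 𝔼 ω ∈ S, φ (X ω)| * τ)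
      = τ * #S * |𝔼 ω ∈ S with Y ω = y, φ (X ω) - 𝔼 ω ∈ S, φ (X ω)| := by ring
    _ ≤ #{ω ∈ S | Y ω = y} * |𝔼 ω ∈ S with Y ω = y, φ (X ω) - 𝔼 ω ∈ S, φ (X ω)| := by gcongr
    _ ≤ 2 * #S * √(mutualInfo S X Y) := card_mul_abs_expect_filter_sub_expect_le X Y hyS hφ
    _ ≤ 2 * #S * √θ := by gcongr
    _ = #S * (2 * √θ) := by ring

end MutualInformation

section Partition

variable {Ω : Type*} [Fintype Ω]

open scoped Classical in
/-- The class of `ω` in a partition of a finite space, encoded by its equivalence relation. -/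
def cell (s : Setoid Ω) (ω : Ω) : Finset Ω := {x | s x ω}

/-- The Shannon entropy of a partition for the uniform probability. -/
def entropy (s : Setoid Ω) : ℝ := Real.log (Fintype.card Ω) - 𝔼 ω, Real.log #(cell s ω)

/-- The conditional mutual information of the partitions `s` and `t` given the partition `c`. -/
def condInfo (s t c : Setoid Ω) : ℝ :=
  entropy (s ⊓ c) + entropy (t ⊓ c) - entropy (s ⊓ t ⊓ c) - entropy c

open scoped Classical in
/-- The number of `s`-classes meeting the `t`-class of `ω`. -/
def cellCount (s t : Setoid Ω) (ω : Ω) : ℕ := #((cell t ω).image (Quotient.mk s))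

variable {s t c : Setoid Ω} {ω ω' : Ω}

@[simp] lemma mem_cell : ω' ∈ cell s ω ↔ s ω' ω := by simp [cell]

lemma self_mem_cell (s : Setoid Ω) (ω : Ω) : ω ∈ cell s ω := mem_cell.2 (s.refl' ω)

lemma cell_nonempty (s : Setoid Ω) (ω : Ω) : (cell s ω).Nonempty := ⟨ω, self_mem_cell s ω⟩

lemma card_cell_pos (s : Setoid Ω) (ω : Ω) : (0 : ℝ) < #(cell s ω) :=
  Nat.cast_pos.2 (cell_nonempty s ω).card_pos

lemma cell_mono (h : s ≤ t) (ω : Ω) : cell s ω ⊆ cell t ω :=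
  fun _ hω' => mem_cell.2 (h (mem_cell.1 hω'))

lemma cell_eq_of_rel (h : s ω' ω) : cell s ω' = cell s ω := by
  ext
  simp only [mem_cell]
  exact ⟨fun h' => s.trans' h' h, fun h' => s.trans' h' (s.symm' h)⟩

lemma cell_ker_inf_eq_filter {α : Type*} [DecidableEq α] (X : Ω → α) (h : c ω' ω) :
    cell (Setoid.ker X ⊓ c) ω' = {ω'' ∈ cell c ω | X ω'' = X ω'} := by
  rw [← cell_eq_of_rel h]
  ext
  simp only [mem_cell, Finset.mem_filter]
  exact and_comm

lemma expect_expect_cell (c : Setoid Ω) (f : Ω → ℝ) :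
    𝔼 ω, 𝔼 ω' ∈ cell c ω, f ω' = 𝔼 ω, f ω := by
  classical
  have hinner : ∀ ω, 𝔼 ω' ∈ cell c ω, f ω' = ∑ ω', if c ω' ω then f ω' / #(cell c ω') else 0 := by
    intro ω
    rw [Finset.expect_eq_sum_div_card, Finset.sum_div, ← Finset.sum_filter]
    refine Finset.sum_congr (by ext; simp) fun ω' hω' => ?_
    rw [cell_eq_of_rel (mem_cell.1 hω')]
  simp only [hinner, Finset.expect_eq_sum_div_card]
  congr 1
  rw [Finset.sum_comm]
  refine Finset.sum_congr rfl fun ω' _ => ?_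
  have hsymm : ({ω | c ω' ω} : Finset Ω) = cell c ω' := by
    ext ω
    simp [c.comm' (x := ω)]
  rw [← Finset.sum_filter, hsymm, Finset.sum_const, nsmul_eq_mul,
    mul_div_cancel₀ _ (card_cell_pos c ω').ne']

lemma entropy_anti (h : s ≤ t) : entropy t ≤ entropy s := by
  unfold entropy
  gcongr with ω
  · exact card_cell_pos s ω
  · exact cell_mono h ω

lemma condInfo_ker {α β : Type*} [DecidableEq α] [DecidableEq β] (X : Ω → α) (Y : Ω → β)
    (c : Setoid Ω) :
    condInfo (Setoid.ker X) (Setoid.ker Y) c = 𝔼 ω, mutualInfo (cell c ω) X Y := by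
  have hinf : Setoid.ker X ⊓ Setoid.ker Y = Setoid.ker fun ω => (X ω, Y ω) := by
    ext a b
    exact Prod.mk_inj.symm
  have hcell : ∀ ω, mutualInfo (cell c ω) X Y = 𝔼 ω' ∈ cell c ω,
      (Real.log #(cell (Setoid.ker X ⊓ Setoid.ker Y ⊓ c) ω') + Real.log #(cell c ω') -
        Real.log #(cell (Setoid.ker X ⊓ c) ω') - Real.log #(cell (Setoid.ker Y ⊓ c) ω')) := by
    refine fun ω => Finset.expect_congr rfl fun ω' hω' => ?_
    rw [mem_cell] at hω'
    have hXY := card_cell_pos (Setoid.ker (fun ω => (X ω, Y ω)) ⊓ c) ω'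
    have hX := card_cell_pos (Setoid.ker X ⊓ c) ω'
    have hY := card_cell_pos (Setoid.ker Y ⊓ c) ω'
    have hc := card_cell_pos c ω
    rw [hinf, cell_eq_of_rel hω']
    simp only [cell_ker_inf_eq_filter _ hω', Prod.mk.injEq] at hXY hX hY ⊢
    rw [jointCount, productCount, Real.log_div hXY.ne' (by positivity),
      Real.log_div (by positivity) hc.ne', Real.log_mul hX.ne' hY.ne']
    ring
  simp only [hcell, expect_expect_cell, Finset.expect_sub_distrib, Finset.expect_add_distrib,
    condInfo, entropy]
  ring

lemma condInfo_nonneg (s t c : Setoid Ω) : 0 ≤ condInfo s t c := by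
  classical
  rw [← Setoid.ker_mk_eq s, ← Setoid.ker_mk_eq t, condInfo_ker]
  exact Finset.expect_nonneg fun ω _ => mutualInfo_nonneg _ _ _

lemma entropy_submodular (hs : s ≤ c) (ht : t ≤ c) :
    entropy (s ⊓ t) + entropy c ≤ entropy s + entropy t := by
  have h := condInfo_nonneg s t c
  rw [condInfo, inf_eq_left.2 hs, inf_eq_left.2 ht, inf_eq_left.2 (inf_le_left.trans hs)] at h
  linarith

/-- Data processing: coarsening `q` to `t`, then conditioning on a further partition `d`. -/
lemma condInfo_inf_le {s t q c d : Setoid Ω} (hqt : q ≤ t) :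
    condInfo s t (c ⊓ d) ≤ condInfo s q c + (entropy (d ⊓ (s ⊓ c)) - entropy (s ⊓ c)) := by
  have hd : entropy (t ⊓ (c ⊓ d)) + entropy c ≤ entropy (t ⊓ c) + entropy (c ⊓ d) := by
    have h := entropy_submodular (s := t ⊓ c) (t := c ⊓ d) (c := c) inf_le_right inf_le_left
    rwa [inf_assoc, inf_left_idem] at h
  have hq : entropy (s ⊓ q ⊓ c) + entropy (t ⊓ c) ≤ entropy (q ⊓ c) + entropy (s ⊓ t ⊓ c) := by
    have h := entropy_submodular (s := q ⊓ c) (t := s ⊓ t ⊓ c) (c := t ⊓ c)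
      (inf_le_inf_right _ hqt) (inf_le_inf_right _ inf_le_right)
    rwa [← inf_inf_distrib_right, inf_left_comm, inf_eq_left.2 hqt] at h
  have hs : entropy (s ⊓ t ⊓ c) ≤ entropy (s ⊓ t ⊓ (c ⊓ d)) :=
    entropy_anti (inf_le_inf_left _ inf_le_left)
  have hcomm : s ⊓ (c ⊓ d) = d ⊓ (s ⊓ c) := by rw [← inf_assoc, inf_comm]
  simp only [condInfo, hcomm]
  linarith

lemma cellCount_pos (s t : Setoid Ω) (ω : Ω) : 0 < cellCount s t ω := by
  classical
  exact ((cell_nonempty t ω).image _).card_pos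

lemma cellCount_le_card {α : Type*} (X : Ω → α) (A : Finset α) (hA : ∀ ω', t ω' ω → X ω' ∈ A)
    (hX : ∀ ω₁ ω₂, t ω₁ ω → t ω₂ ω → X ω₁ = X ω₂ → s ω₁ ω₂) : cellCount s t ω ≤ #A := by
  classical
  refine Finset.card_le_card_of_forall_subsingleton (fun p a => ∃ ω', t ω' ω ∧ ⟦ω'⟧ = p ∧ X ω' = a)
    (fun p hp => ?_) fun a _ => ?_
  · obtain ⟨ω', hω', rfl⟩ := Finset.mem_image.1 hp
    exact ⟨X ω', hA ω' (mem_cell.1 hω'), ω', mem_cell.1 hω', rfl, rfl⟩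
  · rintro p ⟨-, ω₁, h₁, rfl, rfl⟩ p' ⟨-, ω₂, h₂, rfl, hX₂⟩
    exact Quotient.sound (hX ω₁ ω₂ h₁ h₂ hX₂.symm)

lemma expect_log_le_log_expect {ι : Type*} {S : Finset ι} (hS : S.Nonempty) {f : ι → ℝ}
    (hf : ∀ i ∈ S, 0 < f i) : 𝔼 i ∈ S, Real.log (f i) ≤ Real.log (𝔼 i ∈ S, f i) := by
  have hS' : (#S : ℝ) ≠ 0 := Nat.cast_ne_zero.2 hS.card_pos.ne'
  have h := strictConcaveOn_log_Ioi.concaveOn.le_map_sum (t := S) (w := fun _ => (#S : ℝ)⁻¹)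
    (p := f) (fun _ _ => by positivity) (by simp [hS']) hf
  simpa only [Finset.expect_eq_sum_div_card, div_eq_inv_mul, Finset.mul_sum, smul_eq_mul] using h

lemma expect_cell_div_eq_cellCount (h : s ≤ t) (ω : Ω) :
    𝔼 ω' ∈ cell t ω, (#(cell t ω) / #(cell s ω') : ℝ) = cellCount s t ω := by
  classical
  have hfiber : ∀ ω' ∈ cell t ω, {ω'' ∈ cell t ω | Quotient.mk s ω'' = ⟦ω'⟧} = cell s ω' := by
    intro ω' hω'
    ext ω''
    rw [Finset.mem_filter, mem_cell, mem_cell, Quotient.eq]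
    exact and_iff_right_of_imp fun h' => t.trans' (h h') (mem_cell.1 hω')
  simp only [div_eq_mul_inv, ← Finset.mul_expect, Finset.card_mul_expect, cellCount]
  rw [← Finset.sum_fiberwise_of_maps_to (g := Quotient.mk s)
    fun ω' hω' => Finset.mem_image_of_mem _ hω', Finset.cast_card]
  refine Finset.sum_congr rfl fun q hq => ?_
  obtain ⟨ω', hω', rfl⟩ := Finset.mem_image.1 hq
  rw [hfiber ω' hω', Finset.sum_congr rfl fun ω'' hω'' => by rw [cell_eq_of_rel (mem_cell.1 hω'')],
    Finset.sum_const, nsmul_eq_mul, mul_inv_cancel₀ (card_cell_pos s ω').ne']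

lemma entropy_sub_le_expect_log_cellCount (h : s ≤ t) :
    entropy s - entropy t ≤ 𝔼 ω, Real.log (cellCount s t ω) := by
  have hdiff : entropy s - entropy t =
      𝔼 ω, (Real.log #(cell t ω) - Real.log #(cell s ω)) := by
    rw [entropy, entropy, Finset.expect_sub_distrib]
    ring
  rw [hdiff, ← expect_expect_cell t]
  refine Finset.expect_le_expect fun ω _ => ?_
  rw [← expect_cell_div_eq_cellCount h]
  refine le_trans (Finset.expect_le_expect fun ω' hω' => ?_) (expect_log_le_log_expect
    (cell_nonempty t ω) fun ω' _ => div_pos (card_cell_pos t ω) (card_cell_pos s ω'))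
  rw [cell_eq_of_rel (mem_cell.1 hω'),
    Real.log_div (card_cell_pos t ω).ne' (card_cell_pos s ω').ne']

lemma entropy_sub_le_log [Nonempty Ω] (h : s ≤ t) {B : ℝ} (hB : ∀ ω, (cellCount s t ω : ℝ) ≤ B) :
    entropy s - entropy t ≤ Real.log B :=
  (entropy_sub_le_expect_log_cellCount h).trans <|
    Finset.expect_le Finset.univ_nonempty fun ω _ =>
      Real.log_le_log (Nat.cast_pos.2 (cellCount_pos s t ω)) (hB ω)

end Partition

section Prob

variable {Ω : Type*} [Fintype Ω] {s t : Setoid Ω} {p : Ω → Prop}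

open scoped Classical in
/-- The uniform probability of a predicate on a finite space. -/
def prob (p : Ω → Prop) : ℝ := 𝔼 ω, if p ω then 1 else 0

lemma prob_or_le (p q : Ω → Prop) : prob (fun ω => p ω ∨ q ω) ≤ prob p + prob q := by
  classical
  rw [prob, prob, prob, ← Finset.expect_add_distrib]
  refine Finset.expect_le_expect fun ω _ => ?_
  by_cases hp : p ω <;> by_cases hq : q ω <;> simp [hp, hq]

lemma mul_prob_le_expect {f : Ω → ℝ} {θ : ℝ} (hf : ∀ ω, 0 ≤ f ω) (hp : ∀ ω, p ω → θ ≤ f ω) :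
    θ * prob p ≤ 𝔼 ω, f ω := by
  classical
  rw [prob, Finset.mul_expect]
  refine Finset.expect_le_expect fun ω _ => ?_
  split_ifs with h
  · simpa using hp ω h
  · simpa using hf ω

lemma sum_prob_eq_one [Nonempty Ω] {α : Type*} [Fintype α] (f : Ω → α) :
    ∑ r, prob (fun ω => f ω = r) = 1 := by
  simp only [prob, ← Finset.expect_sum_comm]
  refine (Finset.expect_congr rfl fun ω _ => ?_).trans
    (Finset.expect_const Finset.univ_nonempty (1 : ℝ))
  rw [Finset.sum_eq_single (f ω)] <;> simp +contextual [eq_comm]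

lemma prob_eq_inv_of_rotation [Nonempty Ω] {m : ℕ} [NeZero m] (f : Ω → ZMod m) (σ : Ω ≃ Ω)
    (hσ : ∀ ω, f (σ ω) = f ω + 1) (r : ZMod m) : prob (fun ω => f ω = r) = (m : ℝ)⁻¹ := by
  classical
  have hsucc : ∀ r, prob (fun ω => f ω = r + 1) = prob fun ω => f ω = r := fun r =>
    (Fintype.expect_equiv σ _ _ fun ω => by simp [hσ]).symm
  have hzero : ∀ n : ℕ, prob (fun ω => f ω = n) = prob fun ω => f ω = 0 := by
    intro n
    induction n with
    | zero => rw [Nat.cast_zero]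
    | succ n ih => rw [Nat.cast_succ, hsucc, ih]
  have hconst : ∀ r', prob (fun ω => f ω = r') = prob fun ω => f ω = r := fun r' => by
    rw [← ZMod.natCast_zmod_val r', ← ZMod.natCast_zmod_val r, hzero, hzero]
  have htotal := sum_prob_eq_one f
  rw [Finset.sum_congr rfl fun r' _ => hconst r', Finset.sum_const, Finset.card_univ, ZMod.card,
    nsmul_eq_mul] at htotal
  exact eq_inv_of_mul_eq_one_right htotal

lemma prob_card_cell_lt_le [Nonempty Ω] (h : s ≤ t) {τ B : ℝ} (hτ : 0 ≤ τ)
    (hB : ∀ ω, (cellCount s t ω : ℝ) ≤ B) :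
    prob (fun ω => (#(cell s ω) : ℝ) < τ * #(cell t ω)) ≤ τ * B := by
  classical
  calc prob (fun ω => (#(cell s ω) : ℝ) < τ * #(cell t ω))
      ≤ 𝔼 ω, τ * (#(cell t ω) / #(cell s ω)) := by
        rw [← one_mul (prob _)]
        refine mul_prob_le_expect (fun ω => by positivity) fun ω hω => ?_
        rw [← mul_div_assoc, one_le_div (card_cell_pos s ω)]
        exact hω.le
    _ = τ * 𝔼 ω, (cellCount s t ω : ℝ) := by
        rw [← Finset.mul_expect, ← expect_expect_cell t]
        congr 1
        refine Finset.expect_congr rfl fun ω _ => ?_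
        rw [← expect_cell_div_eq_cellCount h]
        exact Finset.expect_congr rfl fun ω' hω' => by rw [cell_eq_of_rel (mem_cell.1 hω')]
    _ ≤ τ * B := by
        gcongr
        exact Finset.expect_le Finset.univ_nonempty fun ω _ => hB ω

lemma entropy_sub_le_log_add_prob_mul_log [Nonempty Ω] (h : s ≤ t) {B M : ℝ} (hB₁ : 1 ≤ B)
    (hB : ∀ ω, ¬ p ω → (cellCount s t ω : ℝ) ≤ B) (hM : ∀ ω, (cellCount s t ω : ℝ) ≤ M) :
    entropy s - entropy t ≤ Real.log B + prob p * Real.log M := by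
  classical
  have hpos : ∀ ω, (0 : ℝ) < cellCount s t ω := fun ω => Nat.cast_pos.2 (cellCount_pos s t ω)
  refine (entropy_sub_le_expect_log_cellCount h).trans ?_
  rw [prob, Finset.expect_mul, ← Finset.expect_const (Finset.univ_nonempty (α := Ω)) (Real.log B),
    ← Finset.expect_add_distrib]
  refine Finset.expect_le_expect fun ω _ => ?_
  split_ifs with hp
  · linarith [Real.log_le_log (hpos ω) (hM ω), Real.log_nonneg hB₁]
  · linarith [Real.log_le_log (hpos ω) (hB ω hp)]

end Prob

section Translation

variable {Ω : Type*} {S : Finset Ω} {U U' : Ω → ℝ}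

lemma abs_expect_add_sub_expect_le {α : Type*} [DecidableEq α] {Y : Ω → α} {g : α → ℝ} {δ e : ℝ}
    {κ : ℝ≥0} {y : α} (hδ : 0 ≤ δ) (hUU' : ∀ ω ∈ S, |U' ω - U ω - g (Y ω)| ≤ δ)
    (hU : CondLawWithin S U Y y e) (hU' : CondLawWithin S U' Y y e) {Φ : ℝ → ℝ}
    (hΦ : ∀ v, |Φ v| ≤ 1) (hΦκ : LipschitzWith κ Φ) :
    |𝔼 ω ∈ S, Φ (U ω + g y) - 𝔼 ω ∈ S, Φ (U' ω)| ≤ 2 * e + κ * δ := by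
  have hshift := hU (fun v => Φ (v + g y)) fun v => hΦ _
  have hsame := hU' Φ hΦ
  have hfiber : |𝔼 ω ∈ S with Y ω = y, Φ (U ω + g y) - 𝔼 ω ∈ S with Y ω = y, Φ (U' ω)| ≤
      κ * δ := by
    rcases Finset.eq_empty_or_nonempty {ω ∈ S | Y ω = y} with h | h
    · simpa [h] using by positivity
    rw [← Finset.expect_sub_distrib]
    refine (Finset.abs_expect_le _ _).trans (Finset.expect_le h fun ω hω => ?_)
    obtain ⟨hωS, rfl⟩ := Finset.mem_filter.1 hω
    refine (hΦκ.dist_le_mul _ _).trans ?_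
    rw [Real.dist_eq, ← abs_neg]
    gcongr
    simpa [sub_sub] using hUU' ω hωS
  rw [abs_le] at hshift hsame hfiber ⊢
  constructor <;> linarith

/-- If `U` and `U'` are both almost independent of `Y` and `U' ≈ U + g Y`, then `U'` has almost the
law of `U + g y` for each typical value `y`, so `U` is almost invariant under translation by
`g y₁ - g y₀`. -/
lemma abs_expect_translate_sub_le {α : Type*} [DecidableEq α] {Y : Ω → α} {g : α → ℝ} {δ e : ℝ}
    {κ : ℝ≥0} {y₀ y₁ : α} (hδ : 0 ≤ δ) (hUU' : ∀ ω ∈ S, |U' ω - U ω - g (Y ω)| ≤ δ)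
    (hU₀ : CondLawWithin S U Y y₀ e) (hU₁ : CondLawWithin S U Y y₁ e)
    (hU'₀ : CondLawWithin S U' Y y₀ e) (hU'₁ : CondLawWithin S U' Y y₁ e) {Φ : ℝ → ℝ}
    (hΦ : ∀ v, |Φ v| ≤ 1) (hΦκ : LipschitzWith κ Φ) :
    |𝔼 ω ∈ S, Φ (U ω + (g y₁ - g y₀)) - 𝔼 ω ∈ S, Φ (U ω)| ≤ 4 * e + 2 * (κ * δ) := by
  have hΨκ : LipschitzWith κ fun v => Φ (v - g y₀) := by
    simpa [Function.comp_def] using hΦκ.comp (IsometryEquiv.subRight (g y₀)).isometry.lipschitz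
  have h₀ := abs_expect_add_sub_expect_le hδ hUU' hU₀ hU'₀ (fun v => hΦ (v - g y₀)) hΨκ
  have h₁ := abs_expect_add_sub_expect_le hδ hUU' hU₁ hU'₁ (fun v => hΦ (v - g y₀)) hΨκ
  simp only [add_sub_cancel_right, add_sub_assoc] at h₀ h₁
  rw [abs_le] at h₀ h₁ ⊢
  constructor <;> linarith

variable {h ε δ : ℝ}

lemma one_sub_mul_le_expect {κ : ℝ≥0} (hS : S.Nonempty)
    (hinv : ∀ Φ : ℝ → ℝ, (∀ v, |Φ v| ≤ 1) → LipschitzWith κ Φ →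
      |𝔼 ω ∈ S, Φ (U ω + h) - 𝔼 ω ∈ S, Φ (U ω)| ≤ ε)
    {Φ : ℝ → ℝ} (hΦ : ∀ v, |Φ v| ≤ 1) (hΦκ : LipschitzWith κ Φ) (hΦU : ∀ ω ∈ S, Φ (U ω) = 1)
    (i : ℕ) : 1 - i * ε ≤ 𝔼 ω ∈ S, Φ (U ω + i * h) := by
  induction i with
  | zero => simp [Finset.expect_congr rfl hΦU, Finset.expect_const hS]
  | succ i ih =>
    have hΦκ' : LipschitzWith κ fun v => Φ (v + i * h) := by
      simpa [Function.comp_def] using hΦκ.comp (isometry_add_right (i * h)).lipschitz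
    have hstep := (abs_le.1 (hinv _ (fun v => hΦ (v + i * h)) hΦκ')).1
    have hadd : ∀ ω, U ω + ((i + 1 : ℕ) : ℝ) * h = U ω + h + i * h := fun ω => by
      push_cast
      ring
    simp only [hadd]
    push_cast
    linarith

lemma exists_half_lt_card_progression (hS : S.Nonempty) (hδ : 0 < δ) {L : ℕ} (hL : 0 < L)
    (hε : 0 ≤ ε) (hLε : L * ε < 1 / 2)
    (hinv : ∀ Φ : ℝ → ℝ, (∀ v, |Φ v| ≤ 1) → LipschitzWith δ.toNNReal⁻¹ Φ →
      |𝔼 ω ∈ S, Φ (U ω + h) - 𝔼 ω ∈ S, Φ (U ω)| ≤ ε) :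
    ∃ ω ∈ S, ∃ I ⊆ Finset.range L, (L : ℝ) / 2 < #I ∧
      ∀ i ∈ I, ∃ ω' ∈ S, |U ω + i * h - U ω'| < δ := by
  classical
  let Φ : ℝ → ℝ := fun v => thickenedIndicator hδ (U '' S) v
  have hΦone : ∀ v, Φ v ≤ 1 := fun v => thickenedIndicator_le_one hδ _ v
  have hΦabs : ∀ v, |Φ v| ≤ 1 := fun v =>
    (abs_of_nonneg (NNReal.coe_nonneg _)).trans_le (hΦone v)
  have hΦlip : LipschitzWith δ.toNNReal⁻¹ Φ := by
    rw [← one_mul δ.toNNReal⁻¹]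
    exact isometry_subtype_coe.lipschitz.comp (lipschitzWith_thickenedIndicator hδ (U '' S))
  have hΦU : ∀ ω ∈ S, Φ (U ω) = 1 := fun ω hω => by
    change ((thickenedIndicator hδ (U '' S) (U ω) : ℝ≥0) : ℝ) = 1
    rw [thickenedIndicator_one hδ _ (mem_image_of_mem U hω), NNReal.coe_one]
  have hlow : (L : ℝ) / 2 < 𝔼 ω ∈ S, ∑ i ∈ Finset.range L, Φ (U ω + i * h) := by
    have hL' : (0 : ℝ) < L := Nat.cast_pos.2 hL
    calc (L : ℝ) / 2 < ∑ i ∈ Finset.range L, (1 - L * ε) := by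
          rw [Finset.sum_const, Finset.card_range, nsmul_eq_mul]
          nlinarith
      _ ≤ ∑ i ∈ Finset.range L, 𝔼 ω ∈ S, Φ (U ω + i * h) := by
          refine Finset.sum_le_sum fun i hi => le_trans ?_
            (one_sub_mul_le_expect hS hinv hΦabs hΦlip hΦU i)
          gcongr
          exact (Finset.mem_range.1 hi).le
      _ = 𝔼 ω ∈ S, ∑ i ∈ Finset.range L, Φ (U ω + i * h) := (Finset.expect_sum_comm _ _ _).symm
  obtain ⟨ω, hω, hlt⟩ := Finset.exists_lt_of_lt_expect hS hlow
  refine ⟨ω, hω, {i ∈ Finset.range L | U ω + i * h ∈ thickening δ (U '' S)},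
    Finset.filter_subset _ _, hlt.trans_le ?_, fun i hi => ?_⟩
  · rw [Finset.card_filter, Nat.cast_sum]
    refine Finset.sum_le_sum fun i _ => ?_
    split_ifs with hi
    · simpa using hΦone _
    · change ((thickenedIndicator hδ (U '' S) (U ω + i * h) : ℝ≥0) : ℝ) ≤ _
      rw [thickenedIndicator_zero hδ _ hi, NNReal.coe_zero, Nat.cast_zero]
  · obtain ⟨_, ⟨ω', hω', rfl⟩, hlt'⟩ := mem_thickening_iff.1 (Finset.mem_filter.1 hi).2
    exact ⟨ω', hω', hlt'⟩

end Translation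

section DyadicIndex

/-- The index of the half-open dyadic interval of length `2⁻ⁿ` that contains `v`. -/
def dyadicIndex (n : ℕ) (v : ℝ) : ℤ := ⌊2 ^ n * v⌋

variable {n m N : ℕ} {a b : ℝ}

lemma dyadicIndex_eq_ediv (n m : ℕ) (v : ℝ) :
    dyadicIndex n v = dyadicIndex (n + m) v / 2 ^ m := by
  have hcast : (2 : ℤ) ^ m = (2 ^ m : ℕ) := by norm_num
  rw [dyadicIndex, dyadicIndex, hcast, ← Int.floor_div_natCast, pow_add]
  congr 1
  push_cast
  field_simp

lemma dyadicIndex_eq_of_add (h : dyadicIndex (n + m) a = dyadicIndex (n + m) b) :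
    dyadicIndex n a = dyadicIndex n b := by
  rw [dyadicIndex_eq_ediv n m, h, ← dyadicIndex_eq_ediv]

lemma two_pow_mul_abs_sub_lt_one (h : dyadicIndex n a = dyadicIndex n b) :
    2 ^ n * |a - b| < 1 := by
  have hlt := Int.abs_sub_lt_one_of_floor_eq_floor h
  rwa [← mul_sub, abs_mul, abs_of_pos (by positivity : (0 : ℝ) < 2 ^ n)] at hlt

lemma dyadicIndex_mem_Icc (h : 2 ^ n * |a - b| ≤ N) :
    dyadicIndex n a ∈ Finset.Icc (dyadicIndex n b - N) (dyadicIndex n b + N) := by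
  rw [← abs_of_pos (by positivity : (0 : ℝ) < 2 ^ n), ← abs_mul, mul_sub, abs_le] at h
  rw [Finset.mem_Icc, dyadicIndex, dyadicIndex, Int.le_floor, ← Int.floor_add_natCast]
  refine ⟨?_, Int.floor_le_floor (by linarith)⟩
  push_cast
  linarith [Int.floor_le (2 ^ n * b)]

lemma one_le_two_pow_mul_abs_sub (h : 2 ≤ |dyadicIndex n a - dyadicIndex n b|) :
    1 ≤ 2 ^ n * |a - b| := by
  contrapose! h
  have hmem := Finset.mem_Icc.1 (dyadicIndex_mem_Icc (N := 1) (by simpa using h.le))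
  exact abs_lt.2 ⟨by grind, by grind⟩

lemma dyadicIndex_add_mem_Ico (h : dyadicIndex n a = dyadicIndex n b) :
    dyadicIndex (n + m) a ∈
      Finset.Ico (2 ^ m * dyadicIndex n b) (2 ^ m * dyadicIndex n b + 2 ^ m) := by
  have hpos : (0 : ℝ) < 2 ^ m := by positivity
  have hle := mul_le_mul_of_nonneg_left (Int.floor_le (2 ^ n * a)) hpos.le
  have hlt := mul_lt_mul_of_pos_left (Int.lt_floor_add_one (2 ^ n * a)) hpos
  rw [← dyadicIndex, h] at hle hlt
  rw [Finset.mem_Ico]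
  refine ⟨Int.le_floor.2 ?_, Int.floor_lt.2 ?_⟩ <;>
  · rw [pow_add]
    push_cast
    linarith

lemma card_Icc_sub_add (a : ℤ) (N : ℕ) : #(Finset.Icc (a - N) (a + N)) = 2 * N + 1 := by
  rw [Int.card_Icc]
  omega

lemma card_Ico_add_two_pow (a : ℤ) (m : ℕ) : #(Finset.Ico a (a + 2 ^ m)) = 2 ^ m := by
  rw [Int.card_Ico, add_sub_cancel_left, ← Int.toNat_natCast (2 ^ m)]
  norm_num

variable {Ω α : Type*} [Fintype Ω] {c : Setoid Ω}

lemma cellCount_ker_inf_le_card {ω : Ω} (X : Ω → α) (A : Finset α)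
    (hA : ∀ ω', c ω' ω → X ω' ∈ A) : cellCount (Setoid.ker X ⊓ c) c ω ≤ #A :=
  cellCount_le_card X A hA fun _ _ h₁ h₂ hX => ⟨hX, c.trans' h₁ (c.symm' h₂)⟩

lemma entropy_dyadicIndex_inf_sub_le [Nonempty Ω] (v : Ω → ℝ)
    (hv : ∀ ω ω', c ω' ω → 2 ^ n * |v ω' - v ω| ≤ N) :
    entropy (Setoid.ker (fun ω => dyadicIndex n (v ω)) ⊓ c) - entropy c ≤
      Real.log (2 * N + 1) := by
  refine entropy_sub_le_log inf_le_right fun ω => ?_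
  have h := cellCount_ker_inf_le_card (fun ω => dyadicIndex n (v ω)) _
    fun ω' hω' => dyadicIndex_mem_Icc (hv ω ω' hω')
  rw [card_Icc_sub_add] at h
  exact_mod_cast h

end DyadicIndex

section ProjBound

/-- The projection of the plane along lines of slope `-1 / t`, up to normalisation. -/
def slopeProj (t : ℝ) (z : ℝ × ℝ) : ℝ := z.1 + t * z.2

lemma abs_slopeProj_sub_le (t t' : ℝ) (z z' : ℝ × ℝ) : |slopeProj t' z - slopeProj t' z'| ≤
    |slopeProj t z - slopeProj t z'| + |t' - t| * |z.2 - z'.2| := by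
  rw [← abs_mul]
  refine le_of_eq_of_le (congrArg _ ?_) (abs_add_le _ _)
  simp only [slopeProj]
  ring

/-- The finite set `A` has the covering numbers of an `α`-dimensional set, with constant `C`, in
its projection `slopeProj t`, at scales above `ρ₀`; covering numbers are counted by separated
sets. -/
def ProjBound (A : Finset (ℝ × ℝ)) (t C α ρ₀ : ℝ) : Prop :=
  ∀ B ⊆ A, ∀ ρ R, ρ₀ ≤ ρ → ρ ≤ R →
    (B : Set (ℝ × ℝ)).Pairwise (fun z z' => |slopeProj t z - slopeProj t z'| ∈ Icc ρ R) →
    #B ≤ C * (R / ρ) ^ α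

lemma ProjBound.card_le {A : Finset (ℝ × ℝ)} {t C α ρ₀ : ℝ} (h : ProjBound A t C α ρ₀)
    (hρ₀ : 0 < ρ₀) {ι : Type*} (I : Finset ι) (z : ι → ℝ × ℝ) (hz : ∀ i ∈ I, z i ∈ A)
    {ρ R : ℝ} (hρ : ρ₀ ≤ ρ) (hR : ρ ≤ R)
    (hsep : (I : Set ι).Pairwise fun i i' => |slopeProj t (z i) - slopeProj t (z i')| ∈ Icc ρ R) :
    #I ≤ C * (R / ρ) ^ α := by
  classical
  have hinj : Set.InjOn z I := fun i hi i' hi' heq => by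
    by_contra hne
    have hle := (hsep hi hi' hne).1
    rw [heq, sub_self, abs_zero] at hle
    linarith
  rw [← Finset.card_image_of_injOn hinj]
  refine h _ (Finset.image_subset_iff.2 hz) ρ R hρ hR ?_
  rw [Finset.coe_image]
  exact hinj.pairwise_image.2 hsep

end ProjBound

section ShiftedSpace

/-- The points of `A` together with one of `2 ^ K` horizontal shifts. Averaging over the shift
makes the positions of the dyadic strips uniformly distributed. -/
abbrev ShiftedSpace (A : Finset (ℝ × ℝ)) (K : ℕ) := {z // z ∈ A} × Fin (2 ^ K)

variable {A : Finset (ℝ × ℝ)} {K : ℕ} {t : ℝ} {ω ω' : ShiftedSpace A K}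

/-- The shifted position of a point. -/
def pos (ω : ShiftedSpace A K) : ℝ × ℝ := (ω.1.1.1 + (ω.2 : ℕ) / 2 ^ K, ω.1.1.2)

/-- The partition into dyadic squares of side `2⁻ʲ`, refined by the value of the shift. -/
def dyadicSquares (A : Finset (ℝ × ℝ)) (K j : ℕ) : Setoid (ShiftedSpace A K) :=
  Setoid.ker fun ω => (ω.2, dyadicIndex j (pos ω).1, dyadicIndex j (pos ω).2)

/-- The partition into the strips over the dyadic intervals of length `2⁻ⁿ` for `slopeProj t`. -/
def dyadicStrips (A : Finset (ℝ × ℝ)) (K : ℕ) (t : ℝ) (n : ℕ) : Setoid (ShiftedSpace A K) :=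
  Setoid.ker fun ω => dyadicIndex n (slopeProj t (pos ω))

/-- The partition into dyadic horizontal rows of height `2⁻ⁿ`. -/
def dyadicRows (A : Finset (ℝ × ℝ)) (K n : ℕ) : Setoid (ShiftedSpace A K) :=
  Setoid.ker fun ω => dyadicIndex n (pos ω).2

lemma dyadicSquares_iff {j : ℕ} : dyadicSquares A K j ω ω' ↔ ω.2 = ω'.2 ∧
    dyadicIndex j (pos ω).1 = dyadicIndex j (pos ω').1 ∧
    dyadicIndex j (pos ω).2 = dyadicIndex j (pos ω').2 := by
  rw [dyadicSquares, Setoid.ker_def, Prod.mk.injEq, Prod.mk.injEq]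

lemma dyadicSquares_add_le (j m : ℕ) : dyadicSquares A K (j + m) ≤ dyadicSquares A K j := by
  intro ω ω' h
  obtain ⟨hshift, hx, hy⟩ := dyadicSquares_iff.1 h
  exact dyadicSquares_iff.2 ⟨hshift, dyadicIndex_eq_of_add hx, dyadicIndex_eq_of_add hy⟩

lemma dyadicStrips_add_le (t : ℝ) (n m : ℕ) : dyadicStrips A K t (n + m) ≤ dyadicStrips A K t n :=
  fun _ _ h => dyadicIndex_eq_of_add h

lemma dyadicSquares_le_dyadicRows (j : ℕ) : dyadicSquares A K j ≤ dyadicRows A K j :=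
  fun _ _ h => (dyadicSquares_iff.1 h).2.2

lemma slopeProj_pos_sub (t : ℝ) (h : ω.2 = ω'.2) :
    slopeProj t (pos ω) - slopeProj t (pos ω') = slopeProj t ω.1.1 - slopeProj t ω'.1.1 := by
  simp only [slopeProj, pos, h]
  ring

lemma two_pow_mul_abs_slopeProj_sub_lt {j : ℕ} (ht : |t| ≤ 1) (h : dyadicSquares A K j ω ω') :
    2 ^ j * |slopeProj t (pos ω) - slopeProj t (pos ω')| < 2 := by
  have hx := two_pow_mul_abs_sub_lt_one (dyadicSquares_iff.1 h).2.1
  have hy := two_pow_mul_abs_sub_lt_one (dyadicSquares_iff.1 h).2.2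
  calc 2 ^ j * |slopeProj t (pos ω) - slopeProj t (pos ω')|
      ≤ 2 ^ j * (|(pos ω).1 - (pos ω').1| + 1 * |(pos ω).2 - (pos ω').2|) := by
        gcongr
        refine (abs_slopeProj_sub_le 0 t _ _).trans ?_
        simp only [slopeProj, zero_mul, add_zero, sub_zero]
        gcongr
    _ < 2 := by linarith

/-- The conditional entropy of the projection `slopeProj t` at scale `2⁻⁽ʲ⁺ᵐ⁾`, given the dyadic
square of side `2⁻ʲ`. -/
def projEntropy (A : Finset (ℝ × ℝ)) (K : ℕ) (t : ℝ) (j m : ℕ) : ℝ :=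
  entropy (dyadicStrips A K t (j + m) ⊓ dyadicSquares A K j) - entropy (dyadicSquares A K j)

lemma projEntropy_nonneg (t : ℝ) (j m : ℕ) : 0 ≤ projEntropy A K t j m :=
  sub_nonneg.2 (entropy_anti inf_le_right)

lemma projEntropy_le [Nonempty (ShiftedSpace A K)] (ht : |t| ≤ 1) (j m : ℕ) :
    projEntropy A K t j m ≤ (m + 3) * Real.log 2 := by
  refine (entropy_dyadicIndex_inf_sub_le (N := 2 ^ (m + 1)) (fun ω => slopeProj t (pos ω))
    fun ω ω' h => ?_).trans ?_
  · have hlt := mul_lt_mul_of_pos_left (two_pow_mul_abs_slopeProj_sub_lt ht h)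
      (by positivity : (0 : ℝ) < 2 ^ m)
    push_cast
    rw [pow_add, pow_succ]
    linarith
  · calc Real.log (2 * (2 ^ (m + 1) : ℕ) + 1) ≤ Real.log (2 ^ (m + 3)) := by
          have : (1 : ℝ) ≤ 2 ^ m := one_le_pow₀ one_le_two
          refine Real.log_le_log (by positivity) ?_
          push_cast
          rw [pow_succ, pow_add]
          linarith
      _ = (m + 3) * Real.log 2 := by
          rw [Real.log_pow]
          push_cast
          ring

variable {C α : ℝ} {i j m : ℕ}

lemma ProjBound.card_le_of_dyadicIndex (hP : ProjBound A t C α (1 / 2 ^ i)) (ht : |t| ≤ 1)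
    (hjm : j + m ≤ i) (ω : ShiftedSpace A K) {W : Finset ℤ}
    (hW : W ⊆ (cell (dyadicSquares A K j) ω).image fun ω' =>
      dyadicIndex (j + m) (slopeProj t (pos ω')))
    (hsep : (W : Set ℤ).Pairwise fun w w' => 2 ≤ |w - w'|) :
    #W ≤ C * (2 ^ (m + 1)) ^ α := by
  have : Nonempty (ShiftedSpace A K) := ⟨ω⟩
  choose! f hfω hfw using fun (w : ℤ) (hw : w ∈ W) => Finset.mem_image.1 (hW hw)
  have hratio : (2 / 2 ^ j) / (1 / 2 ^ (j + m)) = (2 : ℝ) ^ (m + 1) := by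
    rw [pow_succ, pow_add]
    field_simp
  have hle : (1 : ℝ) / 2 ^ (j + m) ≤ 2 / 2 ^ j := by
    rw [← one_le_div (by positivity), hratio]
    exact one_le_pow₀ one_le_two
  have hscale : (1 : ℝ) / 2 ^ i ≤ 1 / 2 ^ (j + m) := by
    gcongr
    exact one_le_two
  rw [← hratio]
  refine hP.card_le (by positivity) W (fun w => (f w).1.1) (fun w _ => (f w).1.2)
    hscale hle fun w hw w' hw' hne => ?_
  have hsquare : dyadicSquares A K j (f w) (f w') :=
    (dyadicSquares A K j).trans' (mem_cell.1 (hfω w hw))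
      ((dyadicSquares A K j).symm' (mem_cell.1 (hfω w' hw')))
  beta_reduce
  rw [← slopeProj_pos_sub t (dyadicSquares_iff.1 hsquare).1]
  refine ⟨?_, ?_⟩
  · rw [div_le_iff₀' (by positivity)]
    refine one_le_two_pow_mul_abs_sub ?_
    rw [hfw w hw, hfw w' hw']
    exact hsep hw hw' hne
  · rw [le_div_iff₀' (by positivity)]
    exact (two_pow_mul_abs_slopeProj_sub_lt ht hsquare).le

/-- Separating the even from the odd indices makes distinct strips separated, at the cost of a
factor `2`. -/
lemma projEntropy_le_of_projBound [Nonempty (ShiftedSpace A K)] (hC : 0 < C)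
    (hP : ProjBound A t C α (1 / 2 ^ i)) (ht : |t| ≤ 1) (hjm : j + m ≤ i) :
    projEntropy A K t j m ≤ Real.log (2 * C) + α * ((m + 1) * Real.log 2) := by
  classical
  have hlog : Real.log (2 * C) + α * ((m + 1) * Real.log 2) =
      Real.log (2 * (C * (2 ^ (m + 1)) ^ α)) := by
    rw [← mul_assoc 2 C, Real.log_mul (x := 2 * C) (by positivity) (by positivity),
      Real.log_rpow (by positivity), Real.log_pow, Nat.cast_add_one]
  rw [hlog]
  refine entropy_sub_le_log inf_le_right fun ω => ?_
  set W := (cell (dyadicSquares A K j) ω).image fun ω' =>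
    dyadicIndex (j + m) (slopeProj t (pos ω'))
  have hcount : cellCount (dyadicStrips A K t (j + m) ⊓ dyadicSquares A K j)
      (dyadicSquares A K j) ω ≤ #W := cellCount_ker_inf_le_card _ W
    fun ω' hω' => Finset.mem_image_of_mem _ (mem_cell.2 hω')
  have heven := hP.card_le_of_dyadicIndex ht hjm ω (Finset.filter_subset Even W)
    fun w hw w' hw' hne => by grind
  have hodd := hP.card_le_of_dyadicIndex ht hjm ω (Finset.filter_subset (fun w => ¬ Even w) W)
    fun w hw w' hw' hne => by grind
  calc (cellCount (dyadicStrips A K t (j + m) ⊓ dyadicSquares A K j) (dyadicSquares A K j) ω : ℝ)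
      ≤ #W := Nat.cast_le.2 hcount
    _ = #{w ∈ W | Even w} + #{w ∈ W | ¬ Even w} := by
        exact_mod_cast (Finset.card_filter_add_card_filter_not _).symm
    _ ≤ 2 * (C * (2 ^ (m + 1)) ^ α) := by linarith

end ShiftedSpace

section CondInfo

variable {Ω : Type*} [Fintype Ω]

lemma condInfo_inf_eq {T T' Q Q' : Setoid Ω} (hT : T' ≤ T) (hQ : Q' ≤ Q) :
    condInfo T' Q' (Q ⊓ T) =
      entropy (T' ⊓ Q) + entropy (T ⊓ Q') - entropy (T' ⊓ Q') - entropy (T ⊓ Q) := by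
  have hT' : T' ⊓ (Q ⊓ T) = T' ⊓ Q := by
    rw [inf_left_comm, inf_eq_left.2 hT, inf_comm]
  have hQ' : Q' ⊓ (Q ⊓ T) = T ⊓ Q' := by
    rw [← inf_assoc, inf_eq_left.2 hQ, inf_comm]
  have hTQ' : T' ⊓ Q' ⊓ (Q ⊓ T) = T' ⊓ Q' := by
    rw [inf_assoc, hQ', ← inf_assoc, inf_eq_left.2 hT]
  rw [condInfo, hT', hQ', hTQ', inf_comm Q T]

end CondInfo

section Ambiguity

variable {A : Finset (ℝ × ℝ)} {K : ℕ}

lemma condInfo_strips_squares (t : ℝ) (j n l q : ℕ) :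
    condInfo (dyadicStrips A K t (j + (n + l + q))) (dyadicSquares A K (j + l))
      (dyadicSquares A K j ⊓ dyadicStrips A K t (j + (n + l))) =
    (projEntropy A K t j (n + l + q) - projEntropy A K t j (n + l)) -
      (projEntropy A K t (j + l) (n + q) - projEntropy A K t (j + l) n) := by
  have hstrips : dyadicStrips A K t (j + (n + l + q)) ≤ dyadicStrips A K t (j + (n + l)) := by
    rw [← add_assoc j]
    exact dyadicStrips_add_le t _ _
  rw [condInfo_inf_eq hstrips (dyadicSquares_add_le j l)]
  simp only [projEntropy]
  rw [show j + l + (n + q) = j + (n + l + q) by ring, show j + l + n = j + (n + l) by ring]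
  ring

lemma dyadicIndex_eq_of_residue {n a : ℕ} {v v' : ℝ}
    (hfirst : (dyadicIndex (n + a) v : ZMod (2 ^ a)) ≠ 0)
    (hlast : (dyadicIndex (n + a) v : ZMod (2 ^ a)) ≠ -1)
    (h : 2 ^ (n + a) * |v' - v| < 1) : dyadicIndex n v' = dyadicIndex n v := by
  have hcast : ∀ k : ℤ, ((2 ^ a * k : ℤ) : ZMod (2 ^ a)) = 0 := fun k =>
    (ZMod.intCast_zmod_eq_zero_iff_dvd _ _).2 ⟨k, by push_cast; ring⟩
  have hmem := Finset.mem_Icc.1 (dyadicIndex_mem_Icc (N := 1) (by exact_mod_cast h.le))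
  rw [dyadicIndex_eq_ediv n a v, dyadicIndex_eq_ediv n a v']
  generalize dyadicIndex (n + a) v = w at *
  generalize dyadicIndex (n + a) v' = w' at *
  have hpos : (0 : ℤ) < 2 ^ a := by positivity
  have hdiv := Int.mul_ediv_add_emod w (2 ^ a)
  have hnonneg := Int.emod_nonneg w hpos.ne'
  have hlt := Int.emod_lt_of_pos w hpos
  have hne_first : w % 2 ^ a ≠ 0 := fun h0 => hfirst <| by
    rw [← hdiv, h0, add_zero, hcast]
  have hne_last : w % 2 ^ a ≠ 2 ^ a - 1 := fun h1 => hlast <| by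
    rw [← hdiv, h1, Int.cast_add, hcast, Int.cast_sub, ← mul_one (2 ^ a : ℤ), hcast]
    simp
  refine ((Int.ediv_emod_unique (r := w' - 2 ^ a * (w / 2 ^ a)) hpos).2
    ⟨by ring, ?_, ?_⟩).1 <;> grind

/-- The measure-preserving map of the space that adds `c / 2 ^ K` to the shift, modulo `1`. -/
def addShift (A : Finset (ℝ × ℝ)) (K c : ℕ) : ShiftedSpace A K ≃ ShiftedSpace A K :=
  Equiv.prodCongr (Equiv.refl _) (Equiv.addRight (Fin.ofNat (2 ^ K) c))

lemma exists_pos_addShift (c : ℕ) (ω : ShiftedSpace A K) :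
    ∃ e : ℕ, pos (addShift A K c ω) = ((pos ω).1 + c / 2 ^ K - e, (pos ω).2) := by
  have hval : ((addShift A K c ω).2 : ℕ) = (ω.2 + c) % 2 ^ K := by
    simp [addShift, Fin.val_add]
  have hmod : ((addShift A K c ω).2 : ℝ) + 2 ^ K * ((ω.2 + c) / 2 ^ K : ℕ) = (ω.2 : ℕ) + c := by
    rw [hval]
    exact_mod_cast Nat.mod_add_div (ω.2 + c) (2 ^ K)
  refine ⟨(ω.2 + c) / 2 ^ K, Prod.ext ?_ rfl⟩
  change ω.1.1.1 + ((addShift A K c ω).2 : ℝ) / 2 ^ K = _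
  rw [eq_sub_of_add_eq hmod, pos]
  field_simp
  ring

lemma prob_dyadicIndex_residue [Nonempty (ShiftedSpace A K)] (s : ℝ) {n a : ℕ} (h : n + a ≤ K)
    (r : ZMod (2 ^ a)) :
    prob (fun ω : ShiftedSpace A K =>
      (dyadicIndex (n + a) (slopeProj s (pos ω)) : ZMod (2 ^ a)) = r) = 1 / 2 ^ a := by
  have : NeZero (2 ^ a) := ⟨by positivity⟩
  have hzero : ((2 : ZMod (2 ^ a)) ^ a) = 0 := by exact_mod_cast ZMod.natCast_self (2 ^ a)
  rw [prob_eq_inv_of_rotation _ (addShift A K (2 ^ (K - (n + a)))) fun ω => ?_]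
  · push_cast
    rw [one_div]
  obtain ⟨e, he⟩ := exists_pos_addShift (2 ^ (K - (n + a))) ω
  have hstep : (2 : ℝ) ^ (n + a) * slopeProj s (pos (addShift A K (2 ^ (K - (n + a))) ω)) =
      2 ^ (n + a) * slopeProj s (pos ω) + ((1 - 2 ^ (n + a) * e : ℤ) : ℝ) := by
    have hpow : (2 : ℝ) ^ (n + a) * 2 ^ (K - (n + a)) = 2 ^ K := by
      rw [← pow_add, Nat.add_sub_cancel' h]
    rw [he, slopeProj, slopeProj]
    push_cast
    field_simp
    linear_combination hpow
  rw [dyadicIndex, hstep, Int.floor_add_intCast, ← dyadicIndex]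
  push_cast
  rw [pow_add, hzero]
  ring

lemma two_pow_mul_abs_slopeProj_sub_lt_one {s s' : ℝ} {j n a l : ℕ}
    (hD : 2 ^ (n + (a + l + 1)) * |s' - s| ≤ 2 ^ l) {ω ω' : ShiftedSpace A K}
    (h : (dyadicStrips A K s (j + (n + (a + l + 1))) ⊓ dyadicSquares A K j) ω' ω) :
    2 ^ (j + n + a) * |slopeProj s' (pos ω') - slopeProj s' (pos ω)| < 1 := by
  have hstrip := two_pow_mul_abs_sub_lt_one h.1
  have hrow := two_pow_mul_abs_sub_lt_one (dyadicSquares_iff.1 h.2).2.2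
  set u := |slopeProj s (pos ω') - slopeProj s (pos ω)|
  set y := |(pos ω').2 - (pos ω).2|
  have hslope : 2 ^ (n + (a + l + 1)) * |s' - s| * (2 ^ j * y) ≤ 2 ^ l * 1 := by gcongr
  have hone : (1 : ℝ) ≤ 2 ^ l := one_le_pow₀ one_le_two
  refine lt_of_mul_lt_mul_left ?_ (by positivity : (0 : ℝ) ≤ 2 ^ (l + 1))
  calc (2 : ℝ) ^ (l + 1) * (2 ^ (j + n + a) * |slopeProj s' (pos ω') - slopeProj s' (pos ω)|)
      ≤ 2 ^ (l + 1) * (2 ^ (j + n + a) * (u + |s' - s| * y)) := by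
        gcongr
        exact abs_slopeProj_sub_le s s' _ _
    _ = 2 ^ (j + (n + (a + l + 1))) * u + 2 ^ (n + (a + l + 1)) * |s' - s| * (2 ^ j * y) := by
        simp only [pow_add]
        ring
    _ < 2 ^ (l + 1) * 1 := by
        rw [pow_succ]
        linarith

lemma entropy_strips_sub_le [Nonempty (ShiftedSpace A K)] {s s' : ℝ} {j n a l : ℕ}
    (hD : 2 ^ (n + (a + l + 1)) * |s' - s| ≤ 2 ^ l) (hK : j + n + a ≤ K) :
    entropy (dyadicStrips A K s' (j + n) ⊓
        (dyadicStrips A K s (j + (n + (a + l + 1))) ⊓ dyadicSquares A K j)) -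
      entropy (dyadicStrips A K s (j + (n + (a + l + 1))) ⊓ dyadicSquares A K j) ≤
      2 / 2 ^ a * Real.log 3 := by
  set c := dyadicStrips A K s (j + (n + (a + l + 1))) ⊓ dyadicSquares A K j
  let residue : ShiftedSpace A K → ZMod (2 ^ a) := fun ω =>
    dyadicIndex (j + n + a) (slopeProj s' (pos ω))
  have hclose : ∀ ω ω', c ω' ω →
      2 ^ (j + n) * |slopeProj s' (pos ω') - slopeProj s' (pos ω)| ≤ (1 : ℕ) := fun ω ω' h => by
    rw [Nat.cast_one]
    refine le_trans ?_ (two_pow_mul_abs_slopeProj_sub_lt_one hD h).le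
    gcongr ?_ * _
    exact pow_le_pow_right₀ one_le_two (Nat.le_add_right _ _)
  have hthree : ∀ ω, (cellCount (dyadicStrips A K s' (j + n) ⊓ c) c ω : ℝ) ≤ 3 := fun ω => by
    have hcount := cellCount_ker_inf_le_card
      (fun ω => dyadicIndex (j + n) (slopeProj s' (pos ω))) _
      fun ω' hω' => dyadicIndex_mem_Icc (hclose ω ω' hω')
    rw [card_Icc_sub_add] at hcount
    exact_mod_cast hcount
  have hone : ∀ ω, ¬ (residue ω = 0 ∨ residue ω = -1) →
      (cellCount (dyadicStrips A K s' (j + n) ⊓ c) c ω : ℝ) ≤ 1 := fun ω hω => by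
    push Not at hω
    exact_mod_cast cellCount_ker_inf_le_card _ {dyadicIndex (j + n) (slopeProj s' (pos ω))}
      fun ω' hω' => Finset.mem_singleton.2 <|
        dyadicIndex_eq_of_residue hω.1 hω.2 (two_pow_mul_abs_slopeProj_sub_lt_one hD hω')
  have hprob : prob (fun ω => residue ω = 0 ∨ residue ω = -1) ≤ 2 / 2 ^ a := by
    refine (prob_or_le _ _).trans_eq ?_
    rw [prob_dyadicIndex_residue s' hK, prob_dyadicIndex_residue s' hK]
    ring
  refine (entropy_sub_le_log_add_prob_mul_log inf_le_right le_rfl hone hthree).trans ?_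
  rw [Real.log_one, zero_add]
  gcongr

end Ambiguity

section Branching

variable {A : Finset (ℝ × ℝ)} {K : ℕ} {C : Setoid (ShiftedSpace A K)} {j l n p : ℕ}

/-- The `C`-class of `ω` contains two rows of height `2⁻ⁿ`, at vertical distance about `2 ^ p` rows,
that both carry a proportion at least `τ` of the class. -/
def Branching (C : Setoid (ShiftedSpace A K)) (n p : ℕ) (τ : ℝ) (ω : ShiftedSpace A K) : Prop :=
  ∃ ω₁ ω₂, C ω₁ ω ∧ C ω₂ ω ∧
    dyadicIndex n (pos ω₁).2 + 2 ^ p ≤ dyadicIndex n (pos ω₂).2 ∧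
    τ * #(cell C ω) ≤ #(cell (dyadicRows A K n ⊓ C) ω₁) ∧
    τ * #(cell C ω) ≤ #(cell (dyadicRows A K n ⊓ C) ω₂)

lemma cellCount_dyadicRows_inf_le_two_pow (hC : C ≤ dyadicSquares A K j) (l : ℕ)
    (ω : ShiftedSpace A K) : cellCount (dyadicRows A K (j + l) ⊓ C) C ω ≤ 2 ^ l := by
  rw [← card_Ico_add_two_pow (2 ^ l * dyadicIndex j (pos ω).2) l]
  exact cellCount_ker_inf_le_card _ _
    fun ω' h => dyadicIndex_add_mem_Ico (dyadicSquares_iff.1 (hC h)).2.2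

lemma dyadicIndex_le_add_one {a b : ℝ}
    (h : dyadicIndex (n + p) b ≤ dyadicIndex (n + p) a + 2 ^ p) :
    dyadicIndex n b ≤ dyadicIndex n a + 1 := by
  rw [dyadicIndex_eq_ediv n p, dyadicIndex_eq_ediv n p,
    ← Int.add_mul_ediv_right _ _ (by positivity : (2 : ℤ) ^ p ≠ 0), one_mul]
  exact Int.ediv_le_ediv (by positivity) h

lemma cellCount_dyadicRows_inf_le_two {ω : ShiftedSpace A K}
    (h : ∀ ω₁ ω₂, C ω₁ ω → C ω₂ ω →
      dyadicIndex (n + p) (pos ω₂).2 ≤ dyadicIndex (n + p) (pos ω₁).2 + 2 ^ p) :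
    cellCount (dyadicRows A K n ⊓ C) C ω ≤ 2 := by
  obtain ⟨ω₀, hω₀, hmin⟩ := Finset.exists_min_image (cell C ω) (fun ω' => dyadicIndex n (pos ω').2)
    (cell_nonempty C ω)
  set k := dyadicIndex n (pos ω₀).2
  have hcard : #(Finset.Icc k (k + 1)) = 2 := by
    rw [Int.card_Icc]
    omega
  refine (cellCount_ker_inf_le_card _ (Finset.Icc k (k + 1)) fun ω' hω' => Finset.mem_Icc.2
    ⟨hmin ω' (mem_cell.2 hω'), ?_⟩).trans_eq hcard
  exact dyadicIndex_le_add_one (h ω₀ ω' (mem_cell.1 hω₀) hω')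

lemma prob_light_dyadicRows_mul_log_le [Nonempty (ShiftedSpace A K)]
    (hC : C ≤ dyadicSquares A K j) (l p : ℕ) :
    prob (fun ω => (#(cell (dyadicRows A K (j + (l + p)) ⊓ C) ω) : ℝ) <
      1 / 2 ^ (2 * (l + p)) * #(cell C ω)) * Real.log (2 ^ l) ≤ Real.log 2 := by
  have hprob := prob_card_cell_lt_le (τ := 1 / 2 ^ (2 * (l + p))) (B := 2 ^ (l + p))
    (s := dyadicRows A K (j + (l + p)) ⊓ C) (t := C) inf_le_right (by positivity)
    fun ω => by exact_mod_cast cellCount_dyadicRows_inf_le_two_pow hC (l + p) ω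
  have hl : (l : ℝ) ≤ 2 ^ (l + p) := by
    exact_mod_cast (Nat.lt_two_pow_self (n := l)).le.trans
      (Nat.pow_le_pow_right two_pos (Nat.le_add_right l p))
  rw [Real.log_pow]
  calc _ ≤ 1 / 2 ^ (2 * (l + p)) * 2 ^ (l + p) * (2 ^ (l + p) * Real.log 2) := by gcongr
    _ = Real.log 2 := by
        rw [two_mul, pow_add 2 (l + p)]
        field_simp

/-- Outside of the branching classes and of the light rows, the heavy part of a class meets at most
two consecutive rows. -/
lemma entropy_dyadicRows_inf_sub_le [Nonempty (ShiftedSpace A K)]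
    (hC : C ≤ dyadicSquares A K j) (l p : ℕ) :
    entropy (dyadicRows A K (j + l) ⊓ C) - entropy C ≤ 3 * Real.log 2 +
      l * Real.log 2 * prob (Branching C (j + (l + p)) p (1 / 2 ^ (2 * (l + p)))) := by
  classical
  set τ : ℝ := 1 / 2 ^ (2 * (l + p))
  let heavy : ShiftedSpace A K → Prop := fun ω =>
    τ * #(cell C ω) ≤ #(cell (dyadicRows A K (j + (l + p)) ⊓ C) ω)
  set Z := Setoid.ker heavy
  have hheavy : entropy (Z ⊓ C) - entropy C ≤ Real.log 2 :=
    entropy_sub_le_log inf_le_right fun ω => by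
      exact_mod_cast (cellCount_ker_inf_le_card heavy Finset.univ fun _ _ => Finset.mem_univ _)
  have hrefine : entropy (dyadicRows A K (j + l) ⊓ C) ≤
      entropy (dyadicRows A K (j + l) ⊓ (Z ⊓ C)) :=
    entropy_anti (inf_le_inf_left _ inf_le_right)
  have htwo : ∀ ω, ¬ (Branching C (j + (l + p)) p τ ω ∨
        (#(cell (dyadicRows A K (j + (l + p)) ⊓ C) ω) : ℝ) < τ * #(cell C ω)) →
      (cellCount (dyadicRows A K (j + l) ⊓ (Z ⊓ C)) (Z ⊓ C) ω : ℝ) ≤ 2 := by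
    intro ω hω
    rw [not_or, not_lt] at hω
    have hheavy_of_rel : ∀ ω', (Z ⊓ C) ω' ω →
        τ * #(cell C ω) ≤ #(cell (dyadicRows A K (j + (l + p)) ⊓ C) ω') := fun ω' h => by
      have hiff : heavy ω' = heavy ω := h.1
      rw [← cell_eq_of_rel h.2]
      exact (iff_of_eq hiff).2 hω.2
    exact_mod_cast cellCount_dyadicRows_inf_le_two (p := p) fun ω₁ ω₂ h₁ h₂ => by
      by_contra! hlt
      rw [add_assoc] at hlt
      exact hω.1 ⟨ω₁, ω₂, h₁.2, h₂.2, hlt.le, hheavy_of_rel ω₁ h₁, hheavy_of_rel ω₂ h₂⟩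
  have hrows := entropy_sub_le_log_add_prob_mul_log (M := 2 ^ l) inf_le_right one_le_two htwo
    fun ω => by exact_mod_cast cellCount_dyadicRows_inf_le_two_pow (inf_le_right.trans hC) l ω
  have hlight := prob_light_dyadicRows_mul_log_le hC l p
  have hor := mul_le_mul_of_nonneg_right (prob_or_le (Branching C (j + (l + p)) p τ) fun ω =>
    (#(cell (dyadicRows A K (j + (l + p)) ⊓ C) ω) : ℝ) < τ * #(cell C ω))
    (Real.log_nonneg (one_le_pow₀ one_le_two : (1 : ℝ) ≤ 2 ^ l))
  rw [add_mul, Real.log_pow] at hor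
  rw [Real.log_pow] at hlight hrows
  linarith

end Branching

section Comparison

variable {A : Finset (ℝ × ℝ)} {K : ℕ} {t t' : ℝ} {i j l m : ℕ}

/-- The partition into the intersections of a dyadic square with a strip in each of the two
directions that are being compared. -/
def comparisonPartition (A : Finset (ℝ × ℝ)) (K : ℕ) (t t' : ℝ) (j m : ℕ) :
    Setoid (ShiftedSpace A K) :=
  dyadicSquares A K j ⊓ dyadicStrips A K t (j + m) ⊓ dyadicStrips A K t' (j + m)

lemma comparisonPartition_le_dyadicSquares (t t' : ℝ) (j m : ℕ) :
    comparisonPartition A K t t' j m ≤ dyadicSquares A K j :=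
  inf_le_left.trans inf_le_left

lemma comparisonPartition_comm (t t' : ℝ) (j m : ℕ) :
    comparisonPartition A K t t' j m = comparisonPartition A K t' t j m :=
  inf_right_comm _ _ _

lemma entropy_dyadicSquares_inf_dyadicRows_sub_le [Nonempty (ShiftedSpace A K)] (ht : |t| ≤ 1)
    (hlm : l ≤ m) :
    entropy (dyadicSquares A K (j + l) ⊓
        (dyadicRows A K (j + l) ⊓ comparisonPartition A K t t' j m)) -
      entropy (dyadicRows A K (j + l) ⊓ comparisonPartition A K t t' j m) ≤ Real.log 5 := by
  set c := dyadicRows A K (j + l) ⊓ comparisonPartition A K t t' j m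
  have hx : ∀ ω ω', c ω' ω → 2 ^ (j + l) * |(pos ω').1 - (pos ω).1| ≤ (2 : ℕ) := by
    rintro ω ω' ⟨hrow, ⟨-, hstrip⟩, -⟩
    have hrow := two_pow_mul_abs_sub_lt_one hrow
    have hstrip := two_pow_mul_abs_sub_lt_one hstrip
    have hle := abs_slopeProj_sub_le t 0 (pos ω') (pos ω)
    simp only [slopeProj, zero_mul, add_zero, zero_sub, abs_neg] at hle hstrip
    calc 2 ^ (j + l) * |(pos ω').1 - (pos ω).1|
        ≤ 2 ^ (j + l) * (|(pos ω').1 + t * (pos ω').2 - ((pos ω).1 + t * (pos ω).2)| +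
            1 * |(pos ω').2 - (pos ω).2|) := by
          refine mul_le_mul_of_nonneg_left (hle.trans ?_) (by positivity)
          gcongr
      _ = 2 ^ (j + l) * |(pos ω').1 + t * (pos ω').2 - ((pos ω).1 + t * (pos ω).2)| +
            2 ^ (j + l) * |(pos ω').2 - (pos ω).2| := by ring
      _ ≤ 2 ^ (j + m) * |(pos ω').1 + t * (pos ω').2 - ((pos ω).1 + t * (pos ω).2)| +
            2 ^ (j + l) * |(pos ω').2 - (pos ω).2| := by
          gcongr
          exact one_le_two
      _ ≤ (2 : ℕ) := by
          push_cast
          linarith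
  have hentropy := entropy_dyadicIndex_inf_sub_le _ hx
  rw [show (2 * ((2 : ℕ) : ℝ) + 1) = 5 by norm_num] at hentropy
  refine (sub_le_sub_right (entropy_anti (le_inf ?_ inf_le_right)) _).trans hentropy
  rintro ω ω' ⟨hx, hrow, hcomp⟩
  exact dyadicSquares_iff.2
    ⟨(dyadicSquares_iff.1 (comparisonPartition_le_dyadicSquares t t' j m hcomp)).1, hx, hrow⟩

lemma entropy_comparisonPartition_sub_le [Nonempty (ShiftedSpace A K)]
    (htt' : 2 ^ m * |t' - t| ≤ 1) :
    entropy (comparisonPartition A K t t' j m) -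
      entropy (dyadicStrips A K t (j + m) ⊓ dyadicSquares A K j) ≤ Real.log 5 := by
  set c := dyadicStrips A K t (j + m) ⊓ dyadicSquares A K j
  have hproj : ∀ ω ω', c ω' ω →
      2 ^ (j + m) * |slopeProj t' (pos ω') - slopeProj t' (pos ω)| ≤ (2 : ℕ) := by
    rintro ω ω' ⟨hstrip, hsquare⟩
    have hstrip := two_pow_mul_abs_sub_lt_one hstrip
    have hrow := two_pow_mul_abs_sub_lt_one (dyadicSquares_iff.1 hsquare).2.2
    have hslope := mul_le_mul htt' hrow.le (by positivity) zero_le_one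
    calc 2 ^ (j + m) * |slopeProj t' (pos ω') - slopeProj t' (pos ω)|
        ≤ 2 ^ (j + m) * (|slopeProj t (pos ω') - slopeProj t (pos ω)| +
            |t' - t| * |(pos ω').2 - (pos ω).2|) := by
          gcongr
          exact abs_slopeProj_sub_le t t' _ _
      _ = 2 ^ (j + m) * |slopeProj t (pos ω') - slopeProj t (pos ω)| +
            2 ^ m * |t' - t| * (2 ^ j * |(pos ω').2 - (pos ω).2|) := by
          rw [pow_add]
          ring
      _ ≤ (2 : ℕ) := by
          push_cast
          linarith
  have hentropy := entropy_dyadicIndex_inf_sub_le _ hproj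
  rw [show (2 * ((2 : ℕ) : ℝ) + 1) = 5 by norm_num] at hentropy
  rwa [comparisonPartition, inf_comm (dyadicSquares A K j), inf_comm]

lemma le_entropy_dyadicRows_inf_comparisonPartition [Nonempty (ShiftedSpace A K)] (ht : |t| ≤ 1)
    (hlm : l ≤ m) (htt' : 2 ^ m * |t' - t| ≤ 1) :
    entropy (dyadicStrips A K t (j + m) ⊓ dyadicSquares A K (j + l)) -
        entropy (dyadicStrips A K t (j + m) ⊓ dyadicSquares A K j) - 2 * Real.log 5 ≤
      entropy (dyadicRows A K (j + l) ⊓ comparisonPartition A K t t' j m) -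
        entropy (comparisonPartition A K t t' j m) := by
  have hanti : entropy (dyadicStrips A K t (j + m) ⊓ dyadicSquares A K (j + l)) ≤
      entropy (dyadicSquares A K (j + l) ⊓
        (dyadicRows A K (j + l) ⊓ comparisonPartition A K t t' j m)) :=
    entropy_anti (le_inf (inf_le_right.trans (inf_le_right.trans (inf_le_left.trans inf_le_right)))
      inf_le_left)
  linarith [
    entropy_dyadicSquares_inf_dyadicRows_sub_le (A := A) (K := K) (t' := t') (j := j) ht hlm,
    entropy_comparisonPartition_sub_le (A := A) (K := K) (j := j) htt']

end Comparison

section Squares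

variable {A : Finset (ℝ × ℝ)} {K i : ℕ}

lemma entropy_top {Ω : Type*} [Fintype Ω] [Nonempty Ω] : entropy (⊤ : Setoid Ω) = 0 := by
  have hcell : ∀ ω, #(cell (⊤ : Setoid Ω) ω) = Fintype.card Ω := fun ω => by
    rw [Finset.eq_univ_of_forall fun ω' => mem_cell.2 (show (⊤ : Setoid Ω) ω' ω from trivial),
      Finset.card_univ]
  simp only [entropy, hcell, Finset.expect_const Finset.univ_nonempty, sub_self]

lemma dyadicIndex_mem_Icc_of_abs_le_two {v : ℝ} (hv : |v| ≤ 2) (l : ℕ) : dyadicIndex l v ∈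
    Finset.Icc (0 - ((2 ^ (l + 1) : ℕ) : ℤ)) (0 + (2 ^ (l + 1) : ℕ)) := by
  have hzero : dyadicIndex l 0 = 0 := by simp [dyadicIndex]
  rw [← hzero]
  refine dyadicIndex_mem_Icc ?_
  rw [sub_zero]
  push_cast
  rw [pow_succ]
  gcongr

lemma entropy_dyadicSquares_le [Nonempty (ShiftedSpace A K)]
    (hA : ∀ z ∈ A, |z.1| ≤ 1 ∧ |z.2| ≤ 1) (l : ℕ) :
    entropy (dyadicSquares A K l) ≤ K * Real.log 2 + 2 * ((l + 3) * Real.log 2) := by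
  set I := Finset.Icc (0 - ((2 ^ (l + 1) : ℕ) : ℤ)) (0 + (2 ^ (l + 1) : ℕ))
  have hI : #I ≤ 2 ^ (l + 3) := by
    rw [card_Icc_sub_add, pow_succ, pow_add]
    have := Nat.one_le_two_pow (n := l)
    omega
  have hmem : ∀ ω' : ShiftedSpace A K, (ω'.2, dyadicIndex l (pos ω').1, dyadicIndex l (pos ω').2) ∈
      (Finset.univ : Finset (Fin (2 ^ K))) ×ˢ I ×ˢ I := fun ω' => by
    obtain ⟨hx, hy⟩ := hA _ ω'.1.2
    have hshift : |((ω'.2 : ℕ) : ℝ) / 2 ^ K| ≤ 1 := by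
      rw [abs_of_nonneg (by positivity), div_le_one (by positivity)]
      exact_mod_cast ω'.2.2.le
    refine Finset.mk_mem_product (Finset.mem_univ _) (Finset.mk_mem_product
      (dyadicIndex_mem_Icc_of_abs_le_two ((abs_add_le _ _).trans (by linarith)) l)
      (dyadicIndex_mem_Icc_of_abs_le_two (hy.trans one_le_two) l))
  have hcount : ∀ ω, cellCount (dyadicSquares A K l) ⊤ ω ≤ 2 ^ (K + (l + 3) + (l + 3)) := fun ω =>
    calc cellCount (dyadicSquares A K l) ⊤ ω
        ≤ #((Finset.univ : Finset (Fin (2 ^ K))) ×ˢ I ×ˢ I) :=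
          cellCount_le_card _ _ (fun ω' _ => hmem ω') fun _ _ _ _ h => h
      _ = 2 ^ K * (#I * #I) := by
          simp only [Finset.card_product, Finset.card_univ, Fintype.card_fin]
      _ ≤ 2 ^ K * (2 ^ (l + 3) * 2 ^ (l + 3)) := by gcongr
      _ = 2 ^ (K + (l + 3) + (l + 3)) := by ring
  have hentropy := entropy_sub_le_log (s := dyadicSquares A K l)
    (B := 2 ^ (K + (l + 3) + (l + 3))) le_top fun ω => by exact_mod_cast hcount ω
  rw [entropy_top, sub_zero, Real.log_pow] at hentropy
  push_cast at hentropy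
  linarith

lemma entropy_dyadicSquares_eq [Nonempty (ShiftedSpace A K)]
    (hsep : ∀ z ∈ A, ∀ z' ∈ A, z ≠ z' → 1 / 2 ^ i ≤ |z.1 - z'.1| ∨ 1 / 2 ^ i ≤ |z.2 - z'.2|) :
    entropy (dyadicSquares A K i) = Real.log #A + K * Real.log 2 := by
  have hcell : ∀ ω, cell (dyadicSquares A K i) ω = {ω} := fun ω => by
    ext ω'
    rw [mem_cell, Finset.mem_singleton]
    refine ⟨fun h => ?_, fun h => h ▸ (dyadicSquares A K i).refl' _⟩
    obtain ⟨hshift, hx, hy⟩ := dyadicSquares_iff.1 h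
    have hx := two_pow_mul_abs_sub_lt_one hx
    have hy := two_pow_mul_abs_sub_lt_one hy
    refine Prod.ext (Subtype.ext (by_contra fun hne => ?_)) hshift
    simp only [pos, hshift, add_sub_add_right_eq_sub] at hx hy
    rcases hsep _ ω'.1.2 _ ω.1.2 hne with h | h <;>
    · rw [div_le_iff₀' (by positivity)] at h
      linarith
  have hA : (#A : ℝ) ≠ 0 := by
    obtain ⟨ω⟩ := ‹Nonempty (ShiftedSpace A K)›
    exact_mod_cast (Finset.card_pos.2 ⟨_, ω.1.2⟩).ne'
  simp only [entropy, hcell, Finset.card_singleton, Nat.cast_one, Real.log_one,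
    Finset.expect_const_zero, sub_zero, Fintype.card_prod, Fintype.card_coe, Fintype.card_fin,
    Nat.cast_mul, Nat.cast_pow, Nat.cast_ofNat]
  rw [Real.log_mul hA (by positivity), Real.log_pow]

end Squares

section BranchingContradiction

lemma CondLawWithin.comp {Ω α β γ : Type*} [DecidableEq β] {S : Finset Ω} {X : Ω → α} {Y : Ω → β}
    {y : β} {e : ℝ} (h : CondLawWithin S X Y y e) (f : α → γ) :
    CondLawWithin S (fun ω => f (X ω)) Y y e :=
  fun φ hφ => h (fun x => φ (f x)) fun x => hφ (f x)

lemma abs_dyadicIndex_slopeProj_sub_le {M m : ℕ} {t t' g : ℝ} (hg₀ : 0 ≤ g) (hg₁ : g ≤ 1)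
    (hg : 2 ^ M * (t' - t) = g * 2 ^ m) (z : ℝ × ℝ) :
    |(dyadicIndex M (slopeProj t' z) : ℝ) - dyadicIndex M (slopeProj t z) -
      g * dyadicIndex m z.2| ≤ 2 := by
  have hsum : (2 : ℝ) ^ M * slopeProj t' z = 2 ^ M * slopeProj t z + g * (2 ^ m * z.2) := by
    rw [slopeProj, slopeProj]
    linear_combination z.2 * hg
  simp only [dyadicIndex, ← Int.self_sub_fract, hsum]
  generalize (2 : ℝ) ^ M * slopeProj t z = b
  generalize (2 : ℝ) ^ m * z.2 = c
  have hc₀ := mul_nonneg hg₀ (Int.fract_nonneg c)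
  have hc₁ := mul_le_one₀ hg₁ (Int.fract_nonneg c) (Int.fract_lt_one c).le
  rw [abs_le]
  constructor <;> linarith [Int.fract_nonneg b, Int.fract_lt_one b, Int.fract_nonneg (b + g * c),
    Int.fract_lt_one (b + g * c)]

variable {A : Finset (ℝ × ℝ)} {K i j l n p q L M : ℕ} {t t' C α h τ θ v : ℝ}

lemma abs_sub_mem_Icc_of_dyadicIndex_near_progression {a b : ℝ} {k k' : ℕ} (hh : 4 ≤ h)
    (hlt : k < k') (hk' : k' < L) (ha : |v + k * h - dyadicIndex M a| < h / 4)
    (hb : |v + k' * h - dyadicIndex M b| < h / 4) :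
    |a - b| ∈ Icc (h / 4 / 2 ^ M) (L * h / 2 ^ M) := by
  have hlow : (k : ℝ) * h + h ≤ k' * h := by
    rw [← add_one_mul]
    gcongr
    exact_mod_cast hlt
  have hupp : (k' : ℝ) * h + h ≤ k * h + L * h := by
    have : (k' : ℝ) + 1 ≤ k + L := by exact_mod_cast hk'.trans_le (Nat.le_add_left L k)
    rw [← add_one_mul, ← add_mul]
    gcongr
  rw [dyadicIndex, ← Int.self_sub_fract, abs_lt] at ha hb
  rw [abs_sub_comm, mem_Icc, div_le_iff₀' (by positivity), le_div_iff₀' (by positivity),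
    ← abs_of_pos (by positivity : (0 : ℝ) < 2 ^ M), ← abs_mul, mul_sub, le_abs, abs_le]
  generalize (2 : ℝ) ^ M * a = a at *
  generalize (2 : ℝ) ^ M * b = b at *
  have ha₀ := Int.fract_nonneg a
  have ha₁ := Int.fract_lt_one a
  have hb₀ := Int.fract_nonneg b
  have hb₁ := Int.fract_lt_one b
  exact ⟨Or.inl (by linarith), by linarith, by linarith⟩

lemma ProjBound.card_progression_le (hP : ProjBound A t C α (1 / 2 ^ i)) (hM : M ≤ i) (hh : 4 ≤ h)
    (hL : 0 < L) {I : Finset ℕ} (hI : I ⊆ Finset.range L) {w : ℕ → ShiftedSpace A K}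
    (hshift : ∀ k ∈ I, ∀ k' ∈ I, (w k).2 = (w k').2)
    (hw : ∀ k ∈ I, |v + k * h - dyadicIndex M (slopeProj t (pos (w k)))| < h / 4) :
    #I ≤ C * (4 * L) ^ α := by
  have hL₁ : (1 : ℝ) ≤ L := by exact_mod_cast hL
  have hh₀ : h ≠ 0 := by positivity
  have hsep : ∀ k ∈ I, ∀ k' ∈ I, k < k' →
      |slopeProj t (w k).1.1 - slopeProj t (w k').1.1| ∈ Icc (h / 4 / 2 ^ M) (L * h / 2 ^ M) := by
    intro k hk k' hk' hlt
    rw [← slopeProj_pos_sub t (hshift k hk k' hk')]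
    exact abs_sub_mem_Icc_of_dyadicIndex_near_progression hh hlt (Finset.mem_range.1 (hI hk'))
      (hw k hk) (hw k' hk')
  refine (hP.card_le (by positivity) I (fun k => (w k).1.1) (fun k _ => (w k).1.2) ?_ ?_
    (ρ := h / 4 / 2 ^ M) (R := L * h / 2 ^ M) fun k hk k' hk' hne => ?_).trans_eq ?_
  · exact div_le_div₀ (by positivity) (by linarith) (by positivity)
      (pow_le_pow_right₀ one_le_two hM)
  · gcongr
    nlinarith
  · rcases lt_or_gt_of_ne hne with hlt | hlt
    · exact hsep k hk k' hk' hlt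
    · rw [abs_sub_comm]
      exact hsep k' hk' k hk hlt
  · congr 2
    field_simp

lemma condLawWithin_cell_of_mutualInfo_le {Z : Setoid (ShiftedSpace A K)} (hτ : 0 < τ)
    {X : ShiftedSpace A K → ℤ} {ω ω' : ShiftedSpace A K} {m : ℕ} (hω' : Z ω' ω)
    (hcard : τ * #(cell Z ω) ≤ #(cell (dyadicRows A K m ⊓ Z) ω'))
    (hθ : mutualInfo (cell Z ω) X (fun ω => dyadicIndex m (pos ω).2) ≤ θ) :
    CondLawWithin (cell Z ω) (fun ω => (X ω : ℝ)) (fun ω => dyadicIndex m (pos ω).2)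
      (dyadicIndex m (pos ω').2) (2 * √θ / τ) := by
  rw [dyadicRows, cell_ker_inf_eq_filter _ hω'] at hcard
  exact (condLawWithin_of_mutualInfo_le hτ hcard hθ).comp fun k : ℤ => (k : ℝ)

/-- If both projections are almost independent of the row, then one of them is almost invariant
under the translation by `h`, so it contains a long arithmetic progression. -/
lemma exists_progression_of_condLawWithin {S : Finset (ShiftedSpace A K)} (hS : S.Nonempty)
    {m : ℕ} {g e : ℝ} {y₁ y₂ : ℤ} (hg₀ : 0 ≤ g) (hg₁ : g ≤ 1)
    (hg : 2 ^ M * (t' - t) = g * 2 ^ m) (hh : h = g * y₂ - g * y₁) (hh₀ : 0 < h) (hL : 0 < L)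
    (he : 0 ≤ e) (hLe : L * (4 * e + 16 / h) < 1 / 2)
    (hlaw : ∀ s ∈ ({t, t'} : Set ℝ), ∀ y ∈ ({y₁, y₂} : Set ℤ),
      CondLawWithin S (fun ω => (dyadicIndex M (slopeProj s (pos ω)) : ℝ))
        (fun ω => dyadicIndex m (pos ω).2) y e) :
    ∃ ω ∈ S, ∃ I ⊆ Finset.range L, (L : ℝ) / 2 < #I ∧ ∀ k ∈ I, ∃ ω' ∈ S,
      |(dyadicIndex M (slopeProj t (pos ω)) : ℝ) + k * h - dyadicIndex M (slopeProj t (pos ω'))| <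
        h / 4 := by
  refine exists_half_lt_card_progression hS (by positivity) hL (by positivity) hLe
    fun Φ hΦ hΦκ => ?_
  have hinv := abs_expect_translate_sub_le (g := fun k : ℤ => g * k) zero_le_two
    (fun ω _ => abs_dyadicIndex_slopeProj_sub_le hg₀ hg₁ hg (pos ω))
    (hlaw t (by simp) y₁ (by simp)) (hlaw t (by simp) y₂ (by simp))
    (hlaw t' (by simp) y₁ (by simp)) (hlaw t' (by simp) y₂ (by simp)) hΦ hΦκ
  rw [← hh, NNReal.coe_inv, Real.coe_toNNReal _ (by positivity)] at hinv
  refine hinv.trans_eq ?_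
  field_simp
  ring

lemma shift_eq_of_comparisonPartition {ω ω' : ShiftedSpace A K}
    (h : comparisonPartition A K t t' j n ω' ω) : ω'.2 = ω.2 :=
  (dyadicSquares_iff.1 (comparisonPartition_le_dyadicSquares _ _ _ _ h)).1

/-- Two heavy rows far apart in a class would translate a projection by a large amount. -/
lemma not_branching_comparisonPartition (hτ : 0 < τ) (hP : ProjBound A t C α (1 / 2 ^ i))
    (hi : j + (n + q) ≤ i) {g : ℝ} (hg₀ : 1 / 2 ≤ g) (hg₁ : g ≤ 1)
    (hg : 2 ^ (n + q) * (t' - t) = g * 2 ^ l) (hL : 0 < L) (hCL : C * (4 * L) ^ α ≤ L / 2)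
    (hp : 3 ≤ p) (hLθ : L * (4 * (2 * √θ / τ) + 32 / 2 ^ p) < 1 / 2) {ω : ShiftedSpace A K}
    (hθ : ∀ s ∈ ({t, t'} : Set ℝ), mutualInfo (cell (comparisonPartition A K t t' j n) ω)
      (fun ω => dyadicIndex (j + (n + q)) (slopeProj s (pos ω)))
      (fun ω => dyadicIndex (j + l) (pos ω).2) ≤ θ) :
    ¬ Branching (comparisonPartition A K t t' j n) (j + l) p τ ω := by
  rintro ⟨ω₁, ω₂, h₁, h₂, hrows, hcard₁, hcard₂⟩
  set Z := comparisonPartition A K t t' j n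
  set y₁ := dyadicIndex (j + l) (pos ω₁).2
  set y₂ := dyadicIndex (j + l) (pos ω₂).2
  obtain ⟨h, hh⟩ : ∃ h, h = g * y₂ - g * y₁ := ⟨_, rfl⟩
  have hp_le : (2 : ℝ) ^ p / 2 ≤ h := by
    have hy : (2 : ℝ) ^ p ≤ y₂ - y₁ := by
      rw [le_sub_iff_add_le']
      exact_mod_cast hrows
    calc (2 : ℝ) ^ p / 2 = 1 / 2 * 2 ^ p := by ring
      _ ≤ g * (y₂ - y₁) := by gcongr
      _ = h := by rw [hh, mul_sub]
  have hh₄ : 4 ≤ h := by linarith [pow_le_pow_right₀ (one_le_two (α := ℝ)) hp]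
  have hLe : L * (4 * (2 * √θ / τ) + 16 / h) < 1 / 2 := by
    have : 16 / h ≤ 32 / 2 ^ p := by
      rw [div_le_div_iff₀ (by positivity) (by positivity)]
      linarith
    refine lt_of_le_of_lt ?_ hLθ
    gcongr
  have hgM : 2 ^ (j + (n + q)) * (t' - t) = g * 2 ^ (j + l) := by
    linear_combination 2 ^ j * hg
  obtain ⟨ω₀, -, I, hI, hcardI, hprog⟩ := exists_progression_of_condLawWithin (cell_nonempty Z ω)
    (by linarith) hg₁ hgM hh (by linarith) hL (by positivity) hLe fun s hs y hy => by
      rcases hy with rfl | rfl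
      · exact condLawWithin_cell_of_mutualInfo_le hτ h₁ hcard₁ (hθ s hs)
      · exact condLawWithin_cell_of_mutualInfo_le hτ h₂ hcard₂ (hθ s hs)
  have : Nonempty (ShiftedSpace A K) := ⟨ω⟩
  choose! w hwZ hw using hprog
  have hshift : ∀ k ∈ I, (w k).2 = ω.2 := fun k hk =>
    shift_eq_of_comparisonPartition (mem_cell.1 (hwZ k hk))
  have hle := hP.card_progression_le hi hh₄ hL hI
    (fun k hk k' hk' => (hshift k hk).trans (hshift k' hk').symm) hw
  linarith

end BranchingContradiction

section Level

variable {A : Finset (ℝ × ℝ)} {K : ℕ} {t t' C α : ℝ} {i j n l p q a L : ℕ}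

lemma dyadicStrips_inf_inf_dyadicStrips (t : ℝ) (j n q : ℕ) :
    dyadicStrips A K t (j + (n + q)) ⊓ (dyadicSquares A K j ⊓ dyadicStrips A K t (j + n)) =
      dyadicStrips A K t (j + (n + q)) ⊓ dyadicSquares A K j := by
  have hstrips : dyadicStrips A K t (j + (n + q)) ≤ dyadicStrips A K t (j + n) := by
    rw [← add_assoc j]
    exact dyadicStrips_add_le t _ _
  rw [inf_comm (dyadicSquares A K j), ← inf_assoc, inf_eq_left.2 hstrips]

/-- The second difference of `projEntropy`: the information on the dyadic square of side `2⁻⁽ʲ⁺ˡ⁾`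
that is gained when the scale of the projection is refined from `2⁻⁽ʲ⁺ⁿ⁺ˡ⁾` to `2⁻⁽ʲ⁺ⁿ⁺ˡ⁺q⁾`. -/
def projGain (A : Finset (ℝ × ℝ)) (K : ℕ) (t : ℝ) (j n l q : ℕ) : ℝ :=
  (projEntropy A K t j (n + l + q) - projEntropy A K t j (n + l)) -
    (projEntropy A K t (j + l) (n + q) - projEntropy A K t (j + l) n)

lemma projGain_nonneg (t : ℝ) (j n l q : ℕ) : 0 ≤ projGain A K t j n l q := by
  rw [projGain, ← condInfo_strips_squares]
  exact condInfo_nonneg _ _ _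

lemma condInfo_strips_rows_le [Nonempty (ShiftedSpace A K)]
    (hD : 2 ^ (n + l + (a + l + 1)) * |t' - t| ≤ 2 ^ l) (hK : j + (n + l) + a ≤ K) :
    condInfo (dyadicStrips A K t (j + (n + l + (a + l + 1)))) (dyadicRows A K (j + l))
        (comparisonPartition A K t t' j (n + l)) ≤
      projGain A K t j n l (a + l + 1) + 2 / 2 ^ a * Real.log 3 := by
  refine (condInfo_inf_le (dyadicSquares_le_dyadicRows _)).trans ?_
  rw [condInfo_strips_squares, dyadicStrips_inf_inf_dyadicStrips, projGain]
  gcongr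
  exact entropy_strips_sub_le hD hK

lemma mul_prob_branching_le {τ θ g : ℝ} (hτ : 0 < τ) (hP : ProjBound A t C α (1 / 2 ^ i))
    (hi : j + (n + q) ≤ i) (hg₀ : 1 / 2 ≤ g) (hg₁ : g ≤ 1)
    (hg : 2 ^ (n + q) * (t' - t) = g * 2 ^ l) (hL : 0 < L) (hCL : C * (4 * L) ^ α ≤ L / 2)
    (hp : 3 ≤ p) (hLθ : L * (4 * (2 * √θ / τ) + 32 / 2 ^ p) < 1 / 2) :
    θ * prob (Branching (comparisonPartition A K t t' j n) (j + l) p τ) ≤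
      condInfo (dyadicStrips A K t (j + (n + q))) (dyadicRows A K (j + l))
          (comparisonPartition A K t t' j n) +
        condInfo (dyadicStrips A K t' (j + (n + q))) (dyadicRows A K (j + l))
          (comparisonPartition A K t t' j n) := by
  simp only [dyadicStrips, dyadicRows]
  rw [condInfo_ker, condInfo_ker, ← Finset.expect_add_distrib]
  refine mul_prob_le_expect
    (fun ω => add_nonneg (mutualInfo_nonneg _ _ _) (mutualInfo_nonneg _ _ _)) fun ω hω => ?_
  by_contra! hlt
  refine not_branching_comparisonPartition hτ hP hi hg₀ hg₁ hg hL hCL hp hLθ ?_ hω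
  rintro s (rfl | rfl)
  · exact (le_add_of_nonneg_right (mutualInfo_nonneg _ _ _)).trans hlt.le
  · exact (le_add_of_nonneg_left (mutualInfo_nonneg _ _ _)).trans hlt.le

lemma projEntropy_sub_add_le [Nonempty (ShiftedSpace A K)] (ht : |t| ≤ 1) (p : ℕ)
    (htt' : 2 ^ (n + (l + p)) * |t' - t| ≤ 1) :
    projEntropy A K t (j + l) (n + p) - projEntropy A K t j (n + (l + p)) +
        (entropy (dyadicSquares A K (j + l)) - entropy (dyadicSquares A K j)) -
        (2 * Real.log 5 + 3 * Real.log 2) ≤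
      l * Real.log 2 * prob (Branching (comparisonPartition A K t t' j (n + (l + p)))
        (j + (l + p)) p (1 / 2 ^ (2 * (l + p)))) := by
  have hrows := le_entropy_dyadicRows_inf_comparisonPartition (A := A) (K := K) (j := j) ht
    (by omega : l ≤ n + (l + p)) htt'
  have hbranching := entropy_dyadicRows_inf_sub_le (A := A) (K := K)
    (comparisonPartition_le_dyadicSquares t t' j (n + (l + p))) l p
  simp only [projEntropy]
  rw [show j + l + (n + p) = j + (n + (l + p)) by omega]
  linarith

/-- Refining the squares from level `j` to level `j + l` is paid for either by the projection or by
branching, and branching forces a gain in one of the two directions. -/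
lemma level_inequality [Nonempty (ShiftedSpace A K)] {θ : ℝ} (ht : |t| ≤ 1) (hθ : 0 ≤ θ)
    (hP : ProjBound A t C α (1 / 2 ^ i)) (hi : j + (n + (l + p) + (a + (l + p) + 1)) ≤ i)
    (hK : j + (n + (l + p)) + a ≤ K)
    (hg : 2 ^ (n + (a + (l + p) + 1)) * (t' - t) ∈ Set.Icc (1 / 2 : ℝ) 1)
    (hL : 0 < L) (hCL : C * (4 * L) ^ α ≤ L / 2) (hp : 3 ≤ p)
    (hLθ : L * (4 * (2 * √θ / (1 / 2 ^ (2 * (l + p)))) + 32 / 2 ^ p) < 1 / 2) :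
    θ * (projEntropy A K t (j + l) (n + p) - projEntropy A K t j (n + (l + p)) +
        (entropy (dyadicSquares A K (j + l)) - entropy (dyadicSquares A K j)) -
        (2 * Real.log 5 + 3 * Real.log 2)) ≤
      l * Real.log 2 * (projGain A K t j n (l + p) (a + (l + p) + 1) +
        projGain A K t' j n (l + p) (a + (l + p) + 1) + 4 / 2 ^ a * Real.log 3) := by
  set r := l + p
  set q := a + r + 1
  set Z := comparisonPartition A K t t' j (n + r)
  have hδ : 2 ^ (n + r + q) * (t' - t) = 2 ^ (n + q) * (t' - t) * 2 ^ r := by ring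
  have hpos : 0 < t' - t := pos_of_mul_pos_right (one_half_pos.trans_le hg.1) (by positivity)
  have hD : 2 ^ (n + r + q) * |t' - t| ≤ 2 ^ r := by
    rw [abs_of_pos hpos, hδ]
    exact mul_le_of_le_one_left (by positivity) hg.2
  have hcoarse : 2 ^ (n + r) * |t' - t| ≤ 1 := by
    refine le_trans ?_ hg.2
    rw [abs_of_pos hpos]
    gcongr
    · exact one_le_two
    · omega
  have hlow := projEntropy_sub_add_le (A := A) (K := K) (j := j) (n := n) ht p hcoarse
  have hhigh : θ * prob (Branching Z (j + r) p (1 / 2 ^ (2 * r))) ≤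
      projGain A K t j n r q + projGain A K t' j n r q + 4 / 2 ^ a * Real.log 3 := by
    have hinfo := condInfo_strips_rows_le (A := A) hD hK
    have hinfo' := condInfo_strips_rows_le (A := A) (t := t') (t' := t) (abs_sub_comm t t' ▸ hD) hK
    rw [comparisonPartition_comm] at hinfo'
    have hbranching := mul_prob_branching_le (K := K) (by positivity) hP hi hg.1 hg.2 hδ hL hCL hp
      hLθ
    rw [show (4 : ℝ) / 2 ^ a = 2 / 2 ^ a + 2 / 2 ^ a by ring, add_mul]
    linarith
  calc _ ≤ θ * (l * Real.log 2 * prob (Branching Z (j + r) p (1 / 2 ^ (2 * r)))) := by gcongr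
    _ = l * Real.log 2 * (θ * prob (Branching Z (j + r) p (1 / 2 ^ (2 * r)))) := by ring
    _ ≤ _ := by gcongr

lemma entropy_dyadicSquares_add_sub_le [Nonempty (ShiftedSpace A K)] (j l : ℕ) :
    entropy (dyadicSquares A K (j + l)) - entropy (dyadicSquares A K j) ≤
      2 * (l * Real.log 2) := by
  have hcount : ∀ ω, (cellCount (dyadicSquares A K (j + l)) (dyadicSquares A K j) ω : ℝ) ≤
      2 ^ (l + l) := fun ω => by
    have h := cellCount_le_card (s := dyadicSquares A K (j + l)) (t := dyadicSquares A K j)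
      (ω := ω) (fun ω' => (dyadicIndex (j + l) (pos ω').1, dyadicIndex (j + l) (pos ω').2))
      (Finset.Ico (2 ^ l * dyadicIndex j (pos ω).1) _ ×ˢ
        Finset.Ico (2 ^ l * dyadicIndex j (pos ω).2) _)
      (fun ω' h => Finset.mk_mem_product (dyadicIndex_add_mem_Ico (dyadicSquares_iff.1 h).2.1)
        (dyadicIndex_add_mem_Ico (dyadicSquares_iff.1 h).2.2))
      fun ω₁ ω₂ h₁ h₂ h => dyadicSquares_iff.2 ⟨(dyadicSquares_iff.1 h₁).1.trans
        (dyadicSquares_iff.1 h₂).1.symm, Prod.mk_inj.1 h⟩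
    rw [Finset.card_product, card_Ico_add_two_pow, card_Ico_add_two_pow, ← pow_add] at h
    exact_mod_cast h
  have h := entropy_sub_le_log (dyadicSquares_add_le j l) hcount
  rw [Real.log_pow] at h
  push_cast at h
  linarith

end Level

section Mean

variable {f g : ℕ → ℕ → ℝ} {a b M : ℝ}

/-- The averages of `f i j` over `j < i` tend to `a`, along a fixed nonprincipal ultrafilter so that
every bounded array has a mean. -/
def HasMean (f : ℕ → ℕ → ℝ) (a : ℝ) : Prop :=
  Tendsto (fun i => 𝔼 j ∈ Finset.range i, f i j) (hyperfilter ℕ) (𝓝 a)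

/-- The mean of an array, with a junk value when the array has no mean. -/
def mean (f : ℕ → ℕ → ℝ) : ℝ :=
  limUnder (hyperfilter ℕ : Filter ℕ) fun i => 𝔼 j ∈ Finset.range i, f i j

lemma hasMean_mean (hf : ∀ i j, |f i j| ≤ M) : HasMean f (mean f) := by
  have hM : 0 ≤ M := (abs_nonneg _).trans (hf 0 0)
  have hmem : ∀ i, 𝔼 j ∈ Finset.range i, f i j ∈ Set.Icc (-M) M := fun i => by
    refine abs_le.1 ((Finset.abs_expect_le _ _).trans ?_)
    rcases (Finset.range i).eq_empty_or_nonempty with h | h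
    · rwa [h, Finset.expect_empty]
    · exact Finset.expect_le h fun j _ => hf i j
  obtain ⟨a, -, ha⟩ := isCompact_Icc.ultrafilter_le_nhds
    ((hyperfilter ℕ).map fun i => 𝔼 j ∈ Finset.range i, f i j)
    (le_principal_iff.2 (mem_map.2 (Eventually.of_forall hmem)))
  exact tendsto_nhds_limUnder ⟨a, ha⟩

lemma HasMean.add (hf : HasMean f a) (hg : HasMean g b) :
    HasMean (fun i j => f i j + g i j) (a + b) := by
  simpa only [HasMean, Finset.expect_add_distrib] using Tendsto.add hf hg

lemma HasMean.sub (hf : HasMean f a) (hg : HasMean g b) :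
    HasMean (fun i j => f i j - g i j) (a - b) := by
  simpa only [HasMean, Finset.expect_sub_distrib] using Tendsto.sub hf hg

lemma HasMean.const_mul (hf : HasMean f a) (c : ℝ) : HasMean (fun i j => c * f i j) (c * a) := by
  simpa only [HasMean, ← Finset.mul_expect] using Tendsto.const_mul c hf

lemma hasMean_const (c : ℝ) : HasMean (fun _ _ => c) c := by
  refine tendsto_const_nhds.congr' ?_
  filter_upwards [Nat.hyperfilter_le_atTop (eventually_gt_atTop 0)] with i hi
  rw [Finset.expect_const (Finset.nonempty_range_iff.2 hi.ne')]

lemma tendsto_const_div_hyperfilter (c : ℝ) :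
    Tendsto (fun i : ℕ => c / i) (hyperfilter ℕ) (𝓝 0) :=
  (tendsto_const_div_atTop_nhds_zero_nat c).mono_left Nat.hyperfilter_le_atTop

lemma expect_range_eq_sum_div (φ : ℕ → ℝ) (i : ℕ) :
    𝔼 j ∈ Finset.range i, φ j = (∑ j ∈ Finset.range i, φ j) / i := by
  rw [Finset.expect_eq_sum_div_card, Finset.card_range]

lemma sum_range_shift_sub (φ : ℕ → ℝ) (i l : ℕ) :
    ∑ j ∈ Finset.range i, (φ (j + l) - φ j) =
      ∑ j ∈ Finset.range l, (φ (i + j) - φ j) := by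
  have hil := Finset.sum_range_add φ i l
  rw [add_comm, Finset.sum_range_add] at hil
  simp only [Finset.sum_sub_distrib, add_comm _ l]
  linarith

lemma HasMean.shift (hf : HasMean f a) (hM : ∀ i j, |f i j| ≤ M) (l : ℕ) :
    HasMean (fun i j => f i (j + l)) a := by
  have hbound : ∀ i : ℕ, |𝔼 j ∈ Finset.range i, (f i (j + l) - f i j)| ≤ l * (2 * M) / i :=
    fun i => by
      rw [expect_range_eq_sum_div, sum_range_shift_sub, abs_div, Nat.abs_cast]
      gcongr
      refine (Finset.abs_sum_le_sum_abs _ _).trans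
        ((Finset.sum_le_card_nsmul _ _ (2 * M) fun j _ => ?_).trans_eq ?_)
      · linarith [abs_sub (f i (i + j)) (f i j), hM i (i + j), hM i j]
      · rw [Finset.card_range, nsmul_eq_mul]
  have hshift : HasMean (fun i j => f i (j + l) - f i j) 0 :=
    squeeze_zero_norm hbound (tendsto_const_div_hyperfilter _)
  simpa only [sub_add_cancel, zero_add] using hshift.add hf

/-- The at most `m` indices in which the bound `b` fails do not contribute to the mean. -/
lemma HasMean.le_of_forall_add_le (hf : HasMean f a) (hM : ∀ i j, f i j ≤ M) (m : ℕ)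
    (hb : ∀ᶠ i in atTop, ∀ j, j + m ≤ i → f i j ≤ b) : a ≤ b := by
  have hlim := (tendsto_const_div_hyperfilter (m * (M - b))).const_add b
  rw [add_zero] at hlim
  refine le_of_tendsto_of_tendsto hf hlim ?_
  filter_upwards [Nat.hyperfilter_le_atTop hb, Nat.hyperfilter_le_atTop (eventually_ge_atTop m),
    Nat.hyperfilter_le_atTop (eventually_gt_atTop 0)] with i hi hmi hi₀
  obtain ⟨k, rfl⟩ := Nat.exists_eq_add_of_le' hmi
  have hfirst : ∑ j ∈ Finset.range k, f (k + m) j ≤ k * b := by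
    simpa using Finset.sum_le_card_nsmul (Finset.range k) (f (k + m)) b fun j hj =>
      hi j (by gcongr; exact (Finset.mem_range.1 hj).le)
  have hlast : ∑ j ∈ Finset.range m, f (k + m) (k + j) ≤ m * M := by
    simpa using Finset.sum_le_card_nsmul (Finset.range m) (fun j => f (k + m) (k + j)) M
      fun j _ => hM _ _
  have hpos : (0 : ℝ) < (k + m : ℕ) := by exact_mod_cast hi₀
  rw [expect_range_eq_sum_div, Finset.sum_range_add, div_le_iff₀ hpos, add_mul,
    div_mul_cancel₀ _ hpos.ne']
  push_cast
  linarith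

end Mean

section SeparatedSequence

/-- Finite subsets `A i` of the square `[-1, 1]²`, separated at scale `2⁻ⁱ` and of growth exponent
at least `β`. -/
structure IsSeparatedSequence (A : ℕ → Finset (ℝ × ℝ)) (c β : ℝ) : Prop where
  abs_le_one : ∀ i, ∀ z ∈ A i, |z.1| ≤ 1 ∧ |z.2| ≤ 1
  le_abs_sub : ∀ i, ∀ z ∈ A i, ∀ z' ∈ A i, z ≠ z' →
    1 / 2 ^ i ≤ |z.1 - z'.1| ∨ 1 / 2 ^ i ≤ |z.2 - z'.2|
  pos : 0 < c
  le_card : ∀ i : ℕ, c * 2 ^ (β * i) ≤ #(A i)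

/-- The mean over the scales of the conditional entropies of the projections `slopeProj t` of the
sets `A i`. -/
def meanProjEntropy (A : ℕ → Finset (ℝ × ℝ)) (t : ℝ) (m : ℕ) : ℝ :=
  mean fun i j => projEntropy (A i) (2 * i) t j m

/-- The mean over the scales of the entropy gained by dividing the side of the dyadic squares by
`2ˡ`. -/
def meanEntropyIncrement (A : ℕ → Finset (ℝ × ℝ)) (l : ℕ) : ℝ :=
  mean fun i j => entropy (dyadicSquares (A i) (2 * i) (j + l)) -
    entropy (dyadicSquares (A i) (2 * i) j)

variable {A : ℕ → Finset (ℝ × ℝ)} {c β t : ℝ}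

lemma IsSeparatedSequence.nonempty (hA : IsSeparatedSequence A c β) (i K : ℕ) :
    Nonempty (ShiftedSpace (A i) K) := by
  have hcard : (0 : ℝ) < #(A i) := (mul_pos hA.pos (by positivity)).trans_le (hA.le_card i)
  obtain ⟨z, hz⟩ := Finset.card_pos.1 (Nat.cast_pos.1 hcard)
  exact ⟨⟨z, hz⟩, 0⟩

lemma IsSeparatedSequence.abs_projEntropy_le (hA : IsSeparatedSequence A c β) (ht : |t| ≤ 1)
    (m i j : ℕ) : |projEntropy (A i) (2 * i) t j m| ≤ (m + 3) * Real.log 2 := by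
  have := hA.nonempty i (2 * i)
  rw [abs_of_nonneg (projEntropy_nonneg t j m)]
  exact projEntropy_le ht j m

lemma IsSeparatedSequence.hasMean_projEntropy (hA : IsSeparatedSequence A c β) (ht : |t| ≤ 1)
    (m : ℕ) :
    HasMean (fun i j => projEntropy (A i) (2 * i) t j m) (meanProjEntropy A t m) :=
  hasMean_mean (hA.abs_projEntropy_le ht m)

lemma IsSeparatedSequence.hasMean_projGain (hA : IsSeparatedSequence A c β) (ht : |t| ≤ 1)
    (n l q : ℕ) : HasMean (fun i j => projGain (A i) (2 * i) t j n l q)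
      ((meanProjEntropy A t (n + l + q) - meanProjEntropy A t (n + l)) -
        (meanProjEntropy A t (n + q) - meanProjEntropy A t n)) :=
  ((hA.hasMean_projEntropy ht _).sub (hA.hasMean_projEntropy ht _)).sub
    (((hA.hasMean_projEntropy ht _).shift (hA.abs_projEntropy_le ht _) l).sub
      ((hA.hasMean_projEntropy ht _).shift (hA.abs_projEntropy_le ht _) l))

lemma IsSeparatedSequence.abs_entropy_increment_le (hA : IsSeparatedSequence A c β) (l i j : ℕ) :
    |entropy (dyadicSquares (A i) (2 * i) (j + l)) - entropy (dyadicSquares (A i) (2 * i) j)| ≤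
      2 * (l * Real.log 2) := by
  have := hA.nonempty i (2 * i)
  rw [abs_of_nonneg (sub_nonneg.2 (entropy_anti (dyadicSquares_add_le j l)))]
  exact entropy_dyadicSquares_add_sub_le j l

lemma IsSeparatedSequence.hasMean_entropy_increment (hA : IsSeparatedSequence A c β) (l : ℕ) :
    HasMean (fun i j => entropy (dyadicSquares (A i) (2 * i) (j + l)) -
      entropy (dyadicSquares (A i) (2 * i) j)) (meanEntropyIncrement A l) :=
  hasMean_mean (hA.abs_entropy_increment_le l)

end SeparatedSequence

section MeanEntropy

variable {A : ℕ → Finset (ℝ × ℝ)} {c β t t' C α : ℝ}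

lemma IsSeparatedSequence.monotone_meanProjEntropy_increment (hA : IsSeparatedSequence A c β)
    (ht : |t| ≤ 1) :
    Monotone fun n => meanProjEntropy A t (n + 1) - meanProjEntropy A t n := by
  refine monotone_nat_of_le_succ fun n => sub_nonpos.1 ?_
  have hmean := ((hasMean_const 0).sub (hA.hasMean_projGain ht n 1 1))
  rw [zero_sub, neg_sub] at hmean
  exact hmean.le_of_forall_add_le (fun i j => sub_nonpos.2 (projGain_nonneg _ _ _ _ _)) 0
    (Eventually.of_forall fun i j _ => sub_nonpos.2 (projGain_nonneg _ _ _ _ _))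

lemma IsSeparatedSequence.meanProjEntropy_le (hA : IsSeparatedSequence A c β) (ht : |t| ≤ 1)
    (hC : 0 < C) (hP : ∀ᶠ i in atTop, ProjBound (A i) t C α (1 / 2 ^ i)) (m : ℕ) :
    meanProjEntropy A t m ≤ Real.log (2 * C) + α * ((m + 1) * Real.log 2) := by
  refine (hA.hasMean_projEntropy ht m).le_of_forall_add_le
    (fun i j => (le_abs_self _).trans (hA.abs_projEntropy_le ht m i j)) m ?_
  filter_upwards [hP] with i hPi j hj
  have := hA.nonempty i (2 * i)
  exact projEntropy_le_of_projBound hC hPi ht hj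

lemma IsSeparatedSequence.le_entropy (hA : IsSeparatedSequence A c β) (i K : ℕ) :
    Real.log c + β * i * Real.log 2 + K * Real.log 2 ≤ entropy (dyadicSquares (A i) K i) := by
  have := hA.nonempty i K
  rw [entropy_dyadicSquares_eq (hA.le_abs_sub i), ← Real.log_rpow two_pos,
    ← Real.log_mul hA.pos.ne' (by positivity)]
  gcongr
  · exact mul_pos hA.pos (by positivity)
  · exact hA.le_card i

lemma IsSeparatedSequence.le_meanEntropyIncrement (hA : IsSeparatedSequence A c β) (l : ℕ) :
    l * (β * Real.log 2) ≤ meanEntropyIncrement A l := by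
  have hlim := (tendsto_const_div_hyperfilter
    (l * (Real.log c - 2 * ((l + 3) * Real.log 2)))).add_const (l * (β * Real.log 2))
  rw [zero_add] at hlim
  refine le_of_tendsto_of_tendsto hlim (hA.hasMean_entropy_increment l) ?_
  filter_upwards [Nat.hyperfilter_le_atTop (eventually_gt_atTop 0)] with i hi
  have := hA.nonempty i (2 * i)
  have hpos : (0 : ℝ) < i := by exact_mod_cast hi
  have hanti : Monotone fun j => entropy (dyadicSquares (A i) (2 * i) j) :=
    monotone_nat_of_le_succ fun j => entropy_anti (dyadicSquares_add_le j 1)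
  have hterm : ∀ j ∈ Finset.range l,
      Real.log c + β * i * Real.log 2 - 2 * ((l + 3) * Real.log 2) ≤
        entropy (dyadicSquares (A i) (2 * i) (i + j)) - entropy (dyadicSquares (A i) (2 * i) j) :=
    fun j hj => by
      have hfine := hanti (Nat.le_add_right i j)
      have hcoarse := hanti (Finset.mem_range.1 hj).le
      linarith [hA.le_entropy i (2 * i), entropy_dyadicSquares_le (K := 2 * i) (hA.abs_le_one i) l]
  have hsum := Finset.card_nsmul_le_sum _ _ _ hterm
  rw [Finset.card_range, nsmul_eq_mul] at hsum
  rw [expect_range_eq_sum_div,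
    sum_range_shift_sub fun j => entropy (dyadicSquares (A i) (2 * i) j), le_div_iff₀ hpos, add_mul,
    div_mul_cancel₀ _ hpos.ne']
  linarith

lemma IsSeparatedSequence.mean_level_inequality (hA : IsSeparatedSequence A c β) (ht : |t| ≤ 1)
    (ht' : |t'| ≤ 1) {θ : ℝ} (hθ : 0 ≤ θ) {n l p q a L : ℕ}
    (hq : q = a + (l + p) + 1)
    (hP : ∀ᶠ i in atTop, ProjBound (A i) t C α (1 / 2 ^ i))
    (hg : 2 ^ (n + q) * (t' - t) ∈ Set.Icc (1 / 2 : ℝ) 1)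
    (hL : 0 < L) (hCL : C * (4 * L) ^ α ≤ L / 2) (hp : 3 ≤ p)
    (hLθ : L * (4 * (2 * √θ / (1 / 2 ^ (2 * (l + p)))) + 32 / 2 ^ p) < 1 / 2) :
    θ * (meanProjEntropy A t (n + p) - meanProjEntropy A t (n + (l + p)) +
        meanEntropyIncrement A l - (2 * Real.log 5 + 3 * Real.log 2)) ≤
      l * Real.log 2 *
        (((meanProjEntropy A t (n + (l + p) + q) - meanProjEntropy A t (n + (l + p))) -
            (meanProjEntropy A t (n + q) - meanProjEntropy A t n)) +
          ((meanProjEntropy A t' (n + (l + p) + q) - meanProjEntropy A t' (n + (l + p))) -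
            (meanProjEntropy A t' (n + q) - meanProjEntropy A t' n)) +
          4 / 2 ^ a * Real.log 3) := by
  have hlower := ((((hA.hasMean_projEntropy ht (n + p)).shift (hA.abs_projEntropy_le ht _) l).sub
    (hA.hasMean_projEntropy ht (n + (l + p)))).add (hA.hasMean_entropy_increment l)).sub
      (hasMean_const (2 * Real.log 5 + 3 * Real.log 2))
  have hupper := ((hA.hasMean_projGain ht n (l + p) q).add
    (hA.hasMean_projGain ht' n (l + p) q)).add (hasMean_const (4 / 2 ^ a * Real.log 3))
  have hmean := (hlower.const_mul θ).sub (hupper.const_mul (l * Real.log 2))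
  rw [← sub_nonpos]
  refine hmean.le_of_forall_add_le
    (M := θ * (((n + p : ℕ) + 3) * Real.log 2 + 2 * (l * Real.log 2))) (fun i j => ?_)
    (n + (l + p) + q) ?_
  · have := hA.nonempty i (2 * i)
    have hlog : 0 ≤ 2 * Real.log 5 + 3 * Real.log 2 := by positivity
    refine (sub_le_self _ (mul_nonneg (by positivity) (add_nonneg (add_nonneg
      (projGain_nonneg _ _ _ _ _) (projGain_nonneg _ _ _ _ _)) (by positivity)))).trans
        (mul_le_mul_of_nonneg_left ?_ hθ)
    linarith [projEntropy_le (A := A i) (K := 2 * i) ht (j + l) (n + p),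
      projEntropy_nonneg (A := A i) (K := 2 * i) t j (n + (l + p)),
      entropy_dyadicSquares_add_sub_le (A := A i) (K := 2 * i) j l]
  · filter_upwards [hP] with i hPi j hj
    have := hA.nonempty i (2 * i)
    rw [sub_nonpos]
    subst hq
    exact level_inequality ht hθ hPi hj (by omega) hg hL hCL hp hLθ

end MeanEntropy

section Increments

variable {F : ℕ → ℝ} {b s : ℝ}

lemma sub_le_mul_of_forall_increment_le {n l : ℕ}
    (h : ∀ j, n ≤ j → F (j + 1) - F j ≤ s) : F (n + l) - F n ≤ l * s := by
  induction l with
  | zero => simp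
  | succ l ih =>
    have := h (n + l) (Nat.le_add_right n l)
    rw [← add_assoc]
    push_cast
    linarith

lemma mul_le_sub_of_forall_le_increment {n l : ℕ}
    (h : ∀ j, n ≤ j → s ≤ F (j + 1) - F j) : l * s ≤ F (n + l) - F n := by
  have := sub_le_mul_of_forall_increment_le (F := -F) (s := -s) (n := n) (l := l) fun j hj => by
    simpa only [Pi.neg_apply, neg_sub_neg, neg_sub] using neg_le_neg (h j hj)
  simp only [Pi.neg_apply] at this
  linarith

lemma increment_le_of_monotone (hF : Monotone fun n => F (n + 1) - F n)
    (hb : ∀ n : ℕ, F n ≤ b + s * n) (k : ℕ) : F (k + 1) - F k ≤ s := by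
  by_contra! hlt
  obtain ⟨l, hl⟩ := exists_nat_gt ((b + s * k - F k) / (F (k + 1) - F k - s))
  rw [div_lt_iff₀ (sub_pos.2 hlt)] at hl
  have hlow := mul_le_sub_of_forall_le_increment (F := F) (s := F (k + 1) - F k)
    (n := k) (l := l) fun j hj => hF hj
  have hupp := hb (k + l)
  push_cast at hupp
  linarith

lemma exists_second_difference_le (hF : Monotone fun n => F (n + 1) - F n)
    (hs : ∀ n, F (n + 1) - F n ≤ s) {ε : ℝ} (hε : 0 < ε) :
    ∃ k, ∀ n, k ≤ n → ∀ l q : ℕ, (F (n + l + q) - F (n + l)) - (F (n + q) - F n) ≤ q * ε := by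
  have hbdd : BddAbove (Set.range fun n => F (n + 1) - F n) := ⟨s, Set.forall_mem_range.2 hs⟩
  obtain ⟨k, hk⟩ := exists_lt_of_lt_ciSup (sub_lt_self (⨆ n, (F (n + 1) - F n)) hε)
  refine ⟨k, fun n hn l q => ?_⟩
  have hupp := sub_le_mul_of_forall_increment_le (n := n + l) (l := q) fun j _ => le_ciSup hbdd j
  have hlow := mul_le_sub_of_forall_le_increment (n := n) (l := q) fun j hj =>
    hk.le.trans (hF (hn.trans hj))
  linarith

end Increments

section Parameters

lemma exists_branching_parameters {α : ℝ} (hα : α < 1) (C : ℝ) :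
    ∃ L p : ℕ, 0 < L ∧ C * (4 * L) ^ α ≤ L / 2 ∧ 3 ≤ p ∧
      ∀ τ > 0, ∃ θ > 0, L * (4 * (2 * √θ / τ) + 32 / 2 ^ p) < 1 / 2 := by
  have hlarge : ∀ᶠ L : ℕ in atTop, 2 * C * 4 ^ α ≤ (L : ℝ) ^ (1 - α) :=
    ((tendsto_rpow_atTop (sub_pos.2 hα)).comp tendsto_natCast_atTop_atTop).eventually_ge_atTop _
  obtain ⟨L, hL, hL₀⟩ := (hlarge.and (eventually_gt_atTop 0)).exists
  have hpos : (0 : ℝ) < L := Nat.cast_pos.2 hL₀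
  have hCL : C * (4 * L) ^ α ≤ L / 2 :=
    calc C * (4 * L) ^ α = 2 * C * 4 ^ α * (L : ℝ) ^ α / 2 := by
          rw [Real.mul_rpow zero_le_four hpos.le]
          ring
      _ ≤ (L : ℝ) ^ (1 - α) * (L : ℝ) ^ α / 2 := by gcongr
      _ = L / 2 := by rw [← Real.rpow_add hpos, sub_add_cancel, Real.rpow_one]
  obtain ⟨p, hp⟩ := pow_unbounded_of_one_lt (256 * L : ℝ) one_lt_two
  have hpL : L * (32 / 2 ^ (p + 3)) ≤ (1 / 8 : ℝ) := by
    rw [← mul_div_assoc, div_le_iff₀ (by positivity), pow_add]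
    linarith
  refine ⟨L, p + 3, hL₀, hCL, by omega, fun τ hτ => ⟨(τ / (64 * L)) ^ 2, by positivity, ?_⟩⟩
  have hsqrt : L * (4 * (2 * (τ / (64 * L)) / τ)) = (1 / 8 : ℝ) := by
    field_simp
    norm_num
  rw [Real.sqrt_sq (by positivity), mul_add, hsqrt]
  linarith

lemma exists_mul_error_lt {M θ : ℝ} (hM : 0 ≤ M) (hθ : 0 < θ) (r : ℕ) :
    ∃ a : ℕ, ∃ ε > 0, M * (2 * ((a + r + 1 : ℕ) * ε) + 4 / 2 ^ a * Real.log 3) < θ := by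
  have hpow : Tendsto (fun a : ℕ => M * (4 / 2 ^ a * Real.log 3)) atTop (𝓝 0) := by
    simpa [div_eq_mul_inv] using (((tendsto_pow_atTop_nhds_zero_of_lt_one
      (inv_nonneg.2 zero_le_two) (inv_lt_one_of_one_lt₀ one_lt_two)).const_mul 4).mul_const
      (Real.log 3)).const_mul M
  obtain ⟨a, ha⟩ := (hpow.eventually_lt_const (half_pos hθ)).exists
  refine ⟨a, θ / (4 * (a + r + 1 : ℕ) * (M + 1)), by positivity, ?_⟩
  have hε : M * (2 * ((a + r + 1 : ℕ) * (θ / (4 * (a + r + 1 : ℕ) * (M + 1))))) =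
      θ / 2 * (M / (M + 1)) := by
    field_simp
    norm_num
  have hM₁ : M / (M + 1) ≤ 1 := div_le_one_of_le₀ (by linarith) (by linarith)
  rw [mul_add, hε]
  nlinarith

lemma exists_two_pow_mul_mem_Icc {δ : ℝ} {k : ℕ} (hδ : 0 < δ) (hk : 2 ^ k * δ < 1) :
    ∃ n, k ≤ n ∧ 2 ^ n * δ ∈ Set.Icc (1 / 2 : ℝ) 1 := by
  rw [← lt_div_iff₀ hδ] at hk
  obtain ⟨n, hn, hn'⟩ := exists_nat_pow_near ((one_le_pow₀ one_le_two).trans hk.le) one_lt_two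
  refine ⟨n, Nat.lt_succ_iff.1 ((pow_lt_pow_iff_right₀ one_lt_two).1 (hk.trans hn')), ?_,
    (le_div_iff₀ hδ).1 hn⟩
  rw [div_lt_iff₀ hδ, pow_succ] at hn'
  linarith

lemma finite_of_forall_le_sub {S : Set ℝ} {η : ℝ} (hη : 0 < η) (hS : ∀ t ∈ S, |t| ≤ 1)
    (hsep : ∀ t ∈ S, ∀ t' ∈ S, t < t' → η ≤ t' - t) : S.Finite := by
  refine Set.Finite.of_injOn (f := fun t => ⌊t / η⌋) (t := Set.Icc ⌊-1 / η⌋ ⌊1 / η⌋)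
    (fun t ht => ?_) (fun t ht t' ht' heq => ?_) (Set.finite_Icc _ _)
  · obtain ⟨hlow, hupp⟩ := abs_le.1 (hS t ht)
    exact ⟨Int.floor_le_floor (by gcongr), Int.floor_le_floor (by gcongr)⟩
  · have hlt := Int.abs_sub_lt_one_of_floor_eq_floor heq
    rw [← sub_div, abs_div, abs_of_pos hη, div_lt_one hη, abs_lt] at hlt
    rcases lt_trichotomy t t' with h | h | h
    · linarith [hsep t ht t' ht' h]
    · exact h
    · linarith [hsep t' ht' t ht h]

end Parameters

section Countability

variable {A : ℕ → Finset (ℝ × ℝ)} {c β C α t : ℝ}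

lemma IsSeparatedSequence.meanProjEntropy_increment_le (hA : IsSeparatedSequence A c β)
    (ht : |t| ≤ 1) (hC : 0 < C) (hP : ∀ᶠ i in atTop, ProjBound (A i) t C α (1 / 2 ^ i)) (n : ℕ) :
    meanProjEntropy A t (n + 1) - meanProjEntropy A t n ≤ α * Real.log 2 :=
  increment_le_of_monotone (b := Real.log (2 * C) + α * Real.log 2)
    (hA.monotone_meanProjEntropy_increment ht)
    (fun m => (hA.meanProjEntropy_le ht hC hP m).trans_eq (by ring)) n

/-- Two close slopes would be separated by a scale at which the second differences of the mean
projection entropies are too small for the entropy gained by intersecting their strips. -/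
lemma IsSeparatedSequence.exists_forall_le_sub (hA : IsSeparatedSequence A c β) (hα : α < 1)
    (hαβ : α < β) (hC : 0 < C) : ∃ ε > 0, ∃ q : ℕ, ∀ k : ℕ, ∀ t t' : ℝ, |t| ≤ 1 → |t'| ≤ 1 →
      (∀ᶠ i in atTop, ProjBound (A i) t C α (1 / 2 ^ i)) →
      (∀ s ∈ ({t, t'} : Set ℝ), ∀ n, k ≤ n → ∀ l q : ℕ,
        (meanProjEntropy A s (n + l + q) - meanProjEntropy A s (n + l)) -
          (meanProjEntropy A s (n + q) - meanProjEntropy A s n) ≤ q * ε) →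
      t < t' → 1 / 2 ^ (k + q) ≤ t' - t := by
  obtain ⟨L, p, hL, hCL, hp, hbranch⟩ := exists_branching_parameters hα C
  have hlog : 0 < (β - α) * Real.log 2 := mul_pos (sub_pos.2 hαβ) (Real.log_pos one_lt_two)
  obtain ⟨l, hl⟩ := exists_nat_ge ((2 * Real.log 5 + 3 * Real.log 2 + 1) / ((β - α) * Real.log 2))
  rw [div_le_iff₀ hlog] at hl
  obtain ⟨θ, hθ, hLθ⟩ := hbranch (1 / 2 ^ (2 * (l + p))) (by positivity)
  have hM : 0 ≤ l * Real.log 2 := by positivity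
  obtain ⟨a, ε, hε, herror⟩ := exists_mul_error_lt hM hθ (l + p)
  refine ⟨ε, hε, a + (l + p) + 1, fun k t t' ht ht' hP hdiff hlt => ?_⟩
  by_contra! hclose
  have hδ : 2 ^ (k + (a + (l + p) + 1)) * (t' - t) < 1 := by
    rwa [lt_div_iff₀' (by positivity)] at hclose
  obtain ⟨N, hN, hg⟩ := exists_two_pow_mul_mem_Icc (sub_pos.2 hlt) hδ
  obtain ⟨n, rfl⟩ := Nat.exists_eq_add_of_le' ((Nat.le_add_left _ k).trans hN)
  have hn : k ≤ n := by omega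
  have hlevel := hA.mean_level_inequality ht ht' hθ.le rfl hP hg hL hCL hp hLθ
  have hslope := sub_le_mul_of_forall_increment_le (n := n + p) (l := l) fun j _ =>
    hA.meanProjEntropy_increment_le ht hC hP j
  rw [add_assoc, add_comm p] at hslope
  have hgain : θ ≤ θ * (meanProjEntropy A t (n + p) - meanProjEntropy A t (n + (l + p)) +
      meanEntropyIncrement A l - (2 * Real.log 5 + 3 * Real.log 2)) := by
    refine le_mul_of_one_le_right hθ.le ?_
    linarith [hA.le_meanEntropyIncrement l]
  refine (hgain.trans hlevel).not_gt (lt_of_le_of_lt ?_ herror)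
  gcongr
  linarith [hdiff t (by simp) n hn (l + p) (a + (l + p) + 1),
    hdiff t' (by simp) n hn (l + p) (a + (l + p) + 1)]

theorem IsSeparatedSequence.countable_setOf_projBound (hA : IsSeparatedSequence A c β)
    (hα : α < 1) (hαβ : α < β) (hC : 0 < C) :
    {t | |t| ≤ 1 ∧ ∀ᶠ i in atTop, ProjBound (A i) t C α (1 / 2 ^ i)}.Countable := by
  obtain ⟨ε, hε, q, hgap⟩ := hA.exists_forall_le_sub hα hαβ hC
  choose! k hk using fun t (ht : |t| ≤ 1 ∧ ∀ᶠ i in atTop, ProjBound (A i) t C α (1 / 2 ^ i)) =>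
    exists_second_difference_le (hA.monotone_meanProjEntropy_increment ht.1)
      (hA.meanProjEntropy_increment_le ht.1 hC ht.2) hε
  have hcover : {t | |t| ≤ 1 ∧ ∀ᶠ i in atTop, ProjBound (A i) t C α (1 / 2 ^ i)} ⊆ ⋃ k₀,
      {t | (|t| ≤ 1 ∧ ∀ᶠ i in atTop, ProjBound (A i) t C α (1 / 2 ^ i)) ∧ k t = k₀} :=
    fun t ht => Set.mem_iUnion.2 ⟨k t, ht, rfl⟩
  refine (Set.countable_iUnion fun k₀ => Set.Finite.countable ?_).mono hcover
  refine finite_of_forall_le_sub (η := 1 / 2 ^ (k₀ + q)) (by positivity) (fun t ht => ht.1.1) ?_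
  rintro t ⟨ht, hkt⟩ t' ⟨ht', hkt'⟩
  refine hgap k₀ t t' ht.1 ht'.1 ht.2 fun s hs => ?_
  rcases hs with rfl | rfl
  · exact hkt ▸ hk s ht
  · exact hkt' ▸ hk s ht'

end Countability

section Nets

variable {X : Type*} [PseudoMetricSpace X] {E : Set X} {r : ℝ}

lemma isSeparated_ofReal_iff (hr : 0 ≤ r) :
    IsSeparated (ENNReal.ofReal r) E ↔ E.Pairwise fun x y => r < dist x y := by
  simp only [IsSeparated, edist_dist, ENNReal.ofReal_lt_ofReal_iff_of_nonneg hr]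

theorem exists_separated_net (hr : 0 ≤ r) {K : ℝ}
    (hK : ∀ B : Finset X, ↑B ⊆ E → (B : Set X).Pairwise (fun x y => r < dist x y) → #B ≤ K) :
    ∃ B : Finset X, ↑B ⊆ E ∧ (B : Set X).Pairwise (fun x y => r < dist x y) ∧
      ∀ x ∈ E, ∃ b ∈ B, dist x b ≤ r := by
  have hpack : packingNumber r.toNNReal E ≤ (⌊K⌋₊ : ℕ∞) := by
    refine iSup₂_le fun S hSE => iSup_le fun hS => ?_
    by_contra! hlt
    obtain ⟨B, hBS, hB⟩ := Set.exists_subset_encard_eq (Order.add_one_le_of_lt hlt)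
    lift B to Finset X using Set.finite_of_encard_eq_coe (k := ⌊K⌋₊ + 1) (by exact_mod_cast hB)
    rw [Set.encard_coe_eq_coe_finsetCard] at hB
    have hle := Nat.le_floor
      (hK B (hBS.trans hSE) ((isSeparated_ofReal_iff hr).1 (hS.subset hBS)))
    have hcard : #B = ⌊K⌋₊ + 1 := by exact_mod_cast hB
    omega
  have htop : packingNumber r.toNNReal E ≠ ⊤ := ne_top_of_le_ne_top (ENat.natCast_ne_top _) hpack
  have hfin : (maximalSeparatedSet r.toNNReal E).Finite := by
    rw [← Set.encard_ne_top_iff, encard_maximalSeparatedSet htop]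
    exact htop
  refine ⟨hfin.toFinset, ?_, ?_, fun x hx => ?_⟩
  · simpa using maximalSeparatedSet_subset
  · rw [hfin.coe_toFinset]
    exact (isSeparated_ofReal_iff hr).1 isSeparated_maximalSeparatedSet
  · obtain ⟨b, hb, hxb⟩ := isCover_maximalSeparatedSet htop hx
    refine ⟨b, hfin.mem_toFinset.2 hb, ?_⟩
    rwa [← edist_le_ofReal hr]

theorem exists_card_le_of_totallyBounded (hE : TotallyBounded E) (hr : 0 < r) :
    ∃ N : ℕ, ∀ B : Finset X, ↑B ⊆ E → (B : Set X).Pairwise (fun x y => r < dist x y) →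
      #B ≤ N := by
  have hr' : (r / 2).toNNReal ≠ 0 := by simpa using hr
  obtain ⟨S, -, hS, hcov⟩ := exists_finite_isCover_of_totallyBounded hr' hE
  refine ⟨S.ncard, fun B hB hsep => ?_⟩
  have htwo : 2 * (r / 2).toNNReal = r.toNNReal := by
    rw [Real.toNNReal_div' zero_le_two, Real.toNNReal_ofNat]
    exact mul_div_cancel₀ _ two_ne_zero
  have hle := calc
    (B : Set X).encard ≤ packingNumber r.toNNReal E :=
      ((isSeparated_ofReal_iff hr.le).2 hsep).encard_le_packingNumber hB
    _ ≤ externalCoveringNumber (r / 2).toNNReal E := by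
      rw [← htwo]
      exact packingNumber_two_mul_le_externalCoveringNumber _ _
    _ ≤ S.encard := hcov.externalCoveringNumber_le_encard
  rw [Set.encard_coe_eq_coe_finsetCard, ← hS.cast_ncard_eq] at hle
  exact_mod_cast hle

end Nets

section SeparationBound

variable {X : Type*} [PseudoMetricSpace X] {E : Set X} {C α ρ R : ℝ}

/-- The form of the Assouad condition used below: a finite subset of `E` with mutual distances in
`[ρ, R]` has at most `C * (R / ρ) ^ α` points. Up to the constant it is equivalent to the covering
condition with exponent `α` in the definition of `assouadDim`. -/
def SeparationBound (E : Set X) (C α : ℝ) : Prop :=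
  ∀ B : Finset X, ↑B ⊆ E → ∀ ρ R, 0 < ρ → ρ ≤ R →
    (B : Set X).Pairwise (fun x y => dist x y ∈ Icc ρ R) → #B ≤ C * (R / ρ) ^ α

lemma SeparationBound.mono {E' : Set X} (hE : SeparationBound E C α) (h : E' ⊆ E) :
    SeparationBound E' C α :=
  fun B hB => hE B (hB.trans h)

lemma SeparationBound.card_le (hE : SeparationBound E C α) {ι : Type*} {I : Finset ι}
    {f : ι → X} (hf : ∀ i ∈ I, f i ∈ E) (hρ : 0 < ρ) (hρR : ρ ≤ R)
    (hsep : (I : Set ι).Pairwise fun i j => dist (f i) (f j) ∈ Icc ρ R) :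
    #I ≤ C * (R / ρ) ^ α := by
  classical
  have hinj : Set.InjOn f I := fun i hi j hj heq => by
    by_contra hne
    have hle := (hsep hi hj hne).1
    rw [heq, dist_self] at hle
    exact hρ.not_ge hle
  rw [← Finset.card_image_of_injOn hinj]
  refine hE _ ?_ ρ R hρ hρR ?_
  · rw [Finset.coe_image]
    exact Set.image_subset_iff.2 hf
  · rw [Finset.coe_image]
    exact hinj.pairwise_image.2 hsep

theorem SeparationBound.exists_cover (hE : SeparationBound E C α) (x : X) (hρ : 0 < ρ)
    (hρR : ρ < R) :
    ∃ 𝒰 : Finset (Set X), (E ∩ closedBall x R ⊆ ⋃ U ∈ 𝒰, U) ∧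
      (∀ U ∈ 𝒰, ediam U ≤ ENNReal.ofReal ρ) ∧ #𝒰 ≤ C * 4 ^ α * (R / ρ) ^ α := by
  classical
  have hR : 0 < R := hρ.trans hρR
  have hcard (B : Finset X) (hB : ↑B ⊆ E ∩ closedBall x R)
      (hsep : (B : Set X).Pairwise fun a b => ρ / 2 < dist a b) :
      #B ≤ C * 4 ^ α * (R / ρ) ^ α := by
    have hle := hE B (hB.trans Set.inter_subset_left) (ρ / 2) (2 * R) (half_pos hρ) (by linarith)
      fun a ha b hb hab => ⟨(hsep ha hb hab).le, by
        linarith [dist_triangle_right a b x, mem_closedBall.1 (hB ha).2,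
          mem_closedBall.1 (hB hb).2]⟩
    rwa [show 2 * R / (ρ / 2) = 4 * (R / ρ) by field_simp; norm_num,
      Real.mul_rpow (by norm_num) (by positivity), ← mul_assoc] at hle
  obtain ⟨B, hB, hsep, hnet⟩ := exists_separated_net (half_pos hρ).le hcard
  refine ⟨B.image fun b => closedBall b (ρ / 2), fun y hy => ?_, fun U hU => ?_, ?_⟩
  · obtain ⟨b, hb, hyb⟩ := hnet y hy
    simp only [Finset.mem_image, Set.mem_iUnion]
    exact ⟨_, ⟨b, hb, rfl⟩, hyb⟩
  · obtain ⟨b, -, rfl⟩ := Finset.mem_image.1 hU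
    refine ediam_le fun y hy z hz => ?_
    rw [edist_le_ofReal hρ.le]
    linarith [dist_triangle_right y z b, mem_closedBall.1 hy, mem_closedBall.1 hz]
  · exact le_trans (by exact_mod_cast Finset.card_image_le) (hcard B hB hsep)

theorem SeparationBound.assouadDim_le (hE : SeparationBound E C α) (hα : 0 ≤ α) (hC : 0 < C) :
    assouadDim E ≤ α :=
  csInf_le ⟨0, fun _ h => h.1⟩
    ⟨hα, C * 4 ^ α, by positivity, fun x _ _ _ hρ hρR => hE.exists_cover x hρ hρR⟩

theorem separationBound_of_cover (hC : 0 ≤ C)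
    (hcov : ∀ x ∈ E, ∀ r R : ℝ, 0 < r → r < R →
      ∃ 𝒰 : Finset (Set X), (E ∩ closedBall x R ⊆ ⋃ U ∈ 𝒰, U) ∧
        (∀ U ∈ 𝒰, ediam U ≤ ENNReal.ofReal r) ∧ #𝒰 ≤ C * (R / r) ^ α) :
    SeparationBound E (C * 2 ^ α) α := by
  intro B hB ρ R hρ hρR hsep
  have hR : 0 < R := hρ.trans_le hρR
  rcases B.eq_empty_or_nonempty with rfl | ⟨b₀, hb₀⟩
  · rw [Finset.card_empty, Nat.cast_zero]
    positivity
  obtain ⟨𝒰, h𝒰, hdiam, hcard⟩ := hcov b₀ (hB hb₀) (ρ / 2) R (half_pos hρ) (by linarith)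
  have hmem (b : X) (hb : b ∈ B) : ∃ U ∈ 𝒰, b ∈ U := by
    have hball : dist b b₀ ≤ R := by
      rcases eq_or_ne b b₀ with rfl | hne
      · rw [dist_self]
        exact hR.le
      · exact (hsep hb hb₀ hne).2
    simpa only [Set.mem_iUnion, exists_prop] using h𝒰 ⟨hB hb, hball⟩
  choose! f hf hfmem using hmem
  have hinj : Set.InjOn f B := fun a ha b hb hab => by
    by_contra hne
    have hle := (edist_le_ediam_of_mem (hfmem a ha) (hab ▸ hfmem b hb)).trans (hdiam _ (hf a ha))
    rw [edist_le_ofReal (half_pos hρ).le] at hle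
    linarith [(hsep ha hb hne).1]
  calc (#B : ℝ) ≤ #𝒰 := by exact_mod_cast Finset.card_le_card_of_injOn f hf hinj
    _ ≤ C * (R / (ρ / 2)) ^ α := hcard
    _ = C * 2 ^ α * (R / ρ) ^ α := by
      rw [show R / (ρ / 2) = 2 * (R / ρ) by field_simp,
        Real.mul_rpow zero_le_two (by positivity), mul_assoc]

theorem separationBound_univ_real : SeparationBound (univ : Set ℝ) 2 1 := by
  intro B _ ρ R hρ hρR hsep
  rw [Real.rpow_one]
  have hR : 0 < R := hρ.trans_le hρR
  rcases B.eq_empty_or_nonempty with rfl | hB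
  · rw [Finset.card_empty, Nat.cast_zero]
    positivity
  set m := B.min' hB
  have hm (b : ℝ) (hb : b ∈ B) : 0 ≤ (b - m) / ρ ∧ (b - m) / ρ ≤ R / ρ := by
    refine ⟨div_nonneg (sub_nonneg.2 (B.min'_le b hb)) hρ.le, ?_⟩
    gcongr
    rcases eq_or_ne b m with h | hne
    · rw [h, sub_self]
      exact hR.le
    · exact (le_abs_self _).trans (hsep hb (B.min'_mem hB) hne).2
  have hinj : Set.InjOn (fun b => ⌊(b - m) / ρ⌋₊) B := fun a ha b hb hab => by
    by_contra hne
    have hlt : |(a - m) / ρ - (b - m) / ρ| < 1 := by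
      rw [abs_sub_lt_iff]
      have hab' : (⌊(a - m) / ρ⌋₊ : ℝ) = ⌊(b - m) / ρ⌋₊ := by exact_mod_cast hab
      constructor <;> linarith [Nat.floor_le (hm a ha).1, Nat.floor_le (hm b hb).1,
        Nat.lt_floor_add_one ((a - m) / ρ), Nat.lt_floor_add_one ((b - m) / ρ)]
    rw [← sub_div, sub_sub_sub_cancel_right, abs_div, abs_of_pos hρ, div_lt_one hρ] at hlt
    exact hlt.not_ge (hsep ha hb hne).1
  have hcard : #B ≤ ⌊R / ρ⌋₊ + 1 := by
    rw [← Finset.card_range (⌊R / ρ⌋₊ + 1)]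
    exact Finset.card_le_card_of_injOn _ (fun b hb =>
      Finset.mem_coe.2 (Finset.mem_range_succ_iff.2 (Nat.floor_le_floor (hm b hb).2))) hinj
  calc (#B : ℝ) ≤ ⌊R / ρ⌋₊ + 1 := by exact_mod_cast hcard
    _ ≤ 2 * (R / ρ) := by
      linarith [Nat.floor_le (show 0 ≤ R / ρ by positivity), (one_le_div hρ).2 hρR]

theorem exists_separationBound_of_assouadDim_lt {E : Set ℝ} {a : ℝ} (h : assouadDim E < a) :
    ∃ α, 0 ≤ α ∧ α < a ∧ ∃ C > 0, SeparationBound E C α := by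
  rw [assouadDim] at h
  obtain ⟨α, ⟨hα, C, hC, hcov⟩, hαa⟩ := exists_lt_of_csInf_lt (by
    exact ⟨1, zero_le_one, 2 * 4 ^ (1 : ℝ), by norm_num, fun x _ _ _ hr hrR =>
      (separationBound_univ_real.mono (subset_univ E)).exists_cover x hr hrR⟩) h
  exact ⟨α, hα, hαa, C * 2 ^ α, by positivity, separationBound_of_cover hC.le hcov⟩

end SeparationBound

section BlowUps

variable {X : Type*} [PseudoMetricSpace X] {B : Finset X} {s β : ℝ}

theorem exists_densest_ball (hB : B.Nonempty) (hs : 0 < s) (hβ : 0 ≤ β) :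
    ∃ b ∈ B, ∃ ρ₀ ≥ s, ∀ b' ∈ B, ∀ ρ ≥ s,
      #{z ∈ B | dist z b' ≤ ρ} ≤ 2 * #{z ∈ B | dist z b ≤ ρ₀} * (ρ / ρ₀) ^ β := by
  set density : X × ℝ → ℝ := fun q => #{z ∈ B | dist z q.1 ≤ q.2} / q.2 ^ β
  have hbdd : BddAbove (density '' (B ×ˢ Ici s)) := by
    refine ⟨#B / s ^ β, ?_⟩
    rintro _ ⟨⟨b, ρ⟩, ⟨-, hρ⟩, rfl⟩
    have hle : s ^ β ≤ ρ ^ β := Real.rpow_le_rpow hs.le hρ hβ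
    exact div_le_div₀ (by positivity) (by exact_mod_cast Finset.card_filter_le _ _)
      (by positivity) hle
  obtain ⟨b₁, hb₁⟩ := hB
  have hmem : density (b₁, s) ∈ density '' (B ×ˢ Ici s) :=
    Set.mem_image_of_mem _ ⟨hb₁, Set.self_mem_Ici⟩
  have hpos : 0 < density (b₁, s) := by
    have hcard : 0 < #{z ∈ B | dist z b₁ ≤ s} :=
      Finset.card_pos.2 ⟨b₁, by simpa [hb₁] using hs.le⟩
    positivity
  obtain ⟨_, ⟨⟨b, ρ₀⟩, ⟨hb, hρ₀⟩, rfl⟩, hlt⟩ := exists_lt_of_lt_csSup ⟨_, hmem⟩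
    (half_lt_self (hpos.trans_le (le_csSup hbdd hmem)))
  refine ⟨b, hb, ρ₀, hρ₀, fun b' hb' ρ hρ => ?_⟩
  have hρ₀' : 0 < ρ₀ := hs.trans_le hρ₀
  have hρ' : 0 < ρ := hs.trans_le hρ
  have hle : density (b', ρ) ≤ 2 * density (b, ρ₀) := by
    linarith [le_csSup hbdd (Set.mem_image_of_mem density
      (show (b', ρ) ∈ (B : Set X) ×ˢ Ici s from ⟨hb', hρ⟩))]
  rw [div_le_iff₀ (by positivity)] at hle
  refine hle.trans_eq ?_
  rw [Real.div_rpow hρ'.le hρ₀'.le]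
  ring

theorem exists_crowded_densest_ball {E : Set X} (hβ : 0 ≤ β) (h : β < assouadDim E) (N : ℕ) :
    ∃ B : Finset X, ↑B ⊆ E ∧ ∃ s > 0, (B : Set X).Pairwise (fun x y => s ≤ dist x y) ∧
      ∃ b, ∃ ρ₀ ≥ s, N < #{z ∈ B | dist z b ≤ ρ₀} ∧ ∀ b' ∈ B, ∀ ρ ≥ s,
        #{z ∈ B | dist z b' ≤ ρ} ≤ 2 * #{z ∈ B | dist z b ≤ ρ₀} * (ρ / ρ₀) ^ β := by
  have hE : ¬ SeparationBound E (2 * (N + 1)) β := fun hE =>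
    h.not_ge (hE.assouadDim_le hβ (by positivity))
  simp only [SeparationBound, not_forall, not_le] at hE
  obtain ⟨B, hBE, s, R, hs, hsR, hsep, hcard⟩ := hE
  have hR : 0 < R := hs.trans_le hsR
  have hBpos : (0 : ℝ) < #B := lt_of_le_of_lt (by positivity) hcard
  have hB : B.Nonempty := Finset.card_pos.1 (by exact_mod_cast hBpos)
  obtain ⟨b, hb, ρ₀, hρ₀, hdense⟩ := exists_densest_ball hB hs hβ
  have hρ₀' : 0 < ρ₀ := hs.trans_le hρ₀
  refine ⟨B, hBE, s, hs, fun x hx y hy hxy => (hsep hx hy hxy).1, b, ρ₀, hρ₀, ?_, hdense⟩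
  have hall : {z ∈ B | dist z b ≤ R} = B := Finset.filter_true_of_mem fun z hz => by
    rcases eq_or_ne z b with rfl | hne
    · rw [dist_self]
      exact hR.le
    · exact (hsep hz hb hne).2
  have hle : 2 * (N + 1) * (R / s) ^ β < 2 * #{z ∈ B | dist z b ≤ ρ₀} * (R / s) ^ β := calc
    2 * (N + 1) * (R / s) ^ β < #B := hcard
    _ ≤ 2 * #{z ∈ B | dist z b ≤ ρ₀} * (R / ρ₀) ^ β := by
      simpa only [hall] using hdense b hb R hsR
    _ ≤ 2 * #{z ∈ B | dist z b ≤ ρ₀} * (R / s) ^ β := by gcongr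
  have hlt := lt_of_mul_lt_mul_right hle (by positivity)
  exact_mod_cast (show (N : ℝ) < #{z ∈ B | dist z b ≤ ρ₀} by linarith)

lemma card_dist_le_of_forall_mem {δ K : ℝ} (hδ : 0 < δ) (hK : 0 ≤ K)
    (hB : ∀ b ∈ B, ∀ ρ ≥ δ, #{z ∈ B | dist z b ≤ ρ} ≤ K * ρ ^ β) (x : X) {ρ : ℝ}
    (hρ : δ ≤ ρ) : #{z ∈ B | dist z x ≤ ρ} ≤ K * 2 ^ β * ρ ^ β := by
  have hρ' : 0 < ρ := hδ.trans_le hρ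
  rcases ({z ∈ B | dist z x ≤ ρ} : Finset X).eq_empty_or_nonempty with hempty | ⟨b, hb⟩
  · rw [hempty, Finset.card_empty, Nat.cast_zero]
    positivity
  obtain ⟨hb, hbx⟩ := Finset.mem_filter.1 hb
  calc (#{z ∈ B | dist z x ≤ ρ} : ℝ) ≤ #{z ∈ B | dist z b ≤ 2 * ρ} := by
        exact_mod_cast Finset.card_le_card (Finset.monotone_filter_right B fun z _ hz => by
          linarith [dist_triangle_right z b x])
    _ ≤ K * (2 * ρ) ^ β := hB b hb _ (by linarith)
    _ = K * 2 ^ β * ρ ^ β := by rw [Real.mul_rpow zero_le_two hρ'.le, mul_assoc]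

variable {V : Type*} [NormedAddCommGroup V] [NormedSpace ℝ V]

lemma dist_inv_smul_sub {l : ℝ} (hl : 0 < l) (b z w : V) :
    dist (l⁻¹ • (z - b)) (l⁻¹ • (w - b)) = dist z w / l := by
  rw [dist_smul₀, dist_sub_right, norm_inv, Real.norm_of_nonneg hl.le, div_eq_inv_mul]

lemma card_image_inv_smul_sub [DecidableEq V] (A : Finset V) {l : ℝ} (hl : 0 < l) (b : V) :
    #(A.image fun z => l⁻¹ • (z - b)) = #A :=
  Finset.card_image_of_injective _
    ((smul_right_injective V (inv_ne_zero hl.ne')).comp (sub_left_injective (b := b)))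

lemma card_filter_image_inv_smul_sub [DecidableEq V] (A : Finset V) {l : ℝ} (hl : 0 < l)
    (b w : V) (ρ : ℝ) :
    #{z ∈ A.image fun z => l⁻¹ • (z - b) | dist z (l⁻¹ • (w - b)) ≤ ρ} =
      #{z ∈ A | dist z w ≤ l * ρ} := by
  simp only [Finset.filter_image, card_image_inv_smul_sub _ hl, dist_inv_smul_sub hl,
    div_le_iff₀' hl]

lemma coe_image_inv_smul_sub_subset [DecidableEq V] {A : Finset V} {l : ℝ} (hl : 0 < l) {b : V}
    (hA : ↑A ⊆ closedBall b l) :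
    ↑(A.image fun z => l⁻¹ • (z - b)) ⊆ closedBall (0 : V) 1 := by
  rw [Finset.coe_image, Set.image_subset_iff]
  intro z hz
  rw [Set.mem_preimage, mem_closedBall, ← smul_zero l⁻¹, ← sub_self b, dist_inv_smul_sub hl]
  exact div_le_one_of_le₀ (hA hz) hl.le

lemma separation_lt_mul_of_card_lt {A : Finset V} {l δ : ℝ} {N : ℕ} {b : V} (hl : 0 < l)
    (hδ : 0 < δ) (hA : ↑A ⊆ closedBall b l) (hs : (A : Set V).Pairwise fun x y => s ≤ dist x y)
    (hN : ∀ B : Finset V, ↑B ⊆ closedBall (0 : V) 1 →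
      (B : Set V).Pairwise (fun x y => δ / 2 < dist x y) → #B ≤ N) (hcard : N < #A) :
    s < l * δ := by
  classical
  by_contra! hδs
  refine hcard.not_ge (card_image_inv_smul_sub A hl b ▸
    hN _ (coe_image_inv_smul_sub_subset hl hA) ?_)
  rw [Finset.coe_image]
  rintro _ ⟨z, hz, rfl⟩ _ ⟨w, hw, rfl⟩ hne
  rw [dist_inv_smul_sub hl, lt_div_iff₀' hl]
  linarith [mul_pos hl hδ, hs hz hw fun heq => hne (by rw [heq])]

theorem exists_regular_blowup [ProperSpace V] {F : Set V} (hβ : 0 ≤ β) (h : β < assouadDim F)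
    {δ : ℝ} (hδ : 0 < δ) :
    ∃ A : Finset V, A.Nonempty ∧ ↑A ⊆ closedBall (0 : V) 1 ∧
      (∃ b : V, ∃ l : ℝ, 0 < l ∧ ∀ z ∈ A, b + l • z ∈ F) ∧
      ∀ x, ∀ ρ ≥ δ, #{z ∈ A | dist z x ≤ ρ} ≤ 2 * 2 ^ β * #A * ρ ^ β := by
  classical
  obtain ⟨N, hN⟩ := exists_card_le_of_totallyBounded
    (isCompact_closedBall (0 : V) 1).totallyBounded (half_pos hδ)
  obtain ⟨B, hBF, s, hs, hsep, b, l, hsl, hcrowded, hdense⟩ :=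
    exists_crowded_densest_ball hβ h N
  have hl : 0 < l := hs.trans_le hsl
  set B' : Finset V := {z ∈ B | dist z b ≤ l}
  have hB' : B' ⊆ B := Finset.filter_subset _ _
  have hB'b : ↑B' ⊆ closedBall b l := fun z hz => (Finset.mem_filter.1 hz).2
  have hsδ : s < l * δ := separation_lt_mul_of_card_lt hl hδ hB'b
    (hsep.mono (Finset.coe_subset.2 hB')) hN hcrowded
  have hcard := card_image_inv_smul_sub B' hl b
  refine ⟨B'.image fun z => l⁻¹ • (z - b), ?_, coe_image_inv_smul_sub_subset hl hB'b,
    ⟨b, l, hl, Finset.forall_mem_image.2 fun z hz => ?_⟩, fun x ρ hρ => ?_⟩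
  · exact Finset.card_pos.1 (hcard ▸ N.zero_le.trans_lt hcrowded)
  · rw [smul_inv_smul₀ hl.ne', add_sub_cancel]
    exact hBF (hB' hz)
  · rw [mul_right_comm (2 : ℝ)]
    refine card_dist_le_of_forall_mem hδ (by positivity)
      (Finset.forall_mem_image.2 fun w hw ρ hρ => ?_) x hρ
    rw [card_filter_image_inv_smul_sub B' hl, hcard]
    have hmono : #{z ∈ B' | dist z w ≤ l * ρ} ≤ #{z ∈ B | dist z w ≤ l * ρ} :=
      Finset.card_le_card (Finset.filter_subset_filter _ hB')
    have hcount := hdense w (hB' hw) (l * ρ) (hsδ.le.trans (by gcongr))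
    rw [mul_div_cancel_left₀ _ hl.ne'] at hcount
    exact le_trans (by exact_mod_cast hmono) hcount

end BlowUps

section FrostmanTangents

/-- The Frostman condition: `μ` gives closed balls of radius `r` mass at most `C * r ^ β`. -/
def IsFrostman {X : Type*} [PseudoMetricSpace X] [MeasurableSpace X] (μ : Measure X)
    (C β : ℝ) : Prop :=
  ∀ x r, 0 < r → μ (closedBall x r) ≤ ENNReal.ofReal (C * r ^ β)

/-- The metric content of `E` being a subset of a weak tangent of `F`: every finite subset of `E`
has a copy in `F` which is similar to it up to an arbitrarily small relative error. -/
def IsWeakTangent {X Y : Type*} [PseudoMetricSpace X] [PseudoMetricSpace Y] (E : Set X)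
    (F : Set Y) : Prop :=
  ∀ S : Finset X, ↑S ⊆ E → ∀ ε > 0, ∃ l : ℝ, 0 < l ∧ ∃ φ : X → Y,
    (∀ u ∈ S, φ u ∈ F) ∧ ∀ u ∈ S, ∀ v ∈ S, |dist (φ u) (φ v) - l * dist u v| ≤ ε * l

/-- The uniform distribution on a nonempty finite set. -/
def uniformProbability {X : Type*} [MeasurableSpace X] (A : Finset X) (hA : A.Nonempty) :
    ProbabilityMeasure X :=
  ⟨(PMF.uniformOfFinset A hA).toMeasure, inferInstance⟩

open Classical in
lemma uniformProbability_apply {X : Type*} [MeasurableSpace X] {A : Finset X} (hA : A.Nonempty)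
    {t : Set X} (ht : MeasurableSet t) :
    (uniformProbability A hA : Measure X) t = #{z ∈ A | z ∈ t} / #A :=
  PMF.toMeasure_uniformOfFinset_apply hA t ht

lemma uniformProbability_eq_zero_iff {X : Type*} [MeasurableSpace X] {A : Finset X}
    (hA : A.Nonempty) {t : Set X} (ht : MeasurableSet t) :
    (uniformProbability A hA : Measure X) t = 0 ↔ ∀ z ∈ A, z ∉ t := by
  simp only [uniformProbability_apply hA ht, ENNReal.div_eq_zero_iff, Nat.cast_eq_zero,
    Finset.card_eq_zero, Finset.filter_eq_empty_iff, ENNReal.natCast_ne_top, or_false]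

variable {X : Type*} [MetricSpace X] [MeasurableSpace X] [BorelSpace X] {C β : ℝ}

theorem exists_tendsto_hyperfilter_of_isCompact {ν : ℕ → ProbabilityMeasure X} {K : Set X}
    (hK : IsCompact K) (hν : ∀ n, (ν n : Measure X) Kᶜ = 0) :
    ∃ μ, Tendsto ν (hyperfilter ℕ) (𝓝 μ) := by
  have htight : IsTightMeasureSet {(μ : Measure X) | μ ∈ range ν} := by
    rw [isTightMeasureSet_iff_exists_isCompact_measure_compl_le]
    refine fun ε _ => ⟨K, hK, ?_⟩
    rintro _ ⟨_, ⟨n, rfl⟩, rfl⟩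
    exact (hν n).trans_le zero_le
  obtain ⟨μ, -, hμ⟩ := (isCompact_closure_of_isTightMeasureSet htight).ultrafilter_le_nhds
    ((hyperfilter ℕ).map ν) (le_principal_iff.2
      (mem_of_superset (Filter.mem_map.2 (univ_mem' mem_range_self)) subset_closure))
  exact ⟨μ, hμ⟩

variable {l : Filter ℕ} {A : ℕ → Finset X} {hA : ∀ n, (A n).Nonempty}
  {μ : ProbabilityMeasure X}

theorem isFrostman_of_tendsto_uniformProbability [l.NeBot]
    (hμ : Tendsto (fun n => uniformProbability (A n) (hA n)) l (𝓝 μ))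
    {δ : ℕ → ℝ} (hδ : Tendsto δ l (𝓝 0))
    (hreg : ∀ n x, ∀ ρ ≥ δ n, #{z ∈ A n | dist z x ≤ ρ} ≤ C * #(A n) * ρ ^ β) :
    IsFrostman (μ : Measure X) (C * 2 ^ β) β := by
  classical
  intro x r hr
  have hball : (μ : Measure X) (ball x (2 * r)) ≤ ENNReal.ofReal (C * (2 * r) ^ β) := by
    refine (ProbabilityMeasure.le_liminf_measure_open_of_tendsto hμ isOpen_ball).trans
      (liminf_le_of_frequently_le' (Eventually.frequently ?_))
    filter_upwards [hδ.eventually (gt_mem_nhds (show 0 < 2 * r by positivity))] with n hn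
    have hpos : (0 : ℝ) < #(A n) := by exact_mod_cast (hA n).card_pos
    have hmono : #{z ∈ A n | z ∈ ball x (2 * r)} ≤ #{z ∈ A n | dist z x ≤ 2 * r} :=
      Finset.card_le_card (Finset.monotone_filter_right _ fun z _ hz => (mem_ball.1 hz).le)
    rw [uniformProbability_apply (hA n) measurableSet_ball,
      ENNReal.div_le_iff (by exact_mod_cast hpos.ne') (by simp), ← ENNReal.ofReal_natCast,
      ← ENNReal.ofReal_natCast, ← ENNReal.ofReal_mul' hpos.le, mul_right_comm]
    exact ENNReal.ofReal_le_ofReal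
      (le_trans (by exact_mod_cast hmono) (hreg n x (2 * r) hn.le))
  calc (μ : Measure X) (closedBall x r) ≤ (μ : Measure X) (ball x (2 * r)) :=
        measure_mono (closedBall_subset_ball (by linarith))
    _ ≤ ENNReal.ofReal (C * (2 * r) ^ β) := hball
    _ = ENNReal.ofReal (C * 2 ^ β * r ^ β) := by
      rw [Real.mul_rpow zero_le_two hr.le, mul_assoc]

theorem eventually_exists_dist_lt_of_mem_support
    (hμ : Tendsto (fun n => uniformProbability (A n) (hA n)) l (𝓝 μ)) {u : X}
    (hu : u ∈ (μ : Measure X).support) {ε : ℝ} (hε : 0 < ε) :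
    ∀ᶠ n in l, ∃ z ∈ A n, dist z u < ε := by
  have hpos : 0 < (μ : Measure X) (ball u ε) :=
    (Measure.mem_support_iff_forall u).1 hu _ (ball_mem_nhds u hε)
  filter_upwards [eventually_lt_of_lt_liminf (hpos.trans_le
    (ProbabilityMeasure.le_liminf_measure_open_of_tendsto hμ isOpen_ball))] with n hn
  by_contra! hfar
  exact hn.ne' ((uniformProbability_eq_zero_iff (hA n) measurableSet_ball).2 fun z hz =>
    (hfar z hz).not_gt)

variable {V : Type*} [NormedAddCommGroup V] [NormedSpace ℝ V]

lemma isWeakTangent_of_blowups {E F : Set V} {A : ℕ → Finset V}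
    (hAF : ∀ n, ∃ b : V, ∃ l : ℝ, 0 < l ∧ ∀ z ∈ A n, b + l • z ∈ F) {f : Filter ℕ} [f.NeBot]
    (hE : ∀ u ∈ E, ∀ ε > 0, ∀ᶠ n in f, ∃ z ∈ A n, dist z u < ε) : IsWeakTangent E F := by
  intro S hS ε hε
  obtain ⟨n, hn⟩ := (S.eventually_all.2 fun u hu => hE u (hS hu) _ (half_pos hε)).exists
  obtain ⟨b, l, hl, hbl⟩ := hAF n
  choose! ψ hψ hψu using hn
  refine ⟨l, hl, fun u => b + l • ψ u, fun u hu => hbl _ (hψ u hu), fun u hu v hv => ?_⟩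
  have hle : |dist (ψ u) (ψ v) - dist u v| ≤ ε := by
    have h := dist_dist_dist_le (ψ u) (ψ v) u v
    rw [Real.dist_eq] at h
    linarith [hψu u hu, hψu v hv]
  calc |dist (b + l • ψ u) (b + l • ψ v) - l * dist u v|
      = |dist (ψ u) (ψ v) - dist u v| * l := by
        rw [dist_add_left, dist_smul₀, Real.norm_of_nonneg hl.le, ← mul_sub, abs_mul,
          abs_of_pos hl, mul_comm]
    _ ≤ ε * l := by gcongr

theorem exists_frostman_weakTangent [ProperSpace V] [MeasurableSpace V] [BorelSpace V]
    {F : Set V} {β : ℝ} (hβ : 0 ≤ β) (h : β < assouadDim F) :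
    ∃ μ : Measure V, IsProbabilityMeasure μ ∧ Bornology.IsBounded μ.support ∧
      (∃ C, IsFrostman μ C β) ∧ IsWeakTangent μ.support F := by
  choose A hA hA₁ hAF hreg using fun n : ℕ =>
    exists_regular_blowup hβ h (δ := 1 / ((n : ℝ) + 1)) (by positivity)
  obtain ⟨μ, hμ⟩ := exists_tendsto_hyperfilter_of_isCompact
    (ν := fun n => uniformProbability (A n) (hA n)) (isCompact_closedBall (0 : V) 1) fun n =>
      (uniformProbability_eq_zero_iff _ measurableSet_closedBall.compl).2 fun z hz =>
        not_not_intro (hA₁ n hz)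
  have hnear (u : V) (hu : u ∈ (μ : Measure V).support) (ε : ℝ) (hε : ε > 0) :=
    eventually_exists_dist_lt_of_mem_support hμ hu hε
  refine ⟨μ, inferInstance, ?_, ⟨2 * 2 ^ β * 2 ^ β, ?_⟩,
    isWeakTangent_of_blowups hAF hnear⟩
  · refine (isBounded_closedBall (x := (0 : V)) (r := 2)).subset fun u hu => ?_
    obtain ⟨n, z, hz, hzu⟩ := (hnear u hu 1 one_pos).exists
    rw [mem_closedBall]
    linarith [dist_triangle_left u 0 z, mem_closedBall.1 (hA₁ n hz)]
  · exact isFrostman_of_tendsto_uniformProbability hμ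
      (tendsto_one_div_add_atTop_nhds_zero_nat.mono_left Nat.hyperfilter_le_atTop) hreg

end FrostmanTangents

section WeakTangents

variable {C α : ℝ}

lemma dist_mem_Icc_of_abs_sub_mul_le {a b u v l ρ R : ℝ} (hl : 0 < l) (hab : dist a b ∈ Icc ρ R)
    (hu : |u - l * a| ≤ ρ / 4 * l) (hv : |v - l * b| ≤ ρ / 4 * l) :
    dist u v ∈ Icc (l * (ρ / 2)) (l * (2 * R)) := by
  have hsub : |(u - v) - l * (a - b)| ≤ l * (ρ / 2) := by
    calc |(u - v) - l * (a - b)| = |(u - l * a) - (v - l * b)| := by ring_nf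
      _ ≤ |u - l * a| + |v - l * b| := abs_sub _ _
      _ ≤ l * (ρ / 2) := by linarith
  have hdist : |dist u v - l * dist a b| ≤ l * (ρ / 2) := by
    rw [Real.dist_eq, Real.dist_eq, ← abs_of_pos hl, ← abs_mul, abs_of_pos hl]
    exact (abs_abs_sub_abs_le _ _).trans hsub
  obtain ⟨hρ, hR⟩ := hab
  obtain ⟨hlower, hupper⟩ := abs_le.1 hdist
  constructor <;> nlinarith

theorem IsWeakTangent.separationBound_distSet {m n : ℕ} {E : Set (Euc m)} {F : Set (Euc n)}
    (hEF : IsWeakTangent E F) (hF : SeparationBound (distSet F) C α) :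
    SeparationBound (distSet E) (C * 4 ^ α) α := by
  classical
  intro B hB ρ R hρ hρR hsep
  have hdist (d : ℝ) (hd : d ∈ B) : ∃ x ∈ E, ∃ y ∈ E, d = dist x y := hB hd
  choose! p hp q hq hpq using hdist
  obtain ⟨l, hl, φ, hφ, hφd⟩ := hEF (B.image p ∪ B.image q) (by
    simp only [Finset.coe_union, Finset.coe_image, union_subset_iff, image_subset_iff]
    exact ⟨hp, hq⟩) (ρ / 4) (by positivity)
  have hpS (d : ℝ) (hd : d ∈ B) : p d ∈ B.image p ∪ B.image q :=
    Finset.mem_union_left _ (Finset.mem_image_of_mem _ hd)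
  have hqS (d : ℝ) (hd : d ∈ B) : q d ∈ B.image p ∪ B.image q :=
    Finset.mem_union_right _ (Finset.mem_image_of_mem _ hd)
  have happrox (d : ℝ) (hd : d ∈ B) : |dist (φ (p d)) (φ (q d)) - l * d| ≤ ρ / 4 * l := by
    have h := hφd _ (hpS d hd) _ (hqS d hd)
    rwa [← hpq d hd] at h
  calc (#B : ℝ) ≤ C * (l * (2 * R) / (l * (ρ / 2))) ^ α :=
        hF.card_le (f := fun d => dist (φ (p d)) (φ (q d)))
          (fun d hd => ⟨_, hφ _ (hpS d hd), _, hφ _ (hqS d hd), rfl⟩) (by positivity)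
          (by gcongr; linarith) fun a ha b hb hab =>
            dist_mem_Icc_of_abs_sub_mul_le hl (hsep ha hb hab) (happrox a ha) (happrox b hb)
    _ = C * 4 ^ α * (R / ρ) ^ α := by
      rw [show l * (2 * R) / (l * (ρ / 2)) = 4 * (R / ρ) by field_simp; ring,
        Real.mul_rpow (by norm_num) (div_nonneg (hρ.le.trans hρR) hρ.le), mul_assoc]

end WeakTangents

section FrostmanMeasures

lemma measure_eq_zero_of_forall_le_rpow {X : Type*} [MeasurableSpace X] {μ : Measure X} {P : Set X}
    {C γ : ℝ} (hγ : 0 < γ)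
    (h : ∀ r, 0 < r → r ≤ 1 → μ P ≤ ENNReal.ofReal (C * r ^ γ)) : μ P = 0 := by
  have hlim : Tendsto (fun r : ℝ => ENNReal.ofReal (C * r ^ γ)) (𝓝[>] 0) (𝓝 0) := by
    have hcont : Continuous fun r : ℝ => ENNReal.ofReal (C * r ^ γ) :=
      ENNReal.continuous_ofReal.comp
        (continuous_const.mul (Real.continuous_rpow_const hγ.le))
    simpa [Real.zero_rpow hγ.ne'] using (hcont.tendsto 0).mono_left nhdsWithin_le_nhds
  refine le_antisymm (ge_of_tendsto hlim ?_) zero_le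
  filter_upwards [Ioc_mem_nhdsGT one_pos] with r hr using h r hr.1 hr.2

variable {X : Type*} [PseudoMetricSpace X] [MeasurableSpace X] {μ : Measure X} {P : Set X}
  {C C₁ α β : ℝ}

lemma measure_le_ofReal_mul_of_cover {B : Finset X} {r N : ℝ} {m : ℝ≥0∞}
    (hcov : ∀ x ∈ P, ∃ b ∈ B, dist x b ≤ r) (hball : ∀ b ∈ B, μ (closedBall b r) ≤ m)
    (hN : #B ≤ N) : μ P ≤ ENNReal.ofReal N * m :=
  calc μ P ≤ μ (⋃ b ∈ B, closedBall b r) := measure_mono fun x hx => by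
        simpa only [mem_iUnion, mem_closedBall, exists_prop] using hcov x hx
    _ ≤ ∑ b ∈ B, μ (closedBall b r) := measure_biUnion_finset_le _ _
    _ ≤ #B • m := Finset.sum_le_card_nsmul _ _ _ hball
    _ ≤ ENNReal.ofReal N * m := by
      rw [nsmul_eq_mul, ← ENNReal.ofReal_natCast]
      gcongr

theorem IsFrostman.measure_eq_zero_of_separationBound (hμ : IsFrostman μ C β) (hαβ : α < β)
    (hP : SeparationBound P C₁ α) (hbdd : Bornology.IsBounded P) : μ P = 0 := by
  obtain ⟨M, hM, hPM⟩ : ∃ M, 1 ≤ M ∧ ∀ x ∈ P, ∀ y ∈ P, dist x y ≤ M := by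
    obtain ⟨M, hPM⟩ := Metric.isBounded_iff.1 hbdd
    exact ⟨max 1 M, le_max_left _ _, fun x hx y hy => (hPM hx hy).trans (le_max_right _ _)⟩
  refine measure_eq_zero_of_forall_le_rpow (C := C₁ * M ^ α * C) (sub_pos.2 hαβ)
    fun r hr hr₁ => ?_
  have hcard (B : Finset X) (hB : ↑B ⊆ P)
      (hsep : (B : Set X).Pairwise fun x y => r < dist x y) : #B ≤ C₁ * (M / r) ^ α :=
    hP B hB r M hr (hr₁.trans hM) fun x hx y hy hxy =>
      ⟨(hsep hx hy hxy).le, hPM x (hB hx) y (hB hy)⟩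
  obtain ⟨B, hB, hsep, hnet⟩ := exists_separated_net hr.le hcard
  refine (measure_le_ofReal_mul_of_cover hnet (fun b _ => hμ b r hr) (hcard B hB hsep)).trans_eq ?_
  rw [← ENNReal.ofReal_mul ((#B).cast_nonneg.trans (hcard B hB hsep)),
    Real.div_rpow (zero_le_one.trans hM) hr.le, Real.rpow_sub hr]
  ring_nf

variable [SecondCountableTopology X] {x y : X} {R L : ℝ}

lemma measure_closedBall_le_of_card_le (hR : 0 < R) (hL : 0 < L)
    (hcard : ∀ B : Finset X, ↑B ⊆ μ.support ∩ closedBall x R →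
      (B : Set X).Pairwise (fun z w => R / L < dist z w) → #B ≤ 1 / 2 * L ^ β)
    (hball : ∀ z ∈ μ.support ∩ closedBall x R,
      μ (closedBall z (R / L)) ≤ ENNReal.ofReal (C * (R / L) ^ β)) :
    μ (closedBall x R) ≤ ENNReal.ofReal (C / 2 * R ^ β) := by
  obtain ⟨B, hB, hsep, hnet⟩ := exists_separated_net (by positivity) hcard
  calc μ (closedBall x R) = μ (μ.support ∩ closedBall x R) := by
        rw [inter_comm, measure_inter_conull Measure.measure_compl_support]
    _ ≤ ENNReal.ofReal (1 / 2 * L ^ β) * ENNReal.ofReal (C * (R / L) ^ β) :=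
      measure_le_ofReal_mul_of_cover hnet (fun b hb => hball b (hB hb)) (hcard B hB hsep)
    _ = ENNReal.ofReal (C / 2 * R ^ β) := by
      rw [← ENNReal.ofReal_mul (by positivity), Real.div_rpow hR.le hL.le]
      field_simp

-- If every ball near `y` were poor, passing to balls `L` times smaller would halve the Frostman
-- constant, and iterating would force `μ` to vanish around `y`.
theorem IsFrostman.exists_rich_ball (hμ : IsFrostman μ C β) (hy : y ∈ μ.support) (hL : 2 ≤ L)
    {ρ : ℝ} (hρ : 0 < ρ) :
    ∃ x, dist x y ≤ ρ ∧ ∃ R, 0 < R ∧ R ≤ ρ ∧ ∃ B : Finset X, ↑B ⊆ μ.support ∩ closedBall x R ∧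
      (B : Set X).Pairwise (fun z w => R / L < dist z w) ∧ 1 / 2 * L ^ β ≤ #B := by
  by_contra! hpoor
  have hsmall (k : ℕ) : ∀ x R, 0 < R → dist x y + 2 * R ≤ ρ →
      μ (closedBall x R) ≤ ENNReal.ofReal (C * (1 / 2) ^ k * R ^ β) := by
    induction k with
    | zero => exact fun x R hR _ => by simpa using hμ x R hR
    | succ k ih =>
      intro x R hR hxR
      have hRL : R / L ≤ R / 2 := by gcongr
      have hdist : 0 ≤ dist x y := dist_nonneg
      refine (measure_closedBall_le_of_card_le hR (by linarith) (fun B hB hsep =>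
        (hpoor x (by linarith) R hR (by linarith) B hB hsep).le) fun z hz =>
          ih z (R / L) (by positivity) ?_).trans_eq (by rw [pow_succ]; ring_nf)
      linarith [dist_triangle z x y, mem_closedBall.1 hz.2]
  have hlim : Tendsto (fun k : ℕ => ENNReal.ofReal (C * (1 / 2) ^ k * (ρ / 2) ^ β)) atTop
      (𝓝 0) := by
    have hpow := ((tendsto_pow_atTop_nhds_zero_of_lt_one (r := (1 / 2 : ℝ)) (by norm_num)
      (by norm_num)).const_mul C).mul_const ((ρ / 2) ^ β)
    simpa using ENNReal.tendsto_ofReal hpow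
  have hzero : μ (closedBall y (ρ / 2)) = 0 :=
    le_antisymm (ge_of_tendsto' hlim fun k => hsmall k y (ρ / 2) (by positivity)
      (by rw [dist_self]; linarith)) zero_le
  exact ((Measure.mem_support_iff_forall y).1 hy _
    (closedBall_mem_nhds y (by positivity))).ne' hzero

theorem IsFrostman.exists_rich_ball_two_pow (hμ : IsFrostman μ C β) (hβ : 0 ≤ β)
    (hy : y ∈ μ.support) (i : ℕ) {ρ : ℝ} (hρ : 0 < ρ) :
    ∃ x, dist x y ≤ ρ ∧ ∃ R, 0 < R ∧ R ≤ ρ ∧ ∃ B : Finset X, ↑B ⊆ μ.support ∩ closedBall x R ∧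
      (B : Set X).Pairwise (fun z w => R / (2 ^ i / 2) < dist z w) ∧
      1 / 2 * (2 ^ i / 2) ^ β ≤ (#B : ℝ) := by
  rcases le_or_gt 2 i with hi | hi
  · have hpow : (2 : ℝ) ^ 2 ≤ 2 ^ i := pow_le_pow_right₀ one_le_two hi
    exact hμ.exists_rich_ball hy (by linarith) hρ
  · have hpow : (2 : ℝ) ^ i ≤ 2 ^ 1 := pow_le_pow_right₀ one_le_two (by omega)
    have hrpow : ((2 : ℝ) ^ i / 2) ^ β ≤ 1 :=
      Real.rpow_le_one (by positivity) (by linarith) hβ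
    refine ⟨y, by rw [dist_self]; exact hρ.le, ρ, hρ, le_rfl, {y}, ?_, ?_, ?_⟩
    · simpa using ⟨hy, hρ.le⟩
    · rw [Finset.coe_singleton]
      exact Set.pairwise_singleton _ _
    · rw [Finset.card_singleton, Nat.cast_one]
      linarith

end FrostmanMeasures

section RadialComparison

variable {V : Type*} [NormedAddCommGroup V] [InnerProductSpace ℝ V] {x y c p q : V} {ρ R : ℝ}

lemma dist_sq_sub_dist_sq (x p q : V) :
    dist x p ^ 2 - dist x q ^ 2 = inner ℝ (p - q) ((p - x) + (q - x)) := by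
  rw [dist_comm x, dist_comm x, dist_eq_norm, dist_eq_norm, ← real_inner_self_eq_norm_sq,
    ← real_inner_self_eq_norm_sq, ← sub_sub_sub_cancel_right p q x]
  generalize p - x = u, q - x = v
  rw [inner_sub_left, inner_add_right, inner_add_right, real_inner_comm u v]
  ring

lemma abs_dist_mul_sub_add_inner_le (hp : dist p y ≤ ρ) (hq : dist q y ≤ ρ) :
    |dist x y * (dist x p - dist x q) + inner ℝ (x - y) (p - q)| ≤ 2 * ρ * dist p q := by
  have hexpand : 2 * (dist x y * (dist x p - dist x q) + inner ℝ (x - y) (p - q)) =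
      (dist x p - dist x q) * ((dist x y - dist x p) + (dist x y - dist x q)) +
        inner ℝ (p - q) ((p - y) + (q - y)) := by
    have hsum : (p - y) + (q - y) = ((p - x) + (q - x)) + 2 • (x - y) := by module
    rw [hsum, inner_add_right, ← dist_sq_sub_dist_sq, two_smul, inner_add_right,
      real_inner_comm (p - q)]
    ring
  have hprod : |(dist x p - dist x q) * ((dist x y - dist x p) + (dist x y - dist x q))| ≤
      dist p q * (ρ + ρ) := by
    have hsub (a b : V) : |dist x a - dist x b| ≤ dist a b := by
      rw [dist_comm x a, dist_comm x b]
      exact abs_dist_sub_le a b x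
    rw [abs_mul]
    gcongr
    · exact hsub p q
    · refine (abs_add_le _ _).trans (add_le_add ((hsub y p).trans ?_) ((hsub y q).trans ?_))
      exacts [dist_comm y p ▸ hp, dist_comm y q ▸ hq]
  have hinner : |inner ℝ (p - q) ((p - y) + (q - y))| ≤ dist p q * (ρ + ρ) := by
    refine (abs_real_inner_le_norm _ _).trans ?_
    rw [← dist_eq_norm]
    gcongr
    refine (norm_add_le _ _).trans ?_
    rw [← dist_eq_norm, ← dist_eq_norm]
    exact add_le_add hp hq
  refine le_of_mul_le_mul_left ?_ (two_pos (α := ℝ))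
  rw [← abs_two (α := ℝ), ← abs_mul, hexpand, abs_two]
  linarith [abs_add_le ((dist x p - dist x q) * ((dist x y - dist x p) + (dist x y - dist x q)))
    (inner ℝ (p - q) ((p - y) + (q - y)))]

lemma abs_dist_mul_sub_add_inner_le_of_mem_closedBall (hc : dist c y ≤ ρ) (hRρ : R ≤ ρ)
    (hp : p ∈ closedBall c R) (hq : q ∈ closedBall c R) :
    |dist x y * (dist x p - dist x q) + inner ℝ (x - y) (p - q)| ≤ 8 * ρ * R := by
  rw [mem_closedBall] at hp hq
  have hρ : 0 ≤ ρ := dist_nonneg.trans hc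
  calc |dist x y * (dist x p - dist x q) + inner ℝ (x - y) (p - q)|
      ≤ 2 * (2 * ρ) * dist p q :=
        abs_dist_mul_sub_add_inner_le (by linarith [dist_triangle p c y])
          (by linarith [dist_triangle q c y])
    _ ≤ 2 * (2 * ρ) * (2 * R) := by
      gcongr
      linarith [dist_triangle_right p q c]
    _ = 8 * ρ * R := by ring

lemma dist_add_smul_add_smul (y v : V) {s s' : ℝ} (hs : 0 ≤ s) (hs' : 0 ≤ s') :
    dist (y + s • v) (y + s' • v) = dist (dist (y + s • v) y) (dist (y + s' • v) y) := by
  simp only [dist_self_add_left, dist_add_left, norm_smul, Real.norm_of_nonneg hs,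
    Real.norm_of_nonneg hs']
  rw [dist_eq_norm, ← sub_smul, norm_smul, Real.dist_eq, ← sub_mul, abs_mul, abs_norm,
    Real.norm_eq_abs]

end RadialComparison

section PlaneCoordinates

variable {j k : Fin 2} {x y c p q : Euc 2} {R ρ δ : ℝ}

/-- The two coordinates, in the order `j`, `k`, of `z` after the homothety taking
`closedBall c R` to the unit ball. -/
def normCoord (j k : Fin 2) (c : Euc 2) (R : ℝ) (z : Euc 2) : ℝ × ℝ :=
  ((z j - c j) / R, (z k - c k) / R)

/-- The slopes of the lines through `y` and the other points of `E`, with the coordinate `k` taken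
as a function of the coordinate `j`; only lines of slope at most `1` in absolute value. -/
def slopes (E : Set (Euc 2)) (y : Euc 2) (j k : Fin 2) : Set ℝ :=
  (fun x => (x k - y k) / (x j - y j)) '' {x ∈ E | x ≠ y ∧ |x k - y k| ≤ |x j - y j|}

lemma inner_eq_of_ne (hjk : j ≠ k) (u v : Euc 2) : inner ℝ u v = u j * v j + u k * v k := by
  fin_cases j <;> fin_cases k <;> simp_all [PiLp.inner_apply, Fin.sum_univ_two] <;> ring

lemma dist_sq_eq_of_ne (hjk : j ≠ k) (p q : Euc 2) :
    dist p q ^ 2 = (p j - q j) ^ 2 + (p k - q k) ^ 2 := by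
  rw [dist_eq_norm, ← real_inner_self_eq_norm_sq, inner_eq_of_ne hjk, PiLp.sub_apply,
    PiLp.sub_apply]
  ring

lemma abs_sub_apply_le_dist (j : Fin 2) (p q : Euc 2) : |p j - q j| ≤ dist p q := by
  rw [dist_eq_norm]
  exact PiLp.norm_apply_le (p - q) j

lemma dist_le_two_mul_abs_sub_apply (hjk : j ≠ k) (h : |p k - q k| ≤ |p j - q j|) :
    dist p q ≤ 2 * |p j - q j| := by
  refine le_of_sq_le_sq ?_ (by positivity)
  rw [dist_sq_eq_of_ne hjk, mul_pow, sq_abs]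
  nlinarith [sq_le_sq.2 h]

lemma abs_normCoord_le_one (hR : 0 < R) (hp : p ∈ closedBall c R) :
    |(normCoord j k c R p).1| ≤ 1 ∧ |(normCoord j k c R p).2| ≤ 1 := by
  have hcoord (l : Fin 2) : |(p l - c l) / R| ≤ 1 := by
    rw [abs_div, abs_of_pos hR, div_le_one hR]
    exact (abs_sub_apply_le_dist l p c).trans hp
  exact ⟨hcoord j, hcoord k⟩

lemma le_abs_normCoord_sub (hjk : j ≠ k) (hR : 0 < R) (hδ : 0 < δ)
    (h : 2 * (R * δ) ≤ dist p q) :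
    δ ≤ |(normCoord j k c R p).1 - (normCoord j k c R q).1| ∨
      δ ≤ |(normCoord j k c R p).2 - (normCoord j k c R q).2| := by
  by_contra! hlt
  simp only [normCoord, ← sub_div, sub_sub_sub_cancel_right, abs_div, abs_of_pos hR,
    div_lt_iff₀ hR] at hlt
  have hj : (p j - q j) ^ 2 < (δ * R) ^ 2 := sq_lt_sq.2 (hlt.1.trans_le (le_abs_self _))
  have hk : (p k - q k) ^ 2 < (δ * R) ^ 2 := sq_lt_sq.2 (hlt.2.trans_le (le_abs_self _))
  have hdist : (2 * (R * δ)) ^ 2 ≤ dist p q ^ 2 := by gcongr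
  rw [dist_sq_eq_of_ne hjk] at hdist
  nlinarith [mul_pos hδ hR]

lemma inner_sub_eq_slopeProj_normCoord (hjk : j ≠ k) (hR : R ≠ 0) (hxy : x j - y j ≠ 0) :
    inner ℝ (x - y) (p - q) = (x j - y j) * (R *
      (slopeProj ((x k - y k) / (x j - y j)) (normCoord j k c R p) -
        slopeProj ((x k - y k) / (x j - y j)) (normCoord j k c R q))) := by
  rw [inner_eq_of_ne hjk]
  simp only [PiLp.sub_apply, slopeProj, normCoord]
  field_simp
  ring

lemma mem_Icc_of_abs_mul_add_le {d a Δ D ε r s : ℝ} (hd : 0 < d) (had : |a| ≤ d)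
    (hda : d ≤ 2 * |a|) (hD : |D| ∈ Icc r s) (hr : 0 < r) (hε : ε ≤ d * r / 4)
    (h : |d * Δ + a * D| ≤ ε) : |Δ| ∈ Icc (r / 4) (2 * s) := by
  have habs : dist (d * |Δ|) (|a| * |D|) ≤ ε := by
    rw [Real.dist_eq, ← abs_of_pos hd, ← abs_mul, ← abs_mul, ← abs_neg (a * D)]
    refine (abs_abs_sub_abs_le _ _).trans ?_
    rwa [sub_neg_eq_add]
  obtain ⟨hrD, hDs⟩ := hD
  have hupper : |a| * |D| ≤ d * s := by gcongr
  have hlower : d / 2 * r ≤ |a| * |D| := by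
    gcongr
    linarith
  have hrs : d * r ≤ d * s := by gcongr; exact hrD.trans hDs
  obtain ⟨hlow, hup⟩ := abs_le.1 habs
  constructor <;> refine le_of_mul_le_mul_left ?_ hd <;> linarith [hrs, mul_pos hd hr]

lemma dist_dist_mem_Icc_of_slopeProj (hjk : j ≠ k) (hxy : x ≠ y)
    (hslope : |x k - y k| ≤ |x j - y j|) (hR : 0 < R) (hRρ : R ≤ ρ) (hc : dist c y ≤ ρ)
    (hρ : 32 * ρ ≤ dist x y * δ) (hp : p ∈ closedBall c R) (hq : q ∈ closedBall c R) {r s : ℝ}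
    (hr : 0 < r) (hδr : δ ≤ r)
    (h : |slopeProj ((x k - y k) / (x j - y j)) (normCoord j k c R p) -
      slopeProj ((x k - y k) / (x j - y j)) (normCoord j k c R q)| ∈ Icc r s) :
    dist (dist x p) (dist x q) ∈ Icc (R * r / 4) (2 * (R * s)) := by
  have hd : 0 < dist x y := dist_pos.2 hxy
  have hda := dist_le_two_mul_abs_sub_apply hjk hslope
  have hne : x j - y j ≠ 0 := abs_pos.1 (by linarith)
  have hmain := abs_dist_mul_sub_add_inner_le_of_mem_closedBall (x := x) hc hRρ hp hq
  rw [inner_sub_eq_slopeProj_normCoord (c := c) hjk hR.ne' hne] at hmain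
  rw [Real.dist_eq]
  refine mem_Icc_of_abs_mul_add_le hd (abs_sub_apply_le_dist j x y) hda ?_ (by positivity) ?_ hmain
  · rw [abs_mul, abs_of_pos hR]
    exact ⟨by gcongr; exact h.1, by gcongr; exact h.2⟩
  · calc 8 * ρ * R = 32 * ρ * (R / 4) := by ring
      _ ≤ dist x y * r * (R / 4) :=
        mul_le_mul_of_nonneg_right (hρ.trans (by gcongr)) (by positivity)
      _ = dist x y * (R * r) / 4 := by ring

-- To first order at `y`, the distance to `x` is an affine function, constant along the lines
-- orthogonal to `x - y`; so on a set close to `y` it is a linear projection up to small errors.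
theorem projBound_image_normCoord [DecidableEq (ℝ × ℝ)] {E : Set (Euc 2)} {C α : ℝ}
    (hE : SeparationBound (distSet E) C α) (hjk : j ≠ k) (hx : x ∈ E) (hxy : x ≠ y)
    (hslope : |x k - y k| ≤ |x j - y j|) (hR : 0 < R) (hRρ : R ≤ ρ) (hc : dist c y ≤ ρ)
    (hδ : 0 < δ) (hρ : 32 * ρ ≤ dist x y * δ) {B : Finset (Euc 2)}
    (hB : ↑B ⊆ E ∩ closedBall c R) :
    ProjBound (B.image (normCoord j k c R)) ((x k - y k) / (x j - y j)) (C * 8 ^ α) α δ := by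
  intro B' hB' r s hδr hrs hsep
  have hr : 0 < r := hδ.trans_le hδr
  have hlift (z : ℝ × ℝ) (hz : z ∈ B') : ∃ p ∈ B, normCoord j k c R p = z :=
    Finset.mem_image.1 (hB' hz)
  choose! g hg hgz using hlift
  calc (#B' : ℝ) ≤ C * (2 * (R * s) / (R * r / 4)) ^ α :=
        hE.card_le (f := fun z => dist x (g z)) (fun z hz => ⟨x, hx, g z, (hB (hg z hz)).1, rfl⟩)
          (by positivity) (by nlinarith) fun z hz z' hz' hne =>
            dist_dist_mem_Icc_of_slopeProj hjk hxy hslope hR hRρ hc hρ (hB (hg z hz)).2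
              (hB (hg z' hz')).2 hr hδr (by
                rw [hgz z hz, hgz z' hz']
                exact hsep hz hz' hne)
    _ = C * 8 ^ α * (s / r) ^ α := by
      rw [show 2 * (R * s) / (R * r / 4) = 8 * (s / r) by field_simp; ring,
        Real.mul_rpow (by norm_num) (div_nonneg (hr.le.trans hrs) hr.le), mul_assoc]

end PlaneCoordinates

section RadialProjection

variable {j k : Fin 2} {x y : Euc 2} {μ : Measure (Euc 2)} {E : Set (Euc 2)} {C C₁ α β : ℝ}

lemma isSeparatedSequence_image_normCoord [DecidableEq (ℝ × ℝ)] (hjk : j ≠ k) {c : ℕ → Euc 2}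
    {R : ℕ → ℝ} {B : ℕ → Finset (Euc 2)} (hR : ∀ i, 0 < R i)
    (hB : ∀ i, ↑(B i) ⊆ closedBall (c i) (R i))
    (hsep : ∀ i, (B i : Set (Euc 2)).Pairwise fun p q => R i / (2 ^ i / 2) < dist p q)
    (hcard : ∀ i, 1 / 2 * (2 ^ i / 2) ^ β ≤ (#(B i) : ℝ)) :
    IsSeparatedSequence (fun i => (B i).image (normCoord j k (c i) (R i))) (1 / 2 * (1 / 2) ^ β)
      β := by
  have hcoord (i : ℕ) (p : Euc 2) (hp : p ∈ B i) (q : Euc 2) (hq : q ∈ B i) (hpq : p ≠ q) :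
      1 / 2 ^ i ≤ |(normCoord j k (c i) (R i) p).1 - (normCoord j k (c i) (R i) q).1| ∨
        1 / 2 ^ i ≤ |(normCoord j k (c i) (R i) p).2 - (normCoord j k (c i) (R i) q).2| := by
    refine le_abs_normCoord_sub hjk (hR i) (by positivity) (le_of_eq_of_le ?_ (hsep i hp hq hpq).le)
    field_simp
  have hinj (i : ℕ) : Set.InjOn (normCoord j k (c i) (R i)) (B i) := fun p hp q hq hpq => by
    by_contra hne
    have hle := hcoord i p hp q hq hne
    rw [hpq, sub_self, sub_self, abs_zero, or_self] at hle
    exact hle.not_gt (by positivity)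
  refine ⟨fun i => ?_, fun i => ?_, by positivity, fun i => ?_⟩
  · exact Finset.forall_mem_image.2 fun p hp => abs_normCoord_le_one (hR i) (hB i hp)
  · exact Finset.forall_mem_image.2 fun p hp => Finset.forall_mem_image.2 fun q hq hne =>
      hcoord i p hp q hq (ne_of_apply_ne _ hne)
  · rw [Finset.card_image_of_injOn (hinj i)]
    refine le_of_eq_of_le ?_ (hcard i)
    rw [mul_comm β, Real.rpow_mul zero_le_two, Real.rpow_natCast, mul_assoc,
      ← Real.mul_rpow (by positivity) (by positivity), mul_comm (1 / 2 : ℝ) (2 ^ i), mul_one_div]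

theorem IsFrostman.countable_slopes (hμ : IsFrostman μ C β) (hα : 0 ≤ α) (hα₁ : α < 1)
    (hαβ : α < β) (hC₁ : 0 < C₁) (hE : SeparationBound (distSet μ.support) C₁ α)
    (hy : y ∈ μ.support) (hjk : j ≠ k) : (slopes μ.support y j k).Countable := by
  classical
  choose c hcy R hR hRρ B hB hsep hcard using fun i : ℕ =>
    hμ.exists_rich_ball_two_pow (hα.trans hαβ.le) hy i (ρ := 1 / 4 ^ i) (by positivity)
  have hA := isSeparatedSequence_image_normCoord hjk hR
    (fun i => (hB i).trans inter_subset_right) hsep hcard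
  refine (hA.countable_setOf_projBound hα₁ hαβ
    (mul_pos hC₁ (Real.rpow_pos_of_pos (by norm_num : (0 : ℝ) < 8) α))).mono ?_
  rintro _ ⟨x, ⟨hx, hxy, hslope⟩, rfl⟩
  refine ⟨?_, ?_⟩
  · rw [abs_div]
    exact div_le_one_of_le₀ hslope (abs_nonneg _)
  · have hd : 0 < dist x y := dist_pos.2 hxy
    filter_upwards [(tendsto_pow_atTop_atTop_of_one_lt one_lt_two).eventually_ge_atTop
      (32 / dist x y)] with i hi
    refine projBound_image_normCoord hE hjk hx hxy hslope (hR i) (hRρ i) (hcy i) (by positivity)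
      ?_ (hB i)
    rw [div_le_iff₀ hd] at hi
    calc (32 : ℝ) * (1 / 4 ^ i) = 32 * (1 / 2 ^ i * (1 / 2 ^ i)) := by
          rw [show (4 : ℝ) = 2 * 2 by norm_num, mul_pow, one_div_mul_one_div]
      _ ≤ 2 ^ i * dist x y * (1 / 2 ^ i * (1 / 2 ^ i)) := by gcongr
      _ = dist x y * (1 / 2 ^ i) := by field_simp

lemma eq_add_smul_of_abs_le (hjk : j ≠ k) (h : |x k - y k| ≤ |x j - y j|) :
    x = y + (x j - y j) • (EuclideanSpace.single j 1 +
      ((x k - y k) / (x j - y j)) • EuclideanSpace.single k 1) := by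
  have hzero : x j - y j = 0 → x k - y k = 0 := fun hj => by simpa [hj] using h
  ext l
  obtain rfl | rfl : l = j ∨ l = k := by omega
  · simp [hjk]
  · simp [hjk.symm, mul_div_cancel_of_imp' hzero]

lemma exists_countable_directions (h₀₁ : (slopes E y 0 1).Countable)
    (h₁₀ : (slopes E y 1 0).Countable) :
    ∃ W : Set (Euc 2), W.Countable ∧ ∀ x ∈ E, ∃ v ∈ W, ∃ s : ℝ, x = y + s • v := by
  let direction (j k : Fin 2) (t : ℝ) : Euc 2 :=
    EuclideanSpace.single j 1 + t • EuclideanSpace.single k 1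
  refine ⟨{0} ∪ (direction 0 1 '' slopes E y 0 1 ∪ direction 1 0 '' slopes E y 1 0),
    (countable_singleton 0).union ((h₀₁.image _).union (h₁₀.image _)), fun x hx => ?_⟩
  rcases eq_or_ne x y with rfl | hxy
  · exact ⟨0, Or.inl rfl, 0, by rw [smul_zero, add_zero]⟩
  rcases le_total |x 1 - y 1| |x 0 - y 0| with h | h
  · exact ⟨_, Or.inr (Or.inl (mem_image_of_mem _ ⟨x, ⟨hx, hxy, h⟩, rfl⟩)), _,
      eq_add_smul_of_abs_le (by decide) h⟩
  · exact ⟨_, Or.inr (Or.inr (mem_image_of_mem _ ⟨x, ⟨hx, hxy, h⟩, rfl⟩)), _,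
      eq_add_smul_of_abs_le (by decide) h⟩

lemma SeparationBound.inter_ray {n : ℕ} {E : Set (Euc n)} (hE : SeparationBound (distSet E) C α)
    {y : Euc n} (hy : y ∈ E) (v : Euc n) :
    SeparationBound (E ∩ (fun s : ℝ => y + s • v) '' Ici 0) C α := by
  intro B hB ρ R hρ hρR hsep
  refine hE.card_le (f := fun x => dist x y) (fun x hx => ⟨x, (hB hx).1, y, hy, rfl⟩) hρ hρR
    fun x hx x' hx' hne => ?_
  obtain ⟨-, s, hs, rfl⟩ := hB hx
  obtain ⟨-, s', hs', rfl⟩ := hB hx'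
  rw [← dist_add_smul_add_smul y v hs hs']
  exact hsep hx hx' hne

theorem IsFrostman.not_separationBound_distSet (hμ : IsFrostman μ C β) (hμ₀ : μ ≠ 0)
    (hbdd : Bornology.IsBounded μ.support) (hα : 0 ≤ α) (hα₁ : α < 1) (hαβ : α < β)
    (hC₁ : 0 < C₁) : ¬ SeparationBound (distSet μ.support) C₁ α := by
  intro hE
  obtain ⟨y, hy⟩ := Measure.nonempty_support hμ₀
  have hray (v : Euc 2) : μ (μ.support ∩ (fun s : ℝ => y + s • v) '' Ici 0) = 0 :=
    hμ.measure_eq_zero_of_separationBound hαβ (hE.inter_ray hy v) (hbdd.subset inter_subset_left)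
  obtain ⟨W, hW, hcov⟩ := exists_countable_directions
    (hμ.countable_slopes hα hα₁ hαβ hC₁ hE hy (by decide))
    (hμ.countable_slopes hα hα₁ hαβ hC₁ hE hy (by decide))
  have hsupport : μ μ.support = 0 := by
    refine measure_mono_null (t := ⋃ v ∈ W, μ.support ∩ (fun s : ℝ => y + s • v) '' Ici 0 ∪
      μ.support ∩ (fun s : ℝ => y + s • -v) '' Ici 0) (fun x hx => ?_)
      ((measure_biUnion_null_iff hW).2 fun v _ => measure_union_null (hray v) (hray (-v)))
    obtain ⟨v, hv, s, rfl⟩ := hcov x hx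
    refine mem_biUnion hv ?_
    rcases le_total 0 s with hs | hs
    · exact Or.inl ⟨hx, s, hs, rfl⟩
    · exact Or.inr ⟨hx, -s, neg_nonneg.2 hs, by simp only [neg_smul_neg]⟩
  refine hμ₀ (Measure.measure_univ_eq_zero.1 ?_)
  rw [← union_compl_self μ.support]
  exact measure_union_null hsupport Measure.measure_compl_support

end RadialProjection

/-- **Theorem 3.1** (planar distance set problem for Assouad dimension): for every
non-empty set `F ⊆ ℝ²`, `dim_A D(F) ≥ min{dim_A F, 1}`. -/
theorem assouad_distance_set_planar (F : Set (Euc 2)) (hne : F.Nonempty) :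
    min (assouadDim F) 1 ≤ assouadDim (distSet F) := by
  by_contra! hlt
  obtain ⟨α, hα, hαmin, C, hC, hF⟩ := exists_separationBound_of_assouadDim_lt hlt
  obtain ⟨hαF, hα₁⟩ := lt_min_iff.1 hαmin
  obtain ⟨β, hαβ, hβF⟩ := exists_between hαF
  obtain ⟨μ, hprob, hbdd, ⟨C', hμ⟩, htangent⟩ :=
    exists_frostman_weakTangent (hα.trans hαβ.le) hβF
  exact hμ.not_separationBound_distSet (IsProbabilityMeasure.ne_zero μ) hbdd hα hα₁ hαβ
    (by positivity) (htangent.separationBound_distSet hF)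

end
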